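/- For every ε₀ with 0 < ε₀ < 1 and every real c ≥ 2 there exists a constant A > 0 such that for every integer N ≥ 3, writing r = ln N, there is a positive integer q₀ with q₀ ≥ r^(2−ε₀) such that for all integers q, l with 0 < q < r^c, 0 < l < q, gcd(q, l) = 1, and q₀ ∤ q, one has |π(N; q, l) − (1/φ(q)) · ∫₂^N dt / ln t| ≤ A · N · r^(−c) / (φ(q) · r). -/

import Mathlib

open Finset

/-- `primesPiMod N q l` is the number of primes `p ≤ N` with `p ≡ l (mod q)`. -/
def primesPiMod (N q l : ℕ) : ℕ :=
  ((Finset.range (N + 1)).filter (fun p => p.Prime ∧ p % q = l % q)).card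

/-!
For a character `χ` mod `q`, `L(s, χ)` is `O((q (1 + |s|)) ^ ε)` for `Re s ≥ 1 - ε / 2`, after
multiplication by a factor such as `(s - 1) / (s + 1)` if `χ` is trivial.
Siegel's lower bound `|L(1, χ)| ≫ q ^ (-ε)` comes from Taylor expansions at `2` of products of
`L`-functions whose negated logarithmic derivatives have nonnegative Dirichlet coefficients, and the
`3-4-1` inequality bounds `L(s, χ)` from below by a power of `(q (1 + |s|)) ^ (-ε)` on `Re s > 1`.
By Cauchy's estimates, every derivative of the logarithmic derivative is then
`O((q (1 + |s|)) ^ ε)` on `Re s > 1`.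

These bounds replace a zero-free region: differentiating `k` times multiplies the coefficients
`[n ≡ l mod q] Λ(n) - 1 / φ(q)` by `± log n ^ k`, yet by Perron's formula on
`Re s = 1 + 1 / log x` the Riesz mean of order two of the weighted coefficients is still
`O(x q ^ ε)`, which is `O(x log N)` for `q ≤ log N ^ c` and `ε = 1 / c`. Only part of the factor
`log n ^ k` is lost when the Riesz mean is unsmoothed twice, so dividing by it through partial
summation saves as many powers of the logarithm as desired.
-/

namespace SiegelWalfisz

open Complex DirichletCharacter Filter MeasureTheory Topology
open ArithmeticFunction (vonMangoldt)
open ArithmeticFunction.vonMangoldt (residueClass)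

lemma norm_sum_range_le_of_periodic {E : Type*} [SeminormedAddCommGroup E] {f : ℕ → E} {q : ℕ}
    {B : ℝ} (hq : 0 < q) (hper : Function.Periodic f q) (hsum : ∑ i ∈ range q, f i = 0)
    (hB : ∀ n, ‖f n‖ ≤ B) (n : ℕ) : ‖∑ i ∈ range n, f i‖ ≤ B * q := by
  have hB0 : 0 ≤ B := (norm_nonneg _).trans (hB 0)
  induction n using Nat.strong_induction_on with
  | _ n ih =>
    rcases lt_or_ge n q with h | h
    · calc ‖∑ i ∈ range n, f i‖ ≤ ∑ _i ∈ range n, B := norm_sum_le_of_le _ fun i _ ↦ hB i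
        _ = B * n := by rw [sum_const, card_range, nsmul_eq_mul, mul_comm]
        _ ≤ B * q := by gcongr
    · obtain ⟨m, rfl⟩ := Nat.exists_eq_add_of_le h
      have hshift : ∀ i, f (q + i) = f i := fun i ↦ by rw [add_comm, hper]
      rw [sum_range_add, hsum, zero_add, sum_congr rfl fun i _ ↦ hshift i]
      exact ih m (by lia)

lemma sum_range_natCast_zmod {M : Type*} [AddCommMonoid M] (q : ℕ) [NeZero q] (f : ZMod q → M) :
    ∑ i ∈ range q, f i = ∑ a, f a :=
  Finset.sum_nbij' (fun i : ℕ ↦ (i : ZMod q)) ZMod.val (by simp)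
    (fun a _ ↦ mem_range.mpr a.val_lt) (fun _ hi ↦ ZMod.val_cast_of_lt (mem_range.mp hi))
    (by simp) (by simp)

section CharacterSums

variable {q : ℕ} (χ : DirichletCharacter ℂ q)

/-- The summatory function `∑_{1 ≤ k ≤ u} χ(k)`. -/
noncomputable def charSum (u : ℝ) : ℂ := ∑ k ∈ Icc 1 ⌊u⌋₊, χ k

lemma norm_charSum_le {u : ℝ} (hu : 0 ≤ u) : ‖charSum χ u‖ ≤ u :=
  calc ‖charSum χ u‖ ≤ ⌊u⌋₊ := by
        simpa [charSum] using norm_sum_le_of_le (Icc 1 ⌊u⌋₊) fun k _ ↦ χ.norm_le_one k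
    _ ≤ u := Nat.floor_le hu

lemma measurable_charSum : Measurable (charSum χ) :=
  (measurable_from_nat (f := fun n ↦ ∑ k ∈ Icc 1 n, χ k)).comp Nat.measurable_floor

variable [NeZero q]

/-- The mean value of `χ` over a period: `φ(q) / q` for the trivial character, and `0` otherwise.
It is the residue of `L(s, χ)` at `s = 1`. -/
noncomputable def meanValue : ℂ := (∑ a, χ a) / q

@[simp]
lemma meanValue_one : meanValue (1 : DirichletCharacter ℂ q) = (Nat.totient q : ℂ) / q := by
  classical
  rw [meanValue, MulChar.sum_one_eq_card_units, ZMod.card_units_eq_totient]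

variable {χ} in
lemma meanValue_of_ne_one (h : χ ≠ 1) : meanValue χ = 0 := by
  rw [meanValue, MulChar.sum_eq_zero_of_ne_one h, zero_div]

lemma norm_meanValue_le_one : ‖meanValue χ‖ ≤ 1 := by
  have hsum : ‖∑ a, χ a‖ ≤ q := by
    simpa using norm_sum_le_of_le univ fun a _ ↦ χ.norm_le_one a
  rw [meanValue, norm_div, norm_natCast]
  exact div_le_one_of_le₀ hsum q.cast_nonneg

lemma norm_sum_range_sub_meanValue_le (n : ℕ) :
    ‖∑ i ∈ range n, (χ i - meanValue χ)‖ ≤ 2 * q := by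
  refine norm_sum_range_le_of_periodic (NeZero.pos q) (fun i ↦ by simp) ?_ (fun i ↦ ?_) n
  · rw [sum_sub_distrib, sum_range_natCast_zmod q χ, sum_const, card_range, nsmul_eq_mul, meanValue,
      mul_div_cancel₀ _ (NeZero.ne _), sub_self]
  · exact (norm_sub_le_of_le (χ.norm_le_one i) (norm_meanValue_le_one χ)).trans (by norm_num)

lemma norm_charSum_sub_le {u : ℝ} (hu : 0 ≤ u) : ‖charSum χ u - meanValue χ * u‖ ≤ 5 * q := by
  have hq : (1 : ℝ) ≤ q := by exact_mod_cast NeZero.pos q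
  set n := ⌊u⌋₊
  have hsum : charSum χ u = ∑ i ∈ range (n + 1), χ i - χ 0 := by
    rw [charSum, sum_range_eq_add_Ico _ n.succ_pos, Nat.cast_zero, add_sub_cancel_left]
    rfl
  have hsplit : charSum χ u - meanValue χ * u =
      ∑ i ∈ range (n + 1), (χ i - meanValue χ) - χ 0 - meanValue χ * ((u - n - 1 : ℝ) : ℂ) := by
    rw [hsum, sum_sub_distrib, sum_const, card_range, nsmul_eq_mul]
    push_cast
    ring
  have hfract : |u - n - 1| ≤ 1 := by
    rw [abs_le]
    constructor <;> linarith [Nat.floor_le hu, Nat.lt_floor_add_one u]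
  have hmean : ‖meanValue χ * ((u - n - 1 : ℝ) : ℂ)‖ ≤ 1 := by
    rw [norm_mul, norm_real]
    exact mul_le_one₀ (norm_meanValue_le_one χ) (abs_nonneg _) hfract
  rw [hsplit]
  linarith [norm_sub_le_of_le
    (norm_sub_le_of_le (norm_sum_range_sub_meanValue_le χ (n + 1)) (χ.norm_le_one 0)) hmean]

/-- The error term in `∑_{k ≤ u} χ(k) ≈ meanValue χ * u`, cut off to `u > 1` so that its Mellin
transform is an integral over `(1, ∞)`. -/
noncomputable def charSumError : ℝ → ℂ :=
  Set.indicator (Set.Ioi 1) fun u ↦ charSum χ u - meanValue χ * u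

lemma measurable_charSumError : Measurable (charSumError χ) :=
  ((measurable_charSum χ).sub (by fun_prop)).indicator measurableSet_Ioi

lemma norm_charSumError_le (u : ℝ) : ‖charSumError χ u‖ ≤ 5 * q := by
  by_cases h : u ∈ Set.Ioi (1 : ℝ)
  · rw [charSumError, Set.indicator_of_mem h]
    exact norm_charSum_sub_le χ (zero_le_one.trans (le_of_lt h))
  · rw [charSumError, Set.indicator_of_notMem h, norm_zero]
    positivity

/-- The regular part `K(s, χ) = s ∫_1^∞ (∑_{k ≤ t} χ(k) - meanValue χ * t) t^{-s-1} dt` of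
`L(s, χ)`, holomorphic for `0 < Re s`. -/
noncomputable def regularPart (s : ℂ) : ℂ := s * mellin (charSumError χ) (-s)

variable {s : ℂ}

lemma regularPart_eq_integral (s : ℂ) : regularPart χ s =
    s * ∫ t in Set.Ioi (1 : ℝ), (t : ℂ) ^ (-(s + 1)) * (charSum χ t - meanValue χ * t) := by
  have hind : ∀ t : ℝ, (t : ℂ) ^ (-s - 1) • charSumError χ t = (Set.Ioi (1 : ℝ)).indicator
      (fun t : ℝ ↦ (t : ℂ) ^ (-(s + 1)) * (charSum χ t - meanValue χ * t)) t := fun t ↦ by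
    simp only [charSumError, Set.indicator_apply, smul_eq_mul, mul_ite, mul_zero, neg_add']
  rw [regularPart, mellin]
  simp_rw [hind]
  rw [setIntegral_indicator measurableSet_Ioi, Set.Ioi_inter_Ioi, sup_of_le_right zero_le_one]

lemma differentiableAt_regularPart (hs : 0 < s.re) : DifferentiableAt ℂ (regularPart χ) s := by
  have hint : LocallyIntegrableOn (charSumError χ) (Set.Ioi 0) :=
    ((locallyIntegrable_const (5 * q : ℝ)).mono (measurable_charSumError χ).aestronglyMeasurable
      (.of_forall fun t ↦ (norm_charSumError_le χ t).trans (le_abs_self _))).locallyIntegrableOn _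
  have htop : charSumError χ =O[atTop] fun t : ℝ ↦ t ^ (-(0 : ℝ)) :=
    .of_bound (5 * q) (.of_forall fun t ↦ by simpa using norm_charSumError_le χ t)
  have hbot : charSumError χ =O[𝓝[>] 0] fun t : ℝ ↦ t ^ (-(-s.re - 1)) := by
    refine .of_bound 1 ?_
    filter_upwards [Ioo_mem_nhdsGT (zero_lt_one' ℝ)] with t ht
    rw [charSumError, Set.indicator_of_notMem (by simpa using ht.2.le), norm_zero]
    positivity
  have hmellin : DifferentiableAt ℂ (mellin (charSumError χ)) (-s) :=
    mellin_differentiableAt_of_isBigO_rpow hint htop (by simpa) hbot (by simp)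
  exact differentiableAt_id.mul (hmellin.comp s differentiableAt_id.neg)

lemma norm_cpow_mul_charSum_sub_le {t : ℝ} (ht : 0 < t) :
    ‖(t : ℂ) ^ (-(s + 1)) * (charSum χ t - meanValue χ * t)‖ ≤ 5 * q * t ^ (-s.re - 1) := by
  rw [norm_mul, norm_cpow_eq_rpow_re_of_pos ht, neg_re, add_re, one_re, neg_add', mul_comm]
  gcongr
  exact norm_charSum_sub_le χ ht.le

lemma integrableOn_cpow_mul_charSum_sub (hs : 0 < s.re) :
    IntegrableOn (fun t : ℝ ↦ (t : ℂ) ^ (-(s + 1)) * (charSum χ t - meanValue χ * t))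
      (Set.Ioi 1) := by
  have hmeas := measurable_charSum χ
  refine ((integrableOn_Ioi_rpow_of_lt (by linarith : -s.re - 1 < -1) one_pos).const_mul
    (5 * q : ℝ)).mono' (Measurable.aestronglyMeasurable (by fun_prop)) ?_
  filter_upwards [ae_restrict_mem measurableSet_Ioi] with t ht
  exact norm_cpow_mul_charSum_sub_le χ (one_pos.trans ht)

lemma cpow_neg_eq_cpow_mul_self {t : ℝ} (ht : 0 < t) (s : ℂ) :
    (t : ℂ) ^ (-s) = (t : ℂ) ^ (-(s + 1)) * t := by
  rw [show -s = -(s + 1) + 1 by ring, cpow_add _ _ (ofReal_ne_zero.mpr ht.ne'), cpow_one]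

lemma LSeries_eq_add_regularPart (hs : 1 < s.re) :
    LSeries (fun n ↦ χ n) s = meanValue χ * s / (s - 1) + regularPart χ s := by
  have hbound : (fun n : ℕ ↦ ∑ k ∈ Icc 1 n, χ k) =O[atTop] fun n : ℕ ↦ (n : ℝ) ^ (1 : ℝ) :=
    .of_bound 1 (.of_forall fun n ↦ by simpa [charSum] using norm_charSum_le χ n.cast_nonneg)
  have hpole : ∫ t in Set.Ioi (1 : ℝ), meanValue χ * (t : ℂ) ^ (-s) = meanValue χ / (s - 1) := by
    rw [integral_const_mul, integral_Ioi_cpow_of_lt (by simpa using hs) one_pos, ofReal_one,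
      one_cpow, ← neg_div_neg_eq, neg_neg, neg_add', neg_neg, mul_one_div]
  have hpole_int : IntegrableOn (fun t : ℝ ↦ meanValue χ * (t : ℂ) ^ (-s)) (Set.Ioi 1) :=
    (integrableOn_Ioi_cpow_of_lt (by simpa using hs) one_pos).const_mul _
  have hsplit : ∫ t in Set.Ioi (1 : ℝ), charSum χ t * (t : ℂ) ^ (-(s + 1)) = meanValue χ / (s - 1) +
      ∫ t in Set.Ioi (1 : ℝ), (t : ℂ) ^ (-(s + 1)) * (charSum χ t - meanValue χ * t) := by
    rw [← hpole, ← integral_add hpole_int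
      (integrableOn_cpow_mul_charSum_sub χ (zero_lt_one.trans hs))]
    refine setIntegral_congr_fun measurableSet_Ioi fun t ht ↦ ?_
    rw [cpow_neg_eq_cpow_mul_self (one_pos.trans ht) s]
    ring
  rw [LSeries_eq_mul_integral _ zero_le_one hs (LSeriesSummable_of_one_lt_re χ hs) hbound,
    regularPart_eq_integral]
  change s * ∫ t in Set.Ioi (1 : ℝ), charSum χ t * (t : ℂ) ^ (-(s + 1)) = _
  rw [hsplit]
  ring

end CharacterSums

section EntireL

variable {q : ℕ} (χ : DirichletCharacter ℂ q)

open Classical in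
/-- The factor cancelling the possible pole of `L(s, χ)`: it is `s - 1` for the trivial character,
and `1` otherwise. -/
noncomputable def polarFactor (s : ℂ) : ℂ := if χ = 1 then s - 1 else 1

open Classical in
/-- The entire function `polarFactor χ s * L(s, χ)`. -/
noncomputable def entireL [NeZero q] (s : ℂ) : ℂ :=
  if χ = 1 then LFunctionTrivChar₁ q s else LFunction χ s

lemma differentiable_polarFactor : Differentiable ℂ (polarFactor χ) := by
  unfold polarFactor
  split_ifs <;> fun_prop

lemma norm_polarFactor_le (s : ℂ) : ‖polarFactor χ s‖ ≤ 1 + ‖s‖ := by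
  unfold polarFactor
  split_ifs
  · simpa [add_comm] using norm_sub_le s 1
  · simp

variable [NeZero q]

lemma differentiable_entireL : Differentiable ℂ (entireL χ) := by
  unfold entireL
  split_ifs with h
  · exact differentiable_LFunctionTrivChar₁ q
  · exact differentiable_LFunction h

lemma entireL_eq_polarFactor_mul {s : ℂ} (hs : s ≠ 1) :
    entireL χ s = polarFactor χ s * LFunction χ s := by
  by_cases h : χ = 1
  · subst h
    simp [entireL, polarFactor, LFunctionTrivChar₁, Function.update_of_ne hs, LFunctionTrivChar]
  · simp [entireL, polarFactor, h]

variable {χ} in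
lemma entireL_of_ne_one (h : χ ≠ 1) : entireL χ = LFunction χ := by
  ext s
  simp [entireL, h]

lemma entireL_eq_add {s : ℂ} (hs : 0 < s.re) :
    entireL χ s = meanValue χ * s + polarFactor χ s * regularPart χ s := by
  have hopen : ∀ c : ℝ, IsOpen {z : ℂ | c < z.re} := fun c ↦
    isOpen_lt continuous_const continuous_re
  have hdiff : DifferentiableOn ℂ (fun z ↦ meanValue χ * z + polarFactor χ z * regularPart χ z)
      {z | 0 < z.re} := fun z hz ↦
    ((differentiableAt_id.const_mul _).add
      ((differentiable_polarFactor χ z).mul (differentiableAt_regularPart χ hz)))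
        |>.differentiableWithinAt
  refine ((differentiable_entireL χ).differentiableOn.analyticOnNhd
    (hopen 0)).eqOn_of_preconnected_of_eventuallyEq (hdiff.analyticOnNhd (hopen 0))
    (convex_halfSpace_re_gt 0).isPreconnected (z₀ := 2) (by simp) ?_ hs
  filter_upwards [(hopen 1).mem_nhds (show (2 : ℂ) ∈ _ by simp)] with z hz
  have hz1 : z ≠ 1 := by
    rintro rfl
    simp at hz
  rw [entireL_eq_polarFactor_mul χ hz1, LFunction_eq_LSeries χ hz, LSeries_eq_add_regularPart χ hz]
  by_cases h : χ = 1
  · have : z - 1 ≠ 0 := sub_ne_zero.mpr hz1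
    simp only [polarFactor, h, if_true]
    field_simp
  · simp [polarFactor, h, meanValue_of_ne_one h]

end EntireL

section Growth

lemma mul_setIntegral_cpow_mul_sum_eq (c : ℕ → ℂ) (s : ℂ) (Y : ℝ) :
    s * ∫ t in Set.Ioc 1 Y, (t : ℂ) ^ (-(s + 1)) * ∑ k ∈ Icc 1 ⌊t⌋₊, c k =
      ∑ k ∈ Icc 1 ⌊Y⌋₊, (k : ℂ) ^ (-s) * c k - (Y : ℂ) ^ (-s) * ∑ k ∈ Icc 1 ⌊Y⌋₊, c k := by
  set c₀ : ℕ → ℂ := Function.update c 0 0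
  have hzero (f : ℕ → ℂ) (n : ℕ) : ∑ k ∈ Icc 0 n, f k * c₀ k = ∑ k ∈ Icc 1 n, f k * c k := by
    rw [← insert_Icc_succ_left_eq_Icc n.zero_le, sum_insert (by simp)]
    simp only [c₀, Function.update_self, mul_zero, zero_add, Nat.succ_eq_succ, Nat.succ_eq_add_one]
    refine sum_congr rfl fun k hk ↦ ?_
    rw [Function.update_of_ne (by have := mem_Icc.mp hk; lia)]
  have hderiv : ∀ t ∈ Set.Icc 1 Y,
      HasDerivAt (fun t : ℝ ↦ (t : ℂ) ^ (-s)) (-s * (t : ℂ) ^ (-(s + 1))) t := fun t ht ↦ by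
    rcases eq_or_ne s 0 with rfl | hs
    · simpa using hasDerivAt_const t (1 : ℂ)
    · simpa only [neg_add'] using
        hasDerivAt_ofReal_cpow_const (one_pos.trans_le ht.1).ne' (neg_ne_zero.mpr hs)
  have hcont : ContinuousOn (fun t : ℝ ↦ -s * (t : ℂ) ^ (-(s + 1))) (Set.Icc 1 Y) := fun t ht ↦
    (continuousAt_const.mul (continuousAt_ofReal_cpow_const _ _
      (.inr (one_pos.trans_le ht.1).ne'))).continuousWithinAt
  have habel := sum_mul_eq_sub_integral_mul₀ (c := c₀) (f := fun t : ℝ ↦ (t : ℂ) ^ (-s))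
    (by simp [c₀]) Y (fun t ht ↦ (hderiv t ht).differentiableAt)
    (hcont.integrableOn_Icc.congr_fun (fun _ ht ↦ (hderiv _ ht).deriv.symm) measurableSet_Icc)
  have hone (n : ℕ) : ∑ k ∈ Icc 0 n, c₀ k = ∑ k ∈ Icc 1 n, c k := by simpa using hzero 1 n
  have hint : ∫ t in Set.Ioc 1 Y, deriv (fun t : ℝ ↦ (t : ℂ) ^ (-s)) t * ∑ k ∈ Icc 1 ⌊t⌋₊, c k =
      -s * ∫ t in Set.Ioc 1 Y, (t : ℂ) ^ (-(s + 1)) * ∑ k ∈ Icc 1 ⌊t⌋₊, c k := by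
    rw [← integral_const_mul]
    refine setIntegral_congr_fun measurableSet_Ioc fun t ht ↦ ?_
    rw [(hderiv t ⟨ht.1.le, ht.2⟩).deriv, mul_assoc]
  simp only [hone, ofReal_natCast, hzero fun k ↦ (k : ℂ) ^ (-s), hint] at habel
  rw [habel]
  ring

lemma integrableOn_Ioc_cpow {Y : ℝ} (s : ℂ) :
    IntegrableOn (fun t : ℝ ↦ (t : ℂ) ^ s) (Set.Ioc 1 Y) :=
  (ContinuousOn.integrableOn_Icc fun _ ht ↦ (continuousAt_ofReal_cpow_const _ _
    (.inr (one_pos.trans_le ht.1).ne')).continuousWithinAt).mono_set Set.Ioc_subset_Icc_self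

variable {a Y : ℝ} {s : ℂ}

lemma rpow_neg_re_mul_le (ha : 0 ≤ a) (hY : 1 ≤ Y) (hs : 1 - a / 2 ≤ s.re) :
    Y ^ (-s.re) * Y ≤ Y ^ a := by
  rw [← Real.rpow_add_one (by positivity)]
  exact Real.rpow_le_rpow_of_exponent_le hY (by linarith)

lemma norm_mul_setIntegral_cpow_le_of_norm_sub_one_lt (ha : 0 < a) (hY : 1 ≤ Y)
    (hs : 1 - a / 2 ≤ s.re) (hs1 : ‖s - 1‖ < 1) :
    ‖s * ∫ t in Set.Ioc 1 Y, (t : ℂ) ^ (-s)‖ ≤ 4 / a * Y ^ a := by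
  have hs2 : ‖s‖ ≤ 2 := by linarith [norm_le_norm_sub_add s 1, norm_one (α := ℂ)]
  have hint : ‖∫ t in Set.Ioc 1 Y, (t : ℂ) ^ (-s)‖ ≤ ∫ t in Set.Ioc 1 Y, t ^ (a / 2 - 1) := by
    refine norm_integral_le_of_norm_le (intervalIntegrable_iff_integrableOn_Ioc_of_le hY |>.mp <|
      intervalIntegral.intervalIntegrable_rpow' (by linarith)) ?_
    filter_upwards [ae_restrict_mem measurableSet_Ioc] with t ht
    rw [norm_cpow_eq_rpow_re_of_pos (one_pos.trans ht.1), neg_re]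
    exact Real.rpow_le_rpow_of_exponent_le ht.1.le (by linarith)
  rw [← intervalIntegral.integral_of_le hY (f := fun t ↦ t ^ (a / 2 - 1)),
    integral_rpow (.inl (by linarith)), sub_add_cancel, Real.one_rpow] at hint
  calc ‖s * ∫ t in Set.Ioc 1 Y, (t : ℂ) ^ (-s)‖ ≤ 2 * ((Y ^ (a / 2) - 1) / (a / 2)) := by
        rw [norm_mul]
        gcongr
    _ ≤ 2 * (Y ^ a / (a / 2)) := by
        gcongr
        linarith [Real.rpow_le_rpow_of_exponent_le hY (by linarith : a / 2 ≤ a)]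
    _ = 4 / a * Y ^ a := by field_simp; ring

lemma norm_mul_setIntegral_cpow_le_of_one_le_norm_sub_one (ha : 0 ≤ a) (hY : 1 ≤ Y)
    (hs : 1 - a / 2 ≤ s.re) (hs1 : 1 ≤ ‖s - 1‖) :
    ‖s * ∫ t in Set.Ioc 1 Y, (t : ℂ) ^ (-s)‖ ≤ 4 * Y ^ a := by
  have hs0 : 0 < ‖s - 1‖ := by linarith
  have hs2 : ‖s‖ ≤ 2 * ‖s - 1‖ := by linarith [norm_le_norm_sub_add s 1, norm_one (α := ℂ)]
  have hne : -s ≠ -1 := fun h ↦ by simp [neg_injective h] at hs0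
  have hnum : ‖(Y : ℂ) ^ (-s + 1) - 1‖ ≤ 2 * Y ^ a := by
    have hYa := Real.one_le_rpow hY ha
    have hle : ‖(Y : ℂ) ^ (-s + 1)‖ ≤ Y ^ a := by
      rw [norm_cpow_eq_rpow_re_of_pos (by positivity), add_re, neg_re, one_re]
      exact Real.rpow_le_rpow_of_exponent_le hY (by linarith)
    linarith [norm_sub_le ((Y : ℂ) ^ (-s + 1)) 1, norm_one (α := ℂ)]
  rw [← intervalIntegral.integral_of_le hY (f := fun t : ℝ ↦ (t : ℂ) ^ (-s)),
    integral_cpow (.inr ⟨hne, fun h ↦ by linarith [(Set.uIcc_of_le hY ▸ h).1]⟩), ofReal_one,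
    one_cpow, norm_mul, norm_div, neg_add_eq_sub, norm_sub_rev 1 s]
  calc ‖s‖ * (‖(Y : ℂ) ^ (1 - s) - 1‖ / ‖s - 1‖)
      ≤ (2 * ‖s - 1‖) * (2 * Y ^ a / ‖s - 1‖) := by
        rw [neg_add_eq_sub] at hnum
        gcongr
    _ = 4 * Y ^ a := by field_simp; ring

lemma norm_mul_setIntegral_cpow_le (ha : 0 < a) (ha1 : a ≤ 1) (hY : 1 ≤ Y)
    (hs : 1 - a / 2 ≤ s.re) : ‖s * ∫ t in Set.Ioc 1 Y, (t : ℂ) ^ (-s)‖ ≤ 4 / a * Y ^ a := by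
  rcases lt_or_ge ‖s - 1‖ 1 with h | h
  · exact norm_mul_setIntegral_cpow_le_of_norm_sub_one_lt ha hY hs h
  · refine (norm_mul_setIntegral_cpow_le_of_one_le_norm_sub_one ha.le hY hs h).trans ?_
    gcongr
    rw [le_div_iff₀ ha]
    linarith

lemma norm_sum_cpow_mul_le {c : ℕ → ℂ} (hc : ∀ n, ‖c n‖ ≤ 1) (ha : 0 < a)
    (hY : 0 ≤ Y) (hs : 1 - a / 2 ≤ s.re) :
    ‖∑ k ∈ Icc 1 ⌊Y⌋₊, (k : ℂ) ^ (-s) * c k‖ ≤ (∑' n : ℕ, 1 / (n : ℝ) ^ (1 + a / 2)) * Y ^ a := by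
  have hterm : ∀ k ∈ Icc 1 ⌊Y⌋₊,
      ‖(k : ℂ) ^ (-s) * c k‖ ≤ 1 / (k : ℝ) ^ (1 + a / 2) * Y ^ a := fun k hk ↦ by
    obtain ⟨hk1, hkY⟩ := mem_Icc.mp hk
    have hk0 : (0 : ℝ) < k := by exact_mod_cast hk1
    calc ‖(k : ℂ) ^ (-s) * c k‖ ≤ (k : ℝ) ^ (-(1 + a / 2) + a) * 1 := by
          rw [norm_mul, norm_natCast_cpow_of_pos hk1, neg_re]
          gcongr
          · exact_mod_cast hk1
          · linarith
          · exact hc k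
      _ = 1 / (k : ℝ) ^ (1 + a / 2) * (k : ℝ) ^ a := by
          rw [mul_one, Real.rpow_add hk0, Real.rpow_neg hk0.le, one_div]
      _ ≤ 1 / (k : ℝ) ^ (1 + a / 2) * Y ^ a := by
          gcongr
          exact (Nat.le_floor_iff hY).mp hkY
  refine (norm_sum_le_of_le _ hterm).trans ?_
  rw [← sum_mul]
  gcongr
  exact (Real.summable_one_div_nat_rpow.mpr (by linarith)).sum_le_tsum _ fun n _ ↦ by positivity

variable {q : ℕ} [NeZero q] (χ : DirichletCharacter ℂ q)

lemma norm_mul_setIntegral_Ioi_charSum_sub_le (ha : 0 ≤ a) (ha1 : a ≤ 1)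
    (hs : 1 - a / 2 ≤ s.re) (hY : 1 ≤ Y) (hqY : q * ‖s‖ ≤ Y) :
    ‖s * ∫ t in Set.Ioi Y, (t : ℂ) ^ (-(s + 1)) * (charSum χ t - meanValue χ * t)‖ ≤
      10 * Y ^ a := by
  have hY0 : 0 < Y := one_pos.trans_le hY
  have hint : ‖∫ t in Set.Ioi Y, (t : ℂ) ^ (-(s + 1)) * (charSum χ t - meanValue χ * t)‖ ≤
      ∫ t in Set.Ioi Y, 5 * q * t ^ (-s.re - 1) := by
    refine norm_integral_le_of_norm_le
      ((integrableOn_Ioi_rpow_of_lt (by linarith) hY0).const_mul _) ?_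
    filter_upwards [ae_restrict_mem measurableSet_Ioi] with t ht
    exact norm_cpow_mul_charSum_sub_le χ (hY0.trans ht)
  rw [integral_const_mul, integral_Ioi_rpow_of_lt (by linarith) hY0, sub_add_cancel,
    neg_div_neg_eq] at hint
  have hdiv : Y ^ (-s.re) / s.re ≤ 2 * Y ^ (-s.re) := by
    rw [div_le_iff₀ (by linarith)]
    nlinarith [Real.rpow_pos_of_pos hY0 (-s.re)]
  calc ‖s * ∫ t in Set.Ioi Y, (t : ℂ) ^ (-(s + 1)) * (charSum χ t - meanValue χ * t)‖
      ≤ ‖s‖ * (5 * q * (2 * Y ^ (-s.re))) := by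
        rw [norm_mul]
        gcongr
        exact hint.trans (by gcongr)
    _ = 10 * (Y ^ (-s.re) * (q * ‖s‖)) := by ring
    _ ≤ 10 * (Y ^ (-s.re) * Y) := by gcongr
    _ ≤ 10 * Y ^ a := by gcongr; exact rpow_neg_re_mul_le ha hY hs

lemma regularPart_eq_sum_add_integral (hs : 0 < s.re) (hY : 1 ≤ Y) : regularPart χ s =
    ∑ k ∈ Icc 1 ⌊Y⌋₊, (k : ℂ) ^ (-s) * χ k - (Y : ℂ) ^ (-s) * charSum χ Y -
      meanValue χ * (s * ∫ t in Set.Ioc 1 Y, (t : ℂ) ^ (-s)) +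
      s * ∫ t in Set.Ioi Y, (t : ℂ) ^ (-(s + 1)) * (charSum χ t - meanValue χ * t) := by
  have hI := integrableOn_cpow_mul_charSum_sub χ hs
  have hIoc := hI.mono_set (Set.Ioc_subset_Ioi_self : Set.Ioc 1 Y ⊆ _)
  have hhead : ∫ t in Set.Ioc 1 Y, (t : ℂ) ^ (-(s + 1)) * charSum χ t =
      (∫ t in Set.Ioc 1 Y, (t : ℂ) ^ (-(s + 1)) * (charSum χ t - meanValue χ * t)) +
        meanValue χ * ∫ t in Set.Ioc 1 Y, (t : ℂ) ^ (-s) := by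
    rw [← integral_const_mul, ← integral_add hIoc ((integrableOn_Ioc_cpow _).const_mul _)]
    refine setIntegral_congr_fun measurableSet_Ioc fun t ht ↦ ?_
    rw [cpow_neg_eq_cpow_mul_self (one_pos.trans ht.1) s]
    ring
  have habel := mul_setIntegral_cpow_mul_sum_eq (fun k ↦ χ k) s Y
  change s * ∫ t in Set.Ioc 1 Y, (t : ℂ) ^ (-(s + 1)) * charSum χ t =
    _ - (Y : ℂ) ^ (-s) * charSum χ Y at habel
  rw [regularPart_eq_integral, ← Set.Ioc_union_Ioi_eq_Ioi hY,
    setIntegral_union (Set.Ioc_disjoint_Ioi le_rfl) measurableSet_Ioi hIoc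
      (hI.mono_set (Set.Ioi_subset_Ioi hY)), ← habel, hhead]
  ring

lemma exists_norm_regularPart_le (ha : 0 < a) (ha1 : a ≤ 1) :
    ∃ C : ℝ, 1 ≤ C ∧ ∀ (q : ℕ) [NeZero q] (χ : DirichletCharacter ℂ q) (s : ℂ),
      1 - a / 2 ≤ s.re → ‖regularPart χ s‖ ≤ C * (q * (1 + ‖s‖)) ^ a := by
  set D : ℝ := ∑' n : ℕ, 1 / (n : ℝ) ^ (1 + a / 2)
  have hD : 0 ≤ D := tsum_nonneg fun n ↦ by positivity
  have ha4 : 0 < 4 / a := by positivity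
  refine ⟨D + 1 + 4 / a + 10, by linarith, fun q _ χ s hs ↦ ?_⟩
  have hq : (1 : ℝ) ≤ q := by exact_mod_cast NeZero.one_le
  set Y : ℝ := q * (1 + ‖s‖) with hYdef
  have hY : 1 ≤ Y := one_le_mul_of_one_le_of_one_le hq (by linarith [norm_nonneg s])
  have hboundary : ‖(Y : ℂ) ^ (-s) * charSum χ Y‖ ≤ Y ^ a := by
    rw [norm_mul, norm_cpow_eq_rpow_re_of_pos (by positivity), neg_re]
    refine le_trans ?_ (rpow_neg_re_mul_le ha.le hY hs)
    gcongr
    exact norm_charSum_le χ (by positivity)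
  have hpole : ‖meanValue χ * (s * ∫ t in Set.Ioc 1 Y, (t : ℂ) ^ (-s))‖ ≤ 4 / a * Y ^ a := by
    rw [norm_mul]
    exact (mul_le_of_le_one_left (norm_nonneg _) (norm_meanValue_le_one χ)).trans
      (norm_mul_setIntegral_cpow_le ha ha1 hY hs)
  have htail := norm_mul_setIntegral_Ioi_charSum_sub_le χ ha.le ha1 hs hY
    (by rw [hYdef]; gcongr; linarith)
  rw [regularPart_eq_sum_add_integral χ (by linarith) hY]
  have hsum := norm_sum_cpow_mul_le (c := fun n ↦ χ n) (Y := Y) (fun n ↦ χ.norm_le_one n) ha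
    (by positivity) hs
  linarith [norm_add_le_of_le
    (norm_sub_le_of_le (norm_sub_le_of_le hsum hboundary) hpole) htail]

lemma exists_norm_entireL_le (ha : 0 < a) (ha1 : a ≤ 1) :
    ∃ C : ℝ, 1 ≤ C ∧ ∀ (q : ℕ) [NeZero q] (χ : DirichletCharacter ℂ q) (s : ℂ),
      1 - a / 2 ≤ s.re → ‖entireL χ s‖ ≤ C * (q * (1 + ‖s‖)) ^ a * (1 + ‖s‖) := by
  obtain ⟨C, hC, hK⟩ := exists_norm_regularPart_le ha ha1
  refine ⟨C + 1, by linarith, fun q _ χ s hs ↦ ?_⟩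
  have hq : (1 : ℝ) ≤ q := by exact_mod_cast NeZero.one_le
  have hs0 := norm_nonneg s
  set X := (q * (1 + ‖s‖)) ^ a
  have hX : 1 ≤ X :=
    Real.one_le_rpow (one_le_mul_of_one_le_of_one_le hq (by linarith)) ha.le
  rw [entireL_eq_add χ (by linarith)]
  calc ‖meanValue χ * s + polarFactor χ s * regularPart χ s‖
      ≤ 1 * ‖s‖ + (1 + ‖s‖) * (C * X) := by
        refine norm_add_le_of_le ?_ ?_ <;> rw [norm_mul] <;> gcongr
        exacts [norm_meanValue_le_one χ, norm_polarFactor_le χ s, hK q χ s hs]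
    _ ≤ X * (1 + ‖s‖) + (1 + ‖s‖) * (C * X) := by gcongr; linarith
    _ = (C + 1) * X * (1 + ‖s‖) := by ring

end Growth

section Totient

lemma totient_div_self_eq_prod {q : ℕ} (hq : 0 < q) :
    (Nat.totient q : ℝ) / q = ∏ p ∈ q.primeFactors, (1 - (p : ℝ)⁻¹) := by
  have hq' : (q : ℝ) ≠ 0 := by exact_mod_cast hq.ne'
  have h : (Nat.totient q : ℝ) = q * ∏ p ∈ q.primeFactors, (1 - (p : ℝ)⁻¹) := by
    have hrat := congrArg (Rat.cast : ℚ → ℝ) (Nat.totient_eq_mul_prod_factors q)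
    push_cast at hrat
    exact hrat
  rw [h, mul_div_cancel_left₀ _ hq']

lemma rpow_neg_le_one_sub_inv {ε p : ℝ} (hε : 0 < ε) (hp : 2 ≤ p) (hpε : 2 ^ (1 / ε) ≤ p) :
    p ^ (-ε) ≤ 1 - p⁻¹ := by
  have hpow : 2 ≤ p ^ ε :=
    calc (2 : ℝ) = (2 ^ (1 / ε)) ^ ε := by
          rw [← Real.rpow_mul zero_le_two, one_div_mul_cancel hε.ne', Real.rpow_one]
      _ ≤ p ^ ε := Real.rpow_le_rpow (by positivity) hpε hε.le
  rw [Real.rpow_neg (by linarith)]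
  linarith [inv_anti₀ two_pos hp, inv_anti₀ two_pos hpow]

lemma ite_mul_rpow_neg_le_one_sub_inv {ε : ℝ} (hε : 0 < ε) {P p : ℕ} (hP : 2 ^ (1 / ε) ≤ (P : ℝ))
    (hp : 2 ≤ p) : (if p < P then (1 / 2 : ℝ) else 1) * (p : ℝ) ^ (-ε) ≤ 1 - (p : ℝ)⁻¹ := by
  have hp2 : (2 : ℝ) ≤ p := by exact_mod_cast hp
  split_ifs with h
  · linarith [inv_anti₀ two_pos hp2,
      Real.rpow_le_one_of_one_le_of_nonpos (by linarith : (1 : ℝ) ≤ p) (by linarith : -ε ≤ 0)]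
  · rw [one_mul]
    exact rpow_neg_le_one_sub_inv hε hp2 (hP.trans (by exact_mod_cast not_lt.mp h))

lemma exists_rpow_neg_le_totient_div_self {ε : ℝ} (hε : 0 < ε) :
    ∃ c : ℝ, 0 < c ∧ ∀ q : ℕ, 0 < q → c * (q : ℝ) ^ (-ε) ≤ (Nat.totient q : ℝ) / q := by
  obtain ⟨P, hP⟩ := exists_nat_ge ((2 : ℝ) ^ (1 / ε))
  refine ⟨(1 / 2) ^ P, by positivity, fun q hq ↦ ?_⟩
  have hsmall : (1 / 2 : ℝ) ^ P ≤ ∏ p ∈ q.primeFactors, if p < P then (1 / 2 : ℝ) else 1 := by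
    rw [prod_ite, prod_const, prod_const_one, mul_one]
    refine pow_le_pow_of_le_one (by norm_num) (by norm_num) ?_
    exact (card_le_card fun p hp ↦ mem_range.mpr (mem_filter.mp hp).2).trans_eq (card_range P)
  have hrad : (q : ℝ) ^ (-ε) ≤ (∏ p ∈ q.primeFactors, (p : ℝ)) ^ (-ε) := by
    refine Real.rpow_le_rpow_of_nonpos (prod_pos fun p hp ↦ ?_) ?_ (by linarith)
    · exact_mod_cast (Nat.prime_of_mem_primeFactors hp).pos
    · rw [← Nat.cast_prod]
      exact_mod_cast Nat.le_of_dvd hq (Nat.prod_primeFactors_dvd q)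
  calc (1 / 2 : ℝ) ^ P * (q : ℝ) ^ (-ε)
      ≤ ∏ p ∈ q.primeFactors, (if p < P then (1 / 2 : ℝ) else 1) * (p : ℝ) ^ (-ε) := by
        rw [prod_mul_distrib, Real.finsetProd_rpow _ _ fun p _ ↦ p.cast_nonneg]
        gcongr
    _ ≤ ∏ p ∈ q.primeFactors, (1 - (p : ℝ)⁻¹) := by
        refine prod_le_prod (fun p _ ↦ by split_ifs <;> positivity) fun p hp ↦ ?_
        exact ite_mul_rpow_neg_le_one_sub_inv hε hP (Nat.prime_of_mem_primeFactors hp).two_le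
    _ = (Nat.totient q : ℝ) / q := (totient_div_self_eq_prod hq).symm

end Totient

section LogDeriv

/-- `-f' / f` is given on `Re s > 1` by the absolutely convergent Dirichlet series with
coefficients `g`. The multiplied-out form makes sense at zeros of `f`. -/
def HasLSeriesLogDeriv (f : ℂ → ℂ) (g : ℕ → ℂ) : Prop :=
  ∀ s : ℂ, 1 < s.re → LSeriesSummable g s ∧ HasDerivAt f (-LSeries g s * f s) s

lemma HasLSeriesLogDeriv.mul {f₁ f₂ : ℂ → ℂ} {g₁ g₂ : ℕ → ℂ} (h₁ : HasLSeriesLogDeriv f₁ g₁)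
    (h₂ : HasLSeriesLogDeriv f₂ g₂) : HasLSeriesLogDeriv (f₁ * f₂) (g₁ + g₂) := by
  intro s hs
  obtain ⟨hsum₁, hderiv₁⟩ := h₁ s hs
  obtain ⟨hsum₂, hderiv₂⟩ := h₂ s hs
  refine ⟨hsum₁.add hsum₂, (hderiv₁.mul hderiv₂).congr_deriv ?_⟩
  rw [LSeries_add hsum₁ hsum₂, Pi.mul_apply]
  ring

lemma hasLSeriesLogDeriv_LFunction {q : ℕ} [NeZero q] (χ : DirichletCharacter ℂ q) :
    HasLSeriesLogDeriv (LFunction χ) fun n ↦ χ n * (vonMangoldt n : ℂ) := by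
  intro s hs
  have hne : s ≠ 1 := by
    rintro rfl
    simp at hs
  have hlog : LSeries (fun n ↦ χ n * (vonMangoldt n : ℂ)) s =
      -deriv (LSeries fun n ↦ χ n) s / LSeries (fun n ↦ χ n) s :=
    LSeries_twist_vonMangoldt_eq χ hs
  refine ⟨LSeriesSummable_twist_vonMangoldt χ hs,
    (differentiableAt_LFunction χ s (.inl hne)).hasDerivAt.congr_deriv ?_⟩
  rw [hlog, deriv_LFunction_eq_deriv_LSeries _ hs, LFunction_eq_LSeries _ hs]
  field_simp [LSeries_ne_zero_of_one_lt_re χ hs]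

open scoped ComplexOrder in
lemma HasLSeriesLogDeriv.iteratedDeriv_alternating {f : ℂ → ℂ} {g : ℕ → ℂ}
    (h : HasLSeriesLogDeriv f g) (hg : 0 ≤ g) {σ : ℝ} (hσ : 1 < σ) (hf : 0 ≤ f σ) (m : ℕ) :
    0 ≤ (-1) ^ m * iteratedDeriv m f σ := by
  obtain ⟨σ', h1σ', hσ'σ⟩ := exists_between hσ
  have habs : LSeries.abscissaOfAbsConv g < σ :=
    (h σ' h1σ').1.abscissaOfAbsConv_le.trans_lt (by exact_mod_cast hσ'σ)
  have hnhds : {s : ℂ | 1 < s.re} ∈ 𝓝 (σ : ℂ) :=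
    (isOpen_lt continuous_const continuous_re).mem_nhds (by simpa)
  have hderiv : deriv f =ᶠ[𝓝 (σ : ℂ)] -(LSeries g * f) := by
    filter_upwards [hnhds] with s hs
    simp [(h s hs).2.deriv]
  have hf_an : AnalyticAt ℂ f σ := by
    refine DifferentiableOn.analyticAt (fun s hs ↦ ?_) hnhds
    exact (h s hs).2.differentiableAt.differentiableWithinAt
  have hg_an : AnalyticAt ℂ (LSeries g) σ := LSeries_analyticOnNhd g σ (by simpa using habs)
  induction m using Nat.strong_induction_on with
  | _ m ih =>
    cases m with
    | zero => simpa using hf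
    | succ m =>
      rw [iteratedDeriv_succ', hderiv.iteratedDeriv_eq m, iteratedDeriv_neg,
        iteratedDeriv_mul hg_an.contDiffAt hf_an.contDiffAt, pow_succ, mul_neg_one, neg_mul_neg,
        mul_sum]
      refine sum_nonneg fun i hi ↦ ?_
      have him : i ≤ m := by simpa [Nat.lt_succ_iff] using hi
      have hterm := mul_nonneg (mul_nonneg (Nat.cast_nonneg (α := ℂ) (m.choose i))
        (LSeries.iteratedDeriv_alternating hg habs i)) (ih (m - i) (by lia))
      convert hterm using 1
      rw [← Nat.add_sub_cancel' him, pow_add, Nat.add_sub_cancel_left]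
      ring

end LogDeriv

section Taylor

/-- The coefficient of `(c - s) ^ m` in the Taylor expansion of `F` at `c`. -/
noncomputable def leftTaylorCoeff (F : ℂ → ℂ) (c : ℂ) (m : ℕ) : ℂ :=
  (-1) ^ m * iteratedDeriv m F c / m.factorial

lemma leftTaylorCoeff_zero (F : ℂ → ℂ) (c : ℂ) : leftTaylorCoeff F c 0 = F c := by
  simp [leftTaylorCoeff]

lemma hasSum_leftTaylorCoeff {F : ℂ → ℂ} {c s : ℂ} {r : ℝ}
    (hF : DifferentiableOn ℂ F (Metric.ball c r)) (hs : s ∈ Metric.ball c r) :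
    HasSum (fun m ↦ (c - s) ^ m * leftTaylorCoeff F c m) (F s) := by
  refine (hasSum_taylorSeries_on_ball hF hs).congr_fun fun m ↦ ?_
  rw [leftTaylorCoeff, ← neg_sub s c, neg_pow, smul_eq_mul, smul_eq_mul]
  linear_combination ((s - c) ^ m * iteratedDeriv m F c / m.factorial) *
    (by simp [← mul_pow] : (-1 : ℂ) ^ m * (-1) ^ m = 1)

lemma norm_leftTaylorCoeff_le {F : ℂ → ℂ} {c : ℂ} {r B : ℝ} (hr : 0 < r)
    (hF : DiffContOnCl ℂ F (Metric.ball c r)) (hB : ∀ s ∈ Metric.sphere c r, ‖F s‖ ≤ B) (m : ℕ) :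
    ‖leftTaylorCoeff F c m‖ ≤ B / r ^ m := by
  rw [leftTaylorCoeff, norm_div, norm_mul, norm_pow, norm_neg, norm_one, one_pow, one_mul,
    norm_natCast, div_le_iff₀ (by positivity), div_mul_eq_mul_div, mul_comm B]
  exact norm_iteratedDeriv_le_of_forall_mem_sphere_norm_le m hr hF hB

lemma leftTaylorCoeff_inv_sub_one (m : ℕ) :
    leftTaylorCoeff (fun s ↦ (s - 1)⁻¹) 2 m = 1 := by
  rw [leftTaylorCoeff, iteratedDeriv_comp_sub_const m (fun s ↦ s⁻¹) 1, iteratedDeriv_eq_iterate,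
    iter_deriv_inv', ← mul_assoc, ← mul_assoc, ← mul_pow]
  norm_num [m.factorial_ne_zero]

/-- The truncation point `M ≍ log R` turns the exponential decay of the Taylor remainder into a
factor `R⁻¹`, at the cost of a small power of `R` for the truncated sum. -/
lemma exists_pow_le_inv_and_one_add_pow_le {R : ℝ} (hR : 1 ≤ R) :
    ∃ M : ℕ, 1 ≤ M ∧ (5 / 6 : ℝ) ^ M ≤ R⁻¹ ∧
      ∀ t : ℝ, 0 ≤ t → t ≤ 1 → (1 + t) ^ M ≤ Real.exp 2 * R ^ (6 * t) := by
  have hR0 : 0 < R := by linarith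
  have hlog : 0 ≤ Real.log R := Real.log_nonneg hR
  have hlower := Nat.le_ceil (6 * Real.log R)
  have hupper := Nat.ceil_lt_add_one (by positivity : 0 ≤ 6 * Real.log R)
  refine ⟨⌈6 * Real.log R⌉₊ + 1, by lia, ?_, fun t ht0 _ ↦ ?_⟩
  · calc (5 / 6 : ℝ) ^ (⌈6 * Real.log R⌉₊ + 1) ≤ Real.exp (-(1 / 6)) ^ (⌈6 * Real.log R⌉₊ + 1) := by
          gcongr
          linarith [Real.add_one_le_exp (-(1 / 6) : ℝ)]
      _ ≤ Real.exp (-Real.log R) := by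
          rw [← Real.exp_nat_mul, Nat.cast_add_one]
          gcongr
          linarith
      _ = R⁻¹ := by rw [Real.exp_neg, Real.exp_log hR0]
  · calc (1 + t) ^ (⌈6 * Real.log R⌉₊ + 1) ≤ Real.exp t ^ (⌈6 * Real.log R⌉₊ + 1) := by
          gcongr
          linarith [Real.add_one_le_exp t]
      _ ≤ Real.exp (2 + Real.log R * (6 * t)) := by
          rw [← Real.exp_nat_mul, Nat.cast_add_one]
          gcongr
          nlinarith
      _ = Real.exp 2 * R ^ (6 * t) := by rw [Real.exp_add, Real.rpow_def_of_pos hR0]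

variable {W f : ℂ → ℂ} (hW : Differentiable ℂ W) (hf : ∀ s, s ≠ 1 → f s * (s - 1) = W s)
include hW

lemma differentiable_dslope_one : Differentiable ℂ (dslope W 1) := fun _ ↦
  ((differentiableOn_dslope univ_mem).mpr hW.differentiableOn).differentiableAt univ_mem

include hf in
lemma leftTaylorCoeff_dslope_one (m : ℕ) :
    leftTaylorCoeff (dslope W 1) 2 m = leftTaylorCoeff f 2 m - W 1 := by
  have hnhds : ({1}ᶜ : Set ℂ) ∈ 𝓝 2 := isOpen_compl_singleton.mem_nhds (by simp)
  have hf_eq : ∀ s ≠ 1, f s = W s / (s - 1) := fun s hs ↦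
    (eq_div_iff (sub_ne_zero.mpr hs)).mpr (hf s hs)
  have hf_an : AnalyticAt ℂ f 2 := by
    refine DifferentiableOn.analyticAt (fun s hs ↦ ?_) hnhds
    exact ((hW s).div (differentiableAt_id.sub_const 1) (sub_ne_zero.mpr hs))
      |>.differentiableWithinAt.congr hf_eq (hf_eq s hs)
  have hinv_an : AnalyticAt ℂ (fun s : ℂ ↦ W 1 * (s - 1)⁻¹) 2 :=
    analyticAt_const.mul (AnalyticAt.inv (by fun_prop) (by norm_num))
  have heq : dslope W 1 =ᶠ[𝓝 2] f - fun s ↦ W 1 * (s - 1)⁻¹ := by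
    filter_upwards [hnhds] with s hs
    rw [dslope_of_ne _ hs, slope_def_field, Pi.sub_apply, hf_eq s hs, sub_div, div_eq_mul_inv (W 1)]
  have hinv := leftTaylorCoeff_inv_sub_one m
  rw [leftTaylorCoeff] at hinv ⊢
  rw [heq.iteratedDeriv_eq m, iteratedDeriv_sub hf_an.contDiffAt hinv_an.contDiffAt,
    iteratedDeriv_const_mul_field, leftTaylorCoeff]
  linear_combination (-W 1) * hinv

omit hW in
lemma norm_dslope_one_le {B : ℝ} (hB : ∀ s ∈ Metric.closedBall (2 : ℂ) (3 / 2), ‖W s‖ ≤ B) :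
    ∀ s ∈ Metric.sphere (2 : ℂ) (3 / 2), ‖dslope W 1 s‖ ≤ 4 * B := by
  intro s hs
  have hs2 : ‖s - 2‖ = 3 / 2 := mem_sphere_iff_norm.mp hs
  have hs1 : 1 / 2 ≤ ‖s - 1‖ := by
    have := norm_sub_le (s - 1) 1
    rw [sub_sub, one_add_one_eq_two, hs2, norm_one] at this
    linarith
  have hne : s ≠ 1 := by
    rintro rfl
    norm_num at hs1
  have hnum : ‖W s - W 1‖ ≤ B + B := norm_sub_le_of_le
    (hB s (Metric.sphere_subset_closedBall hs)) (hB 1 (by norm_num [dist_eq_norm]))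
  rw [dslope_of_ne _ hne, slope_def_field, norm_div, div_le_iff₀ (by linarith)]
  nlinarith [norm_nonneg (W s - W 1)]

variable {B c₀ β : ℝ} (hB : ∀ s ∈ Metric.closedBall (2 : ℂ) (3 / 2), ‖W s‖ ≤ B)
  (hpos : ∀ m, 0 ≤ (leftTaylorCoeff f 2 m).re) (hc₀ : c₀ ≤ (f 2).re) (hβ : 3 / 4 ≤ β) (hβ1 : β < 1)

include hf hB hpos hc₀ hβ hβ1

lemma le_re_dslope_one {M : ℕ} (hM : 1 ≤ M) :
    c₀ - (W 1).re * ∑ m ∈ range M, (2 - β) ^ m - 24 * B * (5 / 6) ^ M ≤ (dslope W 1 β).re := by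
  set x := 2 - β with hx
  set p : ℕ → ℝ := fun m ↦ (leftTaylorCoeff (dslope W 1) 2 m).re
  have hdiff := differentiable_dslope_one hW
  have hp (m : ℕ) : p m = (leftTaylorCoeff f 2 m).re - (W 1).re := by
    simp only [p, leftTaylorCoeff_dslope_one hW hf, sub_re]
  have hsum : HasSum (fun m ↦ x ^ m * p m) (dslope W 1 β).re := by
    have hmem : (β : ℂ) ∈ Metric.ball (2 : ℂ) (3 / 2) := by
      rw [mem_ball_iff_norm, show (β : ℂ) - 2 = (β - 2 : ℝ) by push_cast; rfl, norm_real,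
        Real.norm_eq_abs, abs_lt]
      constructor <;> linarith
    convert hasSum_re (hasSum_leftTaylorCoeff hdiff.differentiableOn hmem) using 2 with m
    rw [show (2 : ℂ) - β = x by rw [hx]; push_cast; rfl, ← ofReal_pow, re_ofReal_mul]
  have hgeom (m : ℕ) : ‖x ^ m * p m‖ ≤ 4 * B * (5 / 6) ^ m := by
    have hpm : ‖p m‖ ≤ 4 * B / (3 / 2) ^ m := (abs_re_le_norm _).trans
      (norm_leftTaylorCoeff_le (by norm_num) hdiff.diffContOnCl (norm_dslope_one_le hB) m)
    have hx0 : 0 ≤ x := by linarith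
    have hx54 : x ≤ 5 / 4 := by linarith
    rw [norm_mul, norm_pow, Real.norm_of_nonneg hx0]
    calc x ^ m * ‖p m‖ ≤ (5 / 4) ^ m * (4 * B / (3 / 2) ^ m) := by
          gcongr
      _ = 4 * B * (5 / 6) ^ m := by
          rw [mul_div_left_comm, ← div_pow]
          norm_num
  have htail : |∑ m ∈ range M, x ^ m * p m - (dslope W 1 β).re| ≤
      4 * B * (5 / 6) ^ M / (1 - 5 / 6) :=
    norm_sub_le_of_geometric_bound_of_hasSum (by norm_num) hgeom hsum M
  have hhead : c₀ - (W 1).re * ∑ m ∈ range M, x ^ m ≤ ∑ m ∈ range M, x ^ m * p m := by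
    simp_rw [hp, mul_sub, sum_sub_distrib, ← sum_mul, mul_comm (W 1).re]
    gcongr
    calc c₀ ≤ x ^ 0 * (leftTaylorCoeff f 2 0).re := by simpa [leftTaylorCoeff_zero] using hc₀
      _ ≤ _ := single_le_sum (f := fun m ↦ x ^ m * (leftTaylorCoeff f 2 m).re)
        (fun m _ ↦ mul_nonneg (pow_nonneg (by linarith) m) (hpos m)) (mem_range.mpr hM)
  norm_num at htail
  linarith [(abs_le.mp htail).2]

variable (hWβ : 0 ≤ (W β).re)
include hWβ

lemma one_sub_mul_le_re_mul_pow {M : ℕ} (hM : 1 ≤ M) (hMB : 48 * B * (5 / 6) ^ M ≤ c₀) :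
    (1 - β) * c₀ / 2 ≤ (W 1).re * (2 - β) ^ M := by
  have hslope : (dslope W 1 β).re * (1 - β) ≤ (W 1).re := by
    have hsub : (β : ℂ) - 1 = (β - 1 : ℝ) := by push_cast; rfl
    have hne : β - 1 ≠ 0 := by linarith
    rw [dslope_of_ne _ (by exact_mod_cast hβ1.ne), slope_def_field, hsub, div_ofReal_re, sub_re,
      ← neg_sub β 1, mul_neg, div_mul_cancel₀ _ hne]
    linarith
  have hgeom : (∑ m ∈ range M, (2 - β) ^ m) * (1 - β) = (2 - β) ^ M - 1 := by
    rw [← geom_sum_mul]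
    ring
  have hle := mul_le_mul_of_nonneg_right
    (le_re_dslope_one hW hf hB hpos hc₀ hβ hβ1 hM) (sub_nonneg.mpr hβ1.le)
  have hMB' := mul_le_mul_of_nonneg_right hMB (sub_nonneg.mpr hβ1.le)
  linear_combination hslope + hle + hMB' / 2 + (W 1).re * hgeom

lemma mul_rpow_le_re_of_nonneg_leftTaylorCoeff (hc₀_pos : 0 < c₀) (hcB : c₀ ≤ B) :
    (1 - β) * c₀ / 2 * (Real.exp (-2) * (48 * B / c₀) ^ (-(6 * (1 - β)))) ≤ (W 1).re := by
  set R := 48 * B / c₀ with hR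
  have hR1 : 1 ≤ R := by rw [hR, le_div_iff₀ hc₀_pos]; linarith
  have hR0 : 0 < R := by linarith
  obtain ⟨M, hM, hpow, hgrowth⟩ := exists_pow_le_inv_and_one_add_pow_le hR1
  have hMB : 48 * B * (5 / 6) ^ M ≤ c₀ :=
    calc 48 * B * (5 / 6) ^ M ≤ 48 * B * R⁻¹ := by gcongr; linarith
      _ = c₀ := by rw [hR]; field_simp [(hc₀_pos.trans_le hcB).ne']
  have hx : (2 - β) ^ M ≤ Real.exp 2 * R ^ (6 * (1 - β)) := by
    have := hgrowth (1 - β) (by linarith) (by linarith)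
    rwa [add_sub, one_add_one_eq_two] at this
  have hmain := one_sub_mul_le_re_mul_pow hW hf hB hpos hc₀ hβ hβ1 hWβ hM hMB
  have hW1 : 0 ≤ (W 1).re := by
    have hleft : 0 < (1 - β) * c₀ / 2 := by
      have := sub_pos.mpr hβ1
      positivity
    exact (pos_of_mul_pos_left (hleft.trans_le hmain) (pow_nonneg (by linarith) M)).le
  rw [Real.exp_neg, Real.rpow_neg hR0.le, ← mul_inv, ← div_eq_mul_inv, div_le_iff₀ (by positivity)]
  exact hmain.trans (mul_le_mul_of_nonneg_left hx hW1)

end Taylor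

section Siegel

open scoped ComplexOrder

variable {q : ℕ} {χ : DirichletCharacter ℂ q}

lemma conj_apply_of_sq_eq_one (h : χ ^ 2 = 1) (a : ZMod q) : (starRingEnd ℂ) (χ a) = χ a := by
  rcases MulChar.isQuadratic_iff_sq_eq_one.mpr h a with h | h | h <;> simp [h]

lemma one_add_apply_nonneg_of_sq_eq_one (h : χ ^ 2 = 1) (a : ZMod q) : 0 ≤ 1 + χ a := by
  rcases MulChar.isQuadratic_iff_sq_eq_one.mpr h a with h | h | h <;> simp [h, add_nonneg]

lemma norm_apply_mul_cpow_neg_one_le {p : ℕ} : ‖χ p * (p : ℂ) ^ (-1 : ℂ)‖ ≤ (p : ℝ)⁻¹ := by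
  rw [norm_mul, cpow_neg_one, norm_inv, norm_natCast]
  exact mul_le_of_le_one_left (by positivity) (χ.norm_le_one _)

lemma totient_div_self_le_prod_norm {Q : ℕ} (hQ : 0 < Q) :
    (Nat.totient Q : ℝ) / Q ≤ ∏ p ∈ Q.primeFactors, ‖1 - χ p * (p : ℂ) ^ (-1 : ℂ)‖ := by
  rw [totient_div_self_eq_prod hQ]
  refine prod_le_prod (fun p _ ↦ ?_) fun p _ ↦ ?_
  · exact sub_nonneg.mpr (Nat.cast_inv_le_one p)
  · have := norm_sub_norm_le (1 : ℂ) (χ p * (p : ℂ) ^ (-1 : ℂ))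
    rw [norm_one] at this
    linarith [norm_apply_mul_cpow_neg_one_le (χ := χ) (p := p)]

lemma prod_norm_mul_totient_div_self_le_one {Q : ℕ} (hQ : 0 < Q) :
    (∏ p ∈ Q.primeFactors, ‖1 - χ p * (p : ℂ) ^ (-1 : ℂ)‖) * (Nat.totient Q / Q) ≤ 1 := by
  rw [totient_div_self_eq_prod hQ, ← prod_mul_distrib]
  have hinv (p : ℕ) : 0 ≤ 1 - (p : ℝ)⁻¹ := sub_nonneg.mpr (Nat.cast_inv_le_one p)
  refine prod_le_one (fun p _ ↦ mul_nonneg (norm_nonneg _) (hinv p)) fun p _ ↦ ?_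
  calc ‖1 - χ p * (p : ℂ) ^ (-1 : ℂ)‖ * (1 - (p : ℝ)⁻¹)
      ≤ (1 + (p : ℝ)⁻¹) * (1 - (p : ℝ)⁻¹) := by
        have := hinv p
        gcongr
        exact norm_sub_le_of_le norm_one.le norm_apply_mul_cpow_neg_one_le
    _ ≤ 1 := by nlinarith [sq_nonneg (p : ℝ)⁻¹]

variable [NeZero q]

lemma conj_meanValue_of_sq_eq_one (h : χ ^ 2 = 1) :
    (starRingEnd ℂ) (meanValue χ) = meanValue χ := by
  rw [meanValue, map_div₀, map_sum, map_natCast]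
  simp only [conj_apply_of_sq_eq_one h]

lemma entireL_one_one :
    entireL (1 : DirichletCharacter ℂ q) 1 = meanValue (1 : DirichletCharacter ℂ q) := by
  rw [entireL_eq_add (1 : DirichletCharacter ℂ q) (by simp), polarFactor, if_pos rfl, sub_self,
    zero_mul, add_zero, mul_one]

lemma entireL_ne_zero_of_one_le_re {s : ℂ} (hs : 1 ≤ s.re) : entireL χ s ≠ 0 := by
  by_cases hχ : χ = 1
  · subst hχ
    rcases eq_or_ne s 1 with rfl | hs1
    · rw [entireL_one_one, meanValue_one]
      exact div_ne_zero (by exact_mod_cast (Nat.totient_pos.mpr (NeZero.pos q)).ne') (NeZero.ne _)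
    · rw [entireL_eq_polarFactor_mul 1 hs1, polarFactor, if_pos rfl]
      exact mul_ne_zero (sub_ne_zero.mpr hs1)
        (LFunction_ne_zero_of_one_le_re 1 (Or.inr hs1) hs)
  · rw [entireL_of_ne_one hχ]
    exact LFunction_ne_zero_of_one_le_re χ (Or.inl hχ) hs

lemma conj_regularPart_of_sq_eq_one (h : χ ^ 2 = 1) (σ : ℝ) :
    (starRingEnd ℂ) (regularPart χ σ) = regularPart χ σ := by
  have hsum (t : ℝ) : (starRingEnd ℂ) (charSum χ t) = charSum χ t := by
    simp only [charSum, map_sum, conj_apply_of_sq_eq_one h]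
  rw [regularPart_eq_integral, map_mul, conj_ofReal, ← integral_conj]
  congr 1
  refine setIntegral_congr_fun measurableSet_Ioi fun t ht ↦ ?_
  have hcpow : (t : ℂ) ^ (-((σ : ℂ) + 1)) = (t ^ (-(σ + 1)) : ℝ) := by
    rw [ofReal_cpow (zero_le_one.trans (le_of_lt ht))]
    push_cast
    rfl
  simp only [hcpow, map_mul, map_sub, conj_ofReal, hsum, conj_meanValue_of_sq_eq_one h]

lemma conj_entireL_of_sq_eq_one (h : χ ^ 2 = 1) {σ : ℝ} (hσ : 0 < σ) :
    (starRingEnd ℂ) (entireL χ σ) = entireL χ σ := by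
  have hpolar : (starRingEnd ℂ) (polarFactor χ σ) = polarFactor χ σ := by
    unfold polarFactor
    split_ifs <;> simp
  rw [entireL_eq_add χ (by simpa using hσ), map_add, map_mul, map_mul, conj_ofReal, hpolar,
    conj_meanValue_of_sq_eq_one h, conj_regularPart_of_sq_eq_one h]

lemma one_fourth_le_LFunction_two (h : χ ^ 2 = 1) : 1 / 4 ≤ LFunction χ 2 := by
  have hre : 1 < (2 : ℂ).re := by simp
  have hL : HasSum (fun n : ℕ ↦ χ n / (n : ℂ) ^ 2) (LFunction χ 2) := by
    rw [LFunction_eq_LSeries χ hre]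
    refine (LSeriesSummable_of_one_lt_re χ hre).hasSum.congr_fun fun n ↦ ?_
    rcases eq_or_ne n 0 with rfl | hn
    · simp
    · rw [LSeries.term_of_ne_zero hn, cpow_ofNat]
  have hζ : HasSum (fun n : ℕ ↦ 1 / (n : ℂ) ^ 2) ((Real.pi ^ 2 / 6 : ℝ) : ℂ) := by
    simpa using hasSum_ofReal.mpr hasSum_zeta_two
  have hπ : ((Real.pi ^ 2 / 6 : ℝ) : ℂ) ≤ (7 / 4 : ℝ) := by
    rw [real_le_real]
    nlinarith [Real.pi_lt_d2, Real.pi_pos]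
  have hle : 1 + 1 ≤ ((Real.pi ^ 2 / 6 : ℝ) : ℂ) + LFunction χ 2 := by
    simpa using sum_le_hasSum {1} (fun n _ ↦ by
      rw [← add_div]
      exact div_nonneg (one_add_apply_nonneg_of_sq_eq_one h n) (by positivity)) (hζ.add hL)
  push_cast at hπ
  calc (1 / 4 : ℂ) = 1 + 1 - 7 / 4 := by norm_num
    _ ≤ 1 + 1 - ((Real.pi ^ 2 / 6 : ℝ) : ℂ) := by
      push_cast
      gcongr
    _ ≤ LFunction χ 2 := sub_le_iff_le_add'.mpr hle

lemma LFunction_two_nonneg (h : χ ^ 2 = 1) : 0 ≤ LFunction χ 2 :=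
  le_trans (by positivity) (one_fourth_le_LFunction_two h)

lemma exists_norm_entireL_le_of_mem_closedBall : ∃ C : ℝ, 1 ≤ C ∧
    ∀ (q : ℕ) [NeZero q] (χ : DirichletCharacter ℂ q), ∀ s ∈ Metric.closedBall (2 : ℂ) (3 / 2),
      ‖entireL χ s‖ ≤ C * q := by
  obtain ⟨C, hC1, hC⟩ := exists_norm_entireL_le one_pos le_rfl
  refine ⟨C * (9 / 2) ^ 2, by linarith, fun q _ χ s hs ↦ ?_⟩
  rw [mem_closedBall_iff_norm] at hs
  have hre : 1 - 1 / 2 ≤ s.re := by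
    have := (abs_le.mp ((abs_re_le_norm (s - 2)).trans hs)).1
    rw [sub_re, re_ofNat] at this
    linarith
  have hnorm : ‖s‖ ≤ 7 / 2 := by
    have := norm_le_norm_add_norm_sub' s 2
    rw [Complex.norm_ofNat] at this
    linarith
  calc ‖entireL χ s‖ ≤ C * (q * (1 + ‖s‖)) ^ (1 : ℝ) * (1 + ‖s‖) := hC q χ s hre
    _ ≤ C * (q * (1 + 7 / 2)) * (1 + 7 / 2) := by rw [Real.rpow_one]; gcongr
    _ = C * (9 / 2) ^ 2 * q := by ring

/-- The trivial character modulo `1` supplies the factor `ζ`, so that `W = ζ(s)(s - 1)R(s)` in the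
Taylor argument. -/
lemma exists_mul_rpow_le_norm_of_hasLSeriesLogDeriv {β : ℝ} (hβ : 3 / 4 ≤ β) (hβ1 : β < 1) :
    ∃ c > 0, ∀ (R : ℂ → ℂ) (g : ℕ → ℂ) (D : ℝ), Differentiable ℂ R →
      HasLSeriesLogDeriv (LFunction (1 : DirichletCharacter ℂ 1) * R) g → 0 ≤ g →
      1 / 256 ≤ (LFunction (1 : DirichletCharacter ℂ 1) * R) 2 → 1 ≤ D →
      (∀ s ∈ Metric.closedBall (2 : ℂ) (3 / 2), ‖R s‖ ≤ D) →
      0 ≤ (entireL (1 : DirichletCharacter ℂ 1) β * R β).re →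
      c * D ^ (-(6 * (1 - β))) ≤ ‖R 1‖ := by
  obtain ⟨C, hC1, hC⟩ := exists_norm_entireL_le_of_mem_closedBall
  have := sub_pos.mpr hβ1
  refine ⟨(1 - β) * (1 / 256) / 2 * (Real.exp (-2) * (48 * C / (1 / 256)) ^ (-(6 * (1 - β)))),
    by positivity, fun R g D hR hLD hg h2 hD1 hD hRβ ↦ ?_⟩
  have hW : Differentiable ℂ (entireL (1 : DirichletCharacter ℂ 1) * R) :=
    (differentiable_entireL _).mul hR
  have hf (s : ℂ) (hs : s ≠ 1) : (LFunction (1 : DirichletCharacter ℂ 1) * R) s * (s - 1) =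
      (entireL (1 : DirichletCharacter ℂ 1) * R) s := by
    rw [Pi.mul_apply, Pi.mul_apply, entireL_eq_polarFactor_mul _ hs, polarFactor, if_pos rfl]
    ring
  have hB (s : ℂ) (hs : s ∈ Metric.closedBall (2 : ℂ) (3 / 2)) :
      ‖(entireL (1 : DirichletCharacter ℂ 1) * R) s‖ ≤ C * D := by
    rw [Pi.mul_apply, norm_mul]
    refine mul_le_mul ?_ (hD s hs) (norm_nonneg _) (by linarith)
    simpa using hC 1 1 s hs
  have hpos (m : ℕ) :
      0 ≤ (leftTaylorCoeff (LFunction (1 : DirichletCharacter ℂ 1) * R) 2 m).re := by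
    have h2' : 0 ≤ (LFunction (1 : DirichletCharacter ℂ 1) * R) (2 : ℝ) := by
      rw [ofReal_ofNat]
      exact le_trans (by positivity) h2
    have := hLD.iteratedDeriv_alternating hg one_lt_two h2' m
    rw [ofReal_ofNat] at this
    exact (le_def.mp (div_nonneg this (Nat.cast_nonneg m.factorial))).1
  have hmain := mul_rpow_le_re_of_nonneg_leftTaylorCoeff hW hf hB hpos (c₀ := 1 / 256)
    (by simpa using (le_def.mp h2).1) hβ hβ1 hRβ (by norm_num) (by nlinarith)
  have hW1 : (entireL (1 : DirichletCharacter ℂ 1) * R) 1 = R 1 := by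
    simp [Pi.mul_apply, entireL_one_one]
  rw [hW1] at hmain
  rw [← mul_assoc 48, mul_div_right_comm (48 * C), Real.mul_rpow (by positivity) (by positivity),
    ← mul_assoc, ← mul_assoc] at hmain
  rw [← mul_assoc]
  exact hmain.trans (re_le_norm _)

lemma differentiable_LFunction_of_ne_one (h : χ ≠ 1) : Differentiable ℂ (LFunction χ) := by
  rw [← entireL_of_ne_one h]
  exact differentiable_entireL χ

lemma one_modOne_apply (n : ℕ) : (1 : DirichletCharacter ℂ 1) n = 1 := by
  rw [Subsingleton.elim (n : ZMod 1) 1, map_one]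

lemma exists_mul_rpow_le_norm_LFunction_mul {β : ℝ} (hβ : 3 / 4 ≤ β) (hβ1 : β < 1) :
    ∃ c > 0, ∀ (q : ℕ) [NeZero q] (χ₁ χ₂ : DirichletCharacter ℂ q), χ₁ ^ 2 = 1 → χ₂ ^ 2 = 1 →
      χ₁ ≠ 1 → χ₂ ≠ 1 → χ₁ * χ₂ ≠ 1 →
      entireL (1 : DirichletCharacter ℂ 1) β * LFunction χ₁ β = 0 →
      c * q ^ (-(18 * (1 - β))) ≤
        ‖LFunction χ₁ 1 * (LFunction χ₂ 1 * LFunction (χ₁ * χ₂) 1)‖ := by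
  obtain ⟨C, hC1, hC⟩ := exists_norm_entireL_le_of_mem_closedBall
  obtain ⟨c, hc, H⟩ := exists_mul_rpow_le_norm_of_hasLSeriesLogDeriv hβ hβ1
  refine ⟨c * (C ^ 3) ^ (-(6 * (1 - β))), by positivity, fun q _ χ₁ χ₂ h₁ h₂ n₁ n₂ n₃ hz ↦ ?_⟩
  have hq1 : (1 : ℝ) ≤ q := mod_cast NeZero.one_le
  have hmain := H (LFunction χ₁ * (LFunction χ₂ * LFunction (χ₁ * χ₂))) _ ((C * q) ^ 3)
    ((differentiable_LFunction_of_ne_one n₁).mul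
      ((differentiable_LFunction_of_ne_one n₂).mul (differentiable_LFunction_of_ne_one n₃)))
    ((hasLSeriesLogDeriv_LFunction _).mul ((hasLSeriesLogDeriv_LFunction _).mul
      ((hasLSeriesLogDeriv_LFunction _).mul (hasLSeriesLogDeriv_LFunction _))))
    (fun n ↦ ?_) ?_ (one_le_pow₀ (one_le_mul_of_one_le_of_one_le hC1 hq1)) (fun s hs ↦ ?_) ?_
  · rwa [mul_pow, Real.mul_rpow (by positivity) (by positivity), ← mul_assoc,
      ← Real.rpow_natCast_mul q.cast_nonneg, Nat.cast_ofNat, mul_neg, ← mul_assoc,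
      show (3 : ℝ) * 6 = 18 by norm_num] at hmain
  · have hnonneg : (0 : ℂ) ≤ vonMangoldt n * ((1 + χ₁ n) * (1 + χ₂ n)) :=
      mul_nonneg (by exact_mod_cast ArithmeticFunction.vonMangoldt_nonneg)
        (mul_nonneg (one_add_apply_nonneg_of_sq_eq_one h₁ n)
          (one_add_apply_nonneg_of_sq_eq_one h₂ n))
    refine hnonneg.trans_eq ?_
    simp only [Pi.add_apply, one_modOne_apply, MulChar.mul_apply]
    ring
  · calc (1 / 256 : ℂ) = 1 / 4 * (1 / 4 * (1 / 4 * (1 / 4))) := by norm_num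
      _ ≤ LFunction (1 : DirichletCharacter ℂ 1) 2 *
          (LFunction χ₁ 2 * (LFunction χ₂ 2 * LFunction (χ₁ * χ₂) 2)) := by
        have h₀ : (1 : DirichletCharacter ℂ 1) ^ 2 = 1 := one_pow 2
        have h₃ : (χ₁ * χ₂) ^ 2 = 1 := by rw [mul_pow, h₁, h₂, one_mul]
        gcongr
        all_goals first
          | exact LFunction_two_nonneg ‹_›
          | exact one_fourth_le_LFunction_two ‹_›
  · rw [Pi.mul_apply, Pi.mul_apply, norm_mul, norm_mul, ← entireL_of_ne_one n₁,
      ← entireL_of_ne_one n₂, ← entireL_of_ne_one n₃, pow_succ', pow_two]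
    gcongr <;> exact hC q _ s hs
  · rw [Pi.mul_apply, ← mul_assoc, hz, zero_mul, zero_re]

lemma re_nonneg_of_ne_zero {F : ℂ → ℂ} (hF : Continuous F) {β b : ℝ} (hβb : β ≤ b)
    (hreal : ∀ σ : ℝ, β ≤ σ → (starRingEnd ℂ) (F σ) = F σ)
    (hne : ∀ σ ∈ Set.Icc β b, F (σ : ℝ) ≠ 0) (hb : 0 ≤ (F b).re) : 0 ≤ (F β).re := by
  by_contra! hneg
  obtain ⟨σ, hσ, hσ0⟩ := isPreconnected_Icc.intermediate_value (Set.left_mem_Icc.mpr hβb)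
    (Set.right_mem_Icc.mpr hβb) (f := fun σ : ℝ ↦ (F σ).re) (by fun_prop) ⟨hneg.le, hb⟩
  refine hne σ hσ ?_
  rw [← conj_eq_iff_re.mp (hreal σ hσ.1)]
  exact_mod_cast hσ0

lemma re_entireL_one_mul_LFunction_nonneg {β : ℝ} (h : χ ^ 2 = 1) (hχ : χ ≠ 1) (hβ : 0 < β)
    (hβ2 : β ≤ 2)
    (hz : ∀ σ ∈ Set.Ico β 1, entireL (1 : DirichletCharacter ℂ 1) (σ : ℝ) * LFunction χ σ ≠ 0) :
    0 ≤ (entireL (1 : DirichletCharacter ℂ 1) β * LFunction χ β).re := by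
  have h1 : (1 : DirichletCharacter ℂ 1) ^ 2 = 1 := one_pow 2
  rw [← entireL_of_ne_one hχ] at hz ⊢
  refine re_nonneg_of_ne_zero (F := entireL (1 : DirichletCharacter ℂ 1) * entireL χ) (b := 2)
    ((differentiable_entireL _).continuous.mul (differentiable_entireL χ).continuous)
    hβ2 (fun σ hσ ↦ ?_) (fun σ hσ ↦ ?_) ?_
  · rw [Pi.mul_apply, map_mul, conj_entireL_of_sq_eq_one h1 (hβ.trans_le hσ),
      conj_entireL_of_sq_eq_one h (hβ.trans_le hσ)]
  · rcases lt_or_ge σ 1 with hσ1 | hσ1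
    · exact hz σ ⟨hσ.1, hσ1⟩
    · exact mul_ne_zero (entireL_ne_zero_of_one_le_re (by simpa using hσ1))
        (entireL_ne_zero_of_one_le_re (by simpa using hσ1))
  · have hζ : entireL (1 : DirichletCharacter ℂ 1) 2 =
        LFunction (1 : DirichletCharacter ℂ 1) 2 := by
      rw [entireL_eq_polarFactor_mul _ (by norm_num), polarFactor, if_pos rfl]
      norm_num
    rw [ofReal_ofNat, Pi.mul_apply, hζ, entireL_of_ne_one hχ]
    exact (le_def.mp (mul_nonneg (LFunction_two_nonneg h1) (LFunction_two_nonneg h))).1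

lemma exists_mul_rpow_le_norm_LFunction_one {β : ℝ} (hβ : 3 / 4 ≤ β) (hβ1 : β < 1) :
    ∃ c > 0, ∀ (q : ℕ) [NeZero q] (χ : DirichletCharacter ℂ q), χ ^ 2 = 1 → χ ≠ 1 →
      (∀ σ ∈ Set.Ico β 1, entireL (1 : DirichletCharacter ℂ 1) (σ : ℝ) * LFunction χ σ ≠ 0) →
      c * q ^ (-(6 * (1 - β))) ≤ ‖LFunction χ 1‖ := by
  obtain ⟨C, hC1, hC⟩ := exists_norm_entireL_le_of_mem_closedBall
  obtain ⟨c, hc, H⟩ := exists_mul_rpow_le_norm_of_hasLSeriesLogDeriv hβ hβ1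
  refine ⟨c * C ^ (-(6 * (1 - β))), by positivity, fun q _ χ h hχ hz ↦ ?_⟩
  have hq1 : (1 : ℝ) ≤ q := mod_cast NeZero.one_le
  have h1 : (1 : DirichletCharacter ℂ 1) ^ 2 = 1 := one_pow 2
  have hmain := H (LFunction χ) _ (C * q) (differentiable_LFunction_of_ne_one hχ)
    ((hasLSeriesLogDeriv_LFunction _).mul (hasLSeriesLogDeriv_LFunction _)) (fun n ↦ ?_) ?_
    (one_le_mul_of_one_le_of_one_le hC1 hq1) (fun s hs ↦ ?_) ?_
  · rwa [Real.mul_rpow (by positivity) (by positivity), ← mul_assoc] at hmain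
  · have hnonneg : (0 : ℂ) ≤ vonMangoldt n * (1 + χ n) :=
      mul_nonneg (by exact_mod_cast ArithmeticFunction.vonMangoldt_nonneg)
        (one_add_apply_nonneg_of_sq_eq_one h n)
    refine hnonneg.trans_eq ?_
    simp only [Pi.add_apply, one_modOne_apply]
    ring
  · calc (1 / 256 : ℂ) ≤ 1 / 4 * (1 / 4) := by
          rw [Complex.le_def]
          norm_num
      _ ≤ LFunction (1 : DirichletCharacter ℂ 1) 2 * LFunction χ 2 := by
        gcongr
        all_goals first
          | exact LFunction_two_nonneg ‹_›
          | exact one_fourth_le_LFunction_two ‹_›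
  · rw [← entireL_of_ne_one hχ]
    exact hC q χ s hs
  · exact re_entireL_one_mul_LFunction_nonneg h hχ (by linarith) (by linarith) hz

section ChangeLevel

variable {Q : ℕ} [NeZero Q] (hqQ : q ∣ Q) (hχ : χ ≠ 1)
include hχ

lemma norm_LFunction_one_mul_le_changeLevel :
    ‖LFunction χ 1‖ * (Nat.totient Q / Q) ≤ ‖LFunction (changeLevel hqQ χ) 1‖ := by
  rw [LFunction_changeLevel hqQ χ (.inl hχ), norm_mul, norm_prod]
  gcongr
  exact totient_div_self_le_prod_norm (NeZero.pos Q)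

lemma norm_LFunction_changeLevel_one_mul_le :
    ‖LFunction (changeLevel hqQ χ) 1‖ * (Nat.totient Q / Q) ≤ ‖LFunction χ 1‖ := by
  rw [LFunction_changeLevel hqQ χ (.inl hχ), norm_mul, norm_prod, mul_assoc]
  exact mul_le_of_le_one_right (norm_nonneg _)
    (prod_norm_mul_totient_div_self_le_one (NeZero.pos Q))

end ChangeLevel

lemma exists_norm_LFunction_one_le {a : ℝ} (ha : 0 < a) (ha1 : a ≤ 1) :
    ∃ C : ℝ, 1 ≤ C ∧ ∀ (q : ℕ) [NeZero q] (χ : DirichletCharacter ℂ q), χ ≠ 1 →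
      ‖LFunction χ 1‖ ≤ C * q ^ a := by
  obtain ⟨C, hC1, hC⟩ := exists_norm_entireL_le ha ha1
  refine ⟨C * 2 ^ a * 2, ?_, fun q _ χ hχ ↦ ?_⟩
  · have : (1 : ℝ) ≤ 2 ^ a := Real.one_le_rpow one_le_two ha.le
    nlinarith
  · have hbound := hC q χ 1 (by simp only [one_re]; linarith)
    rw [norm_one, one_add_one_eq_two, Real.mul_rpow q.cast_nonneg zero_le_two,
      entireL_of_ne_one hχ] at hbound
    linarith

section Zero

variable {a β : ℝ} (ha : 0 < a) (ha4 : a ≤ 1 / 4) (hβ : 1 - a ≤ β) (hβ1 : β < 1)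
include ha ha4 hβ hβ1

lemma exists_mul_rpow_le_norm_LFunction_one_of_mul_ne_one :
    ∃ c > 0, ∀ (q : ℕ) [NeZero q] (χ₁ χ₂ : DirichletCharacter ℂ q), χ₁ ^ 2 = 1 → χ₂ ^ 2 = 1 →
      χ₁ ≠ 1 → χ₂ ≠ 1 → χ₁ * χ₂ ≠ 1 →
      entireL (1 : DirichletCharacter ℂ 1) β * LFunction χ₁ β = 0 →
      c * q ^ (-(20 * a)) ≤ ‖LFunction χ₂ 1‖ := by
  obtain ⟨c, hc, H⟩ := exists_mul_rpow_le_norm_LFunction_mul (by linarith : 3 / 4 ≤ β) hβ1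
  obtain ⟨C, hC1, hC⟩ := exists_norm_LFunction_one_le ha (by linarith)
  refine ⟨c / C ^ 2, by positivity, fun q _ χ₁ χ₂ h₁ h₂ n₁ n₂ n₃ hz ↦ ?_⟩
  have hq1 : (1 : ℝ) ≤ q := mod_cast NeZero.one_le
  have hq0 : (0 : ℝ) < q := by linarith
  have hmul : c * q ^ (-(18 * a)) ≤ C ^ 2 * q ^ (2 * a) * ‖LFunction χ₂ 1‖ :=
    calc c * (q : ℝ) ^ (-(18 * a)) ≤ c * q ^ (-(18 * (1 - β))) := by
          gcongr
          linarith
      _ ≤ ‖LFunction χ₁ 1‖ * (‖LFunction χ₂ 1‖ * ‖LFunction (χ₁ * χ₂) 1‖) := by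
          simpa only [norm_mul] using H q χ₁ χ₂ h₁ h₂ n₁ n₂ n₃ hz
      _ ≤ (C * q ^ a) * (‖LFunction χ₂ 1‖ * (C * q ^ a)) := by
          gcongr
          · exact hC q χ₁ n₁
          · exact hC q _ n₃
      _ = C ^ 2 * q ^ (2 * a) * ‖LFunction χ₂ 1‖ := by
          rw [two_mul a, Real.rpow_add hq0]
          ring
  calc c / C ^ 2 * (q : ℝ) ^ (-(20 * a)) = c * q ^ (-(18 * a)) / (C ^ 2 * q ^ (2 * a)) := by
        rw [show -(20 * a) = -(18 * a) - 2 * a by ring, Real.rpow_sub hq0]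
        field_simp
    _ ≤ ‖LFunction χ₂ 1‖ := div_le_of_le_mul₀ (by positivity) (norm_nonneg _) (by linarith)

variable {χ₁ : DirichletCharacter ℂ q} (h₁ : χ₁ ^ 2 = 1) (n₁ : χ₁ ≠ 1)
  (hz : entireL (1 : DirichletCharacter ℂ 1) β * LFunction χ₁ β = 0)
include h₁ n₁ hz

lemma exists_mul_rpow_le_norm_LFunction_one_of_dvd :
    ∃ c > 0, ∀ (Q : ℕ) [NeZero Q] (ψ : DirichletCharacter ℂ Q), q ∣ Q → ψ ^ 2 = 1 → ψ ≠ 1 →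
      c * Q ^ (-(20 * a)) ≤ ‖LFunction ψ 1‖ := by
  obtain ⟨c, hc, H⟩ := exists_mul_rpow_le_norm_LFunction_one_of_mul_ne_one ha ha4 hβ hβ1
  obtain ⟨c', hc', htot⟩ := exists_rpow_neg_le_totient_div_self ha
  have hL₁ : 0 < ‖LFunction χ₁ 1‖ := norm_pos_iff.mpr (LFunction_apply_one_ne_zero n₁)
  refine ⟨min c (‖LFunction χ₁ 1‖ * c'), by positivity, fun Q _ ψ hqQ hψ hψ1 ↦ ?_⟩
  have hQ1 : (1 : ℝ) ≤ Q := mod_cast NeZero.one_le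
  set ψ₁ := changeLevel hqQ χ₁ with hψ₁
  have hψ₁_sq : ψ₁ ^ 2 = 1 := by rw [hψ₁, ← map_pow, h₁, map_one]
  by_cases hmul : ψ₁ * ψ = 1
  · have hψ_eq : ψ = ψ₁ := by
      rw [← mul_left_cancel_iff (a := ψ₁), hmul, ← sq, hψ₁_sq]
    calc min c (‖LFunction χ₁ 1‖ * c') * (Q : ℝ) ^ (-(20 * a))
        ≤ ‖LFunction χ₁ 1‖ * c' * (Q : ℝ) ^ (-a) := by
          gcongr
          · exact min_le_right _ _
          · linarith
      _ ≤ ‖LFunction χ₁ 1‖ * (Nat.totient Q / Q) := by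
          rw [mul_assoc]
          gcongr
          exact htot Q (NeZero.pos Q)
      _ ≤ ‖LFunction ψ 1‖ := hψ_eq ▸ norm_LFunction_one_mul_le_changeLevel hqQ n₁
  · have hz' : entireL (1 : DirichletCharacter ℂ 1) β * LFunction ψ₁ β = 0 := by
      rw [hψ₁, LFunction_changeLevel hqQ χ₁ (.inl n₁), ← mul_assoc, hz, zero_mul]
    refine le_trans ?_ (H Q ψ₁ ψ hψ₁_sq hψ ((changeLevel_eq_one_iff hqQ).not.mpr n₁) hψ1 hmul hz')
    gcongr
    exact min_le_left _ _

lemma exists_mul_rpow_le_norm_LFunction_one_of_eq_zero :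
    ∃ c > 0, ∀ (r : ℕ) [NeZero r] (χ : DirichletCharacter ℂ r), χ ^ 2 = 1 → χ ≠ 1 →
      c * r ^ (-(21 * a)) ≤ ‖LFunction χ 1‖ := by
  obtain ⟨c, hc, H⟩ := exists_mul_rpow_le_norm_LFunction_one_of_dvd ha ha4 hβ hβ1 h₁ n₁ hz
  obtain ⟨c', hc', htot⟩ := exists_rpow_neg_le_totient_div_self ha
  have hq0 : (0 : ℝ) < q := mod_cast NeZero.pos q
  refine ⟨c * c' * q ^ (-(21 * a)), by positivity, fun r _ χ hχ hχ1 ↦ ?_⟩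
  have hdvd : r ∣ q * r := dvd_mul_left r q
  have : NeZero (q * r) := ⟨mul_ne_zero (NeZero.ne _) (NeZero.ne _)⟩
  have hQ0 : (0 : ℝ) < (q * r : ℕ) := mod_cast NeZero.pos (q * r)
  calc c * c' * (q : ℝ) ^ (-(21 * a)) * (r : ℝ) ^ (-(21 * a))
      = (c * (q * r : ℕ) ^ (-(20 * a))) * (c' * (q * r : ℕ) ^ (-a)) := by
        rw [mul_assoc (c * c'), ← Real.mul_rpow hq0.le r.cast_nonneg, ← Nat.cast_mul,
          show -(21 * a) = -(20 * a) + -a by ring, Real.rpow_add hQ0]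
        ring
    _ ≤ ‖LFunction (changeLevel hdvd χ) 1‖ * (Nat.totient (q * r) / (q * r : ℕ)) := by
        gcongr
        · exact H (q * r) _ (dvd_mul_right q r) (by rw [← map_pow, hχ, map_one])
            ((changeLevel_eq_one_iff hdvd).not.mpr hχ1)
        · exact htot (q * r) (NeZero.pos _)
    _ ≤ ‖LFunction χ 1‖ := norm_LFunction_changeLevel_one_mul_le hdvd hχ1

end Zero

lemma exists_mul_rpow_le_norm_LFunction_one_of_sq_eq_one {ε : ℝ} (hε : 0 < ε) :
    ∃ c > 0, ∀ (q : ℕ) [NeZero q] (χ : DirichletCharacter ℂ q), χ ^ 2 = 1 → χ ≠ 1 →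
      c * q ^ (-ε) ≤ ‖LFunction χ 1‖ := by
  set a := min (ε / 21) (1 / 4)
  have ha : 0 < a := by positivity
  have ha4 : a ≤ 1 / 4 := min_le_right _ _
  have haε : 21 * a ≤ ε := by linarith [min_le_left (ε / 21) (1 / 4)]
  suffices ∃ c > 0, ∀ (q : ℕ) [NeZero q] (χ : DirichletCharacter ℂ q), χ ^ 2 = 1 → χ ≠ 1 →
      c * q ^ (-(21 * a)) ≤ ‖LFunction χ 1‖ by
    obtain ⟨c, hc, H⟩ := this
    refine ⟨c, hc, fun q _ χ h hχ ↦ le_trans ?_ (H q χ h hχ)⟩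
    gcongr
    exact_mod_cast NeZero.one_le
  by_cases hzero : ∃ (q₁ : ℕ) (_ : NeZero q₁) (χ₁ : DirichletCharacter ℂ q₁) (β : ℝ), χ₁ ^ 2 = 1 ∧
      χ₁ ≠ 1 ∧ β ∈ Set.Ico (1 - a) 1 ∧
      entireL (1 : DirichletCharacter ℂ 1) β * LFunction χ₁ β = 0
  · obtain ⟨q₁, _, χ₁, β, h₁, n₁, hβ, hz⟩ := hzero
    exact exists_mul_rpow_le_norm_LFunction_one_of_eq_zero ha ha4 hβ.1 hβ.2 h₁ n₁ hz
  · push Not at hzero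
    obtain ⟨c, hc, H⟩ := exists_mul_rpow_le_norm_LFunction_one
      (by linarith : 3 / 4 ≤ 1 - a) (by linarith)
    refine ⟨c, hc, fun q _ χ h hχ ↦ le_trans ?_
      (H q χ h hχ fun σ hσ ↦ hzero q inferInstance χ σ h hχ hσ)⟩
    have : (1 : ℝ) ≤ q := mod_cast NeZero.one_le
    gcongr
    · linarith
    · norm_num
    · linarith

lemma exists_mul_rpow_le_norm_entireL_one {ε : ℝ} (hε : 0 < ε) :
    ∃ c > 0, ∀ (q : ℕ) [NeZero q] (χ : DirichletCharacter ℂ q), χ ^ 2 = 1 →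
      c * q ^ (-ε) ≤ ‖entireL χ 1‖ := by
  obtain ⟨c₁, hc₁, H₁⟩ := exists_mul_rpow_le_norm_LFunction_one_of_sq_eq_one hε
  obtain ⟨c₂, hc₂, H₂⟩ := exists_rpow_neg_le_totient_div_self hε
  refine ⟨min c₁ c₂, by positivity, fun q _ χ h ↦ ?_⟩
  by_cases hχ : χ = 1
  · subst hχ
    rw [entireL_one_one, meanValue_one, norm_div, norm_natCast, norm_natCast]
    refine le_trans ?_ (H₂ q (NeZero.pos q))
    gcongr
    exact min_le_right _ _
  · rw [entireL_of_ne_one hχ]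
    refine le_trans ?_ (H₁ q χ h hχ)
    gcongr
    exact min_le_left _ _

end Siegel

section NormalizedL

lemma norm_le_norm_of_abs_re_le {z w : ℂ} (hre : |z.re| ≤ |w.re|) (him : |z.im| ≤ |w.im|) :
    ‖z‖ ≤ ‖w‖ := by
  rw [← sq_le_sq₀ (norm_nonneg _) (norm_nonneg _), Complex.sq_norm, Complex.sq_norm,
    normSq_apply, normSq_apply]
  exact add_le_add (abs_le_iff_mul_self_le.mp hre) (abs_le_iff_mul_self_le.mp him)

lemma rpow_le_two_mul_rpow {x y a : ℝ} (hx : 0 ≤ x) (hxy : x ≤ 2 * y) (ha : 0 ≤ a) (ha1 : a ≤ 1) :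
    x ^ a ≤ 2 * y ^ a :=
  calc x ^ a ≤ (2 * y) ^ a := by gcongr
    _ = 2 ^ a * y ^ a := Real.mul_rpow (by norm_num) (by linarith)
    _ ≤ 2 * y ^ a := by
        have hy : 0 ≤ y := by linarith
        gcongr
        exact Real.rpow_le_self_of_one_le one_le_two ha1

variable {q : ℕ} (χ : DirichletCharacter ℂ q) {s : ℂ}

lemma norm_polarFactor_le_norm_add_two (hs : 0 ≤ s.re) :
    ‖polarFactor χ s‖ ≤ ‖polarFactor χ s + 2‖ := by
  by_cases h : χ = 1
  · simp only [polarFactor, h, if_true]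
    refine norm_le_norm_of_abs_re_le (abs_le_abs (by norm_num) ?_) (by simp)
    norm_num
    linarith
  · simp only [polarFactor, h, if_false]
    norm_num

lemma polarFactor_add_two_ne_zero (hs : 0 < s.re) : polarFactor χ s + 2 ≠ 0 := by
  intro h
  have hp : polarFactor χ s = 0 := by simpa [h] using norm_polarFactor_le_norm_add_two χ hs.le
  norm_num [hp] at h

variable [NeZero q]

/-- The function `polarFactor χ s / (polarFactor χ s + 2) * L(s, χ)`, which is holomorphic for
`0 < Re s` and, unlike `entireL χ`, of the same size as `L(s, χ)` for large `s`. -/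
noncomputable def normalizedL (s : ℂ) : ℂ := entireL χ s / (polarFactor χ s + 2)

lemma differentiableAt_normalizedL (hs : 0 < s.re) : DifferentiableAt ℂ (normalizedL χ) s :=
  (differentiable_entireL χ s).div ((differentiable_polarFactor χ s).add_const 2)
    (polarFactor_add_two_ne_zero χ hs)

lemma analyticAt_normalizedL (hs : 0 < s.re) : AnalyticAt ℂ (normalizedL χ) s :=
  DifferentiableOn.analyticAt (s := {z | 0 < z.re})
    (fun _ hz ↦ (differentiableAt_normalizedL χ hz).differentiableWithinAt)
    ((isOpen_lt continuous_const continuous_re).mem_nhds hs)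

lemma norm_meanValue_mul_le (hs : 0 ≤ s.re) : ‖meanValue χ * s‖ ≤ ‖polarFactor χ s + 2‖ := by
  by_cases h : χ = 1
  · rw [norm_mul]
    refine (mul_le_of_le_one_left (norm_nonneg _) (norm_meanValue_le_one χ)).trans ?_
    simp only [polarFactor, h, if_true]
    refine norm_le_norm_of_abs_re_le (abs_le_abs ?_ ?_) (by simp)
    all_goals norm_num; linarith
  · simp [meanValue_of_ne_one h]

lemma norm_normalizedL_le (hs : 0 < s.re) : ‖normalizedL χ s‖ ≤ 1 + ‖regularPart χ s‖ := by
  rw [normalizedL, norm_div,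
    div_le_iff₀ (norm_pos_iff.mpr (polarFactor_add_two_ne_zero χ hs)), entireL_eq_add χ hs, add_mul,
    one_mul, mul_comm ‖regularPart χ s‖]
  refine norm_add_le_of_le (norm_meanValue_mul_le χ hs.le) ?_
  rw [norm_mul]
  gcongr
  exact norm_polarFactor_le_norm_add_two χ hs.le

lemma norm_LFunction_le_mul_norm_normalizedL {τ : ℝ} (hs : 0 < s.re) (hτ : 0 < τ) (hτ1 : τ ≤ 1)
    (h : χ = 1 → τ ≤ ‖s - 1‖) : ‖LFunction χ s‖ ≤ 3 / τ * ‖normalizedL χ s‖ := by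
  have hne := polarFactor_add_two_ne_zero χ hs
  have hp : τ ≤ ‖polarFactor χ s‖ := by
    by_cases hχ : χ = 1
    · simpa [polarFactor, hχ] using h hχ
    · simpa [polarFactor, hχ] using hτ1
  have hL : entireL χ s = polarFactor χ s * LFunction χ s := by
    by_cases hχ : χ = 1
    · refine entireL_eq_polarFactor_mul χ fun hs1 ↦ ?_
      simpa [hs1] using hτ.trans_le (h hχ)
    · rw [entireL_of_ne_one hχ, polarFactor, if_neg hχ, one_mul]
  rw [normalizedL, hL, norm_div, norm_mul, ← mul_div_assoc,
    le_div_iff₀ (norm_pos_iff.mpr hne)]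
  calc ‖LFunction χ s‖ * ‖polarFactor χ s + 2‖
      ≤ ‖LFunction χ s‖ * (‖polarFactor χ s‖ + 2) := by
        gcongr
        exact norm_add_le_of_le le_rfl (by simp)
    _ ≤ ‖LFunction χ s‖ * (3 / τ * ‖polarFactor χ s‖) := by
        gcongr
        rw [div_mul_eq_mul_div, le_div_iff₀ hτ]
        nlinarith
    _ = 3 / τ * (‖polarFactor χ s‖ * ‖LFunction χ s‖) := by ring

lemma one_le_mul_norm_normalizedL_pow {τ : ℝ} (hs : 1 < s.re) (hs3 : s.re ≤ 3) (hτ : 0 < τ)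
    (hτ1 : τ ≤ 1) (hτs : χ ^ 2 = 1 → τ ≤ ‖s - 1‖) :
    1 ≤ (6 / (s.re - 1) * ‖normalizedL (1 : DirichletCharacter ℂ q) s.re‖) ^ 3 *
      (3 / τ * ‖normalizedL χ s‖) ^ 4 *
      (3 / τ * ‖normalizedL (χ ^ 2) (s + I * s.im)‖) := by
  have hx : 0 < s.re - 1 := by linarith
  have e₀ : (1 : ℂ) + (s.re - 1 : ℝ) = s.re := by simp
  have e₁ : (s.re : ℂ) + I * s.im = s := by rw [mul_comm, re_add_im]
  have e₂ : (s.re : ℂ) + 2 * I * s.im = s + I * s.im := by linear_combination e₁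
  have h₀ : ‖LFunctionTrivChar q s.re‖ ≤ 6 / (s.re - 1) *
      ‖normalizedL (1 : DirichletCharacter ℂ q) s.re‖ := by
    rw [show 6 / (s.re - 1) = 3 / ((s.re - 1) / 2) by field_simp; norm_num]
    refine norm_LFunction_le_mul_norm_normalizedL 1 (by rw [ofReal_re]; linarith) (by linarith)
      (by linarith) fun _ ↦ ?_
    rw [← ofReal_one, ← ofReal_sub, norm_real, Real.norm_of_nonneg hx.le]
    linarith
  have h₁ := norm_LFunction_le_mul_norm_normalizedL χ (by linarith : 0 < s.re) hτ hτ1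
    fun h ↦ hτs (by rw [h, one_pow])
  have h₂ : ‖LFunction (χ ^ 2) (s + I * s.im)‖ ≤
      3 / τ * ‖normalizedL (χ ^ 2) (s + I * s.im)‖ := by
    refine norm_LFunction_le_mul_norm_normalizedL _ (by simp; linarith) hτ hτ1
      fun h ↦ (hτs h).trans (norm_le_norm_of_abs_re_le (by simp) ?_)
    simp only [sub_im, one_im, sub_zero, add_im, I_mul_im, ofReal_re, ← two_mul, abs_mul]
    norm_num
    linarith [abs_nonneg s.im]
  refine (norm_LFunction_product_ge_one χ hx s.im).trans ?_
  rw [e₀, e₁, e₂, norm_mul, norm_mul, norm_pow, norm_pow]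
  gcongr

end NormalizedL

section Growth

variable {a : ℝ} (ha : 0 < a) (ha1 : a ≤ 1)
include ha ha1

lemma exists_norm_normalizedL_le :
    ∃ C : ℝ, 1 ≤ C ∧ ∀ (q : ℕ) [NeZero q] (χ : DirichletCharacter ℂ q) (s : ℂ),
      1 - a / 2 ≤ s.re → ‖normalizedL χ s‖ ≤ C * (q * (1 + ‖s‖)) ^ a := by
  obtain ⟨C, hC, H⟩ := exists_norm_regularPart_le ha ha1
  refine ⟨1 + C, by linarith, fun q _ χ s hs ↦ ?_⟩
  have hX : 1 ≤ (q : ℝ) * (1 + ‖s‖) :=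
    one_le_mul_of_one_le_of_one_le (mod_cast NeZero.one_le) (by linarith [norm_nonneg s])
  linarith [norm_normalizedL_le χ (by linarith : 0 < s.re), H q χ s hs,
    Real.one_le_rpow hX ha.le]

lemma exists_norm_deriv_normalizedL_le :
    ∃ C : ℝ, 1 ≤ C ∧ ∀ (q : ℕ) [NeZero q] (χ : DirichletCharacter ℂ q) (s : ℂ),
      1 - a / 4 ≤ s.re → ‖deriv (normalizedL χ) s‖ ≤ C * (q * (1 + ‖s‖)) ^ a := by
  obtain ⟨C, hC, H⟩ := exists_norm_normalizedL_le ha ha1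
  refine ⟨8 / a * C, ?_, fun q _ χ s hs ↦ ?_⟩
  · exact one_le_mul_of_one_le_of_one_le ((one_le_div ha).mpr (by linarith)) hC
  have hball {w : ℂ} (hw : w ∈ Metric.closedBall s (a / 4)) : 1 - a / 2 ≤ w.re := by
    rw [mem_closedBall_iff_norm] at hw
    have := abs_le.mp ((abs_re_le_norm (w - s)).trans hw)
    rw [sub_re] at this
    linarith
  have key := norm_deriv_le_of_forall_mem_sphere_norm_le (c := s) (f := normalizedL χ)
    (C := C * (2 * (q * (1 + ‖s‖)) ^ a)) (by linarith : 0 < a / 4) ?_ fun w hw ↦ ?_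
  · refine key.trans_eq ?_
    field_simp
    ring
  · refine DifferentiableOn.diffContOnCl fun w hw ↦ ?_
    have := hball (Metric.closure_ball_subset_closedBall hw)
    exact (differentiableAt_normalizedL χ (by linarith)).differentiableWithinAt
  · refine (H q χ w (hball (Metric.sphere_subset_closedBall hw))).trans ?_
    gcongr
    refine rpow_le_two_mul_rpow (by positivity) ?_ ha.le ha1
    rw [mul_left_comm]
    gcongr
    have := norm_le_norm_add_norm_sub' w s
    rw [mem_sphere_iff_norm.mp hw] at this
    linarith [norm_nonneg s]

lemma exists_norm_normalizedL_sub_le :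
    ∃ C : ℝ, 1 ≤ C ∧ ∀ (q : ℕ) [NeZero q] (χ : DirichletCharacter ℂ q) (s w : ℂ),
      1 ≤ s.re → 1 ≤ w.re → ‖w - s‖ ≤ 1 →
      ‖normalizedL χ w - normalizedL χ s‖ ≤ C * (q * (1 + ‖s‖)) ^ a * ‖w - s‖ := by
  obtain ⟨C, hC, H⟩ := exists_norm_deriv_normalizedL_le ha ha1
  refine ⟨C * 2, by linarith, fun q _ χ s w hs hw hws ↦ ?_⟩
  have hre {u : ℂ} (hu : u ∈ segment ℝ s w) : 1 ≤ u.re :=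
    (convex_halfSpace_re_ge 1).segment_subset hs hw hu
  refine (convex_segment s w).norm_image_sub_le_of_norm_deriv_le
    (fun u hu ↦ differentiableAt_normalizedL χ (by linarith [hre hu])) (fun u hu ↦ ?_)
    (left_mem_segment ℝ s w) (right_mem_segment ℝ s w)
  rw [mul_assoc]
  refine (H q χ u (by linarith [hre hu])).trans ?_
  gcongr
  refine rpow_le_two_mul_rpow (by positivity) ?_ ha.le ha1
  rw [mul_left_comm]
  gcongr
  have hus : u ∈ Metric.closedBall s 1 := (convex_closedBall s 1).segment_subset
    (Metric.mem_closedBall_self zero_le_one) (mem_closedBall_iff_norm.mpr hws) hu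
  linarith [norm_le_norm_add_norm_sub' u s, mem_closedBall_iff_norm.mp hus, norm_nonneg s]

lemma exists_mul_pow_le_mul_norm_normalizedL_pow :
    ∃ c > 0, ∀ (q : ℕ) [NeZero q] (χ : DirichletCharacter ℂ q) (s : ℂ) (τ : ℝ),
      1 < s.re → s.re ≤ 3 → 0 < τ → τ ≤ 1 → (χ ^ 2 = 1 → τ ≤ ‖s - 1‖) →
      c * (s.re - 1) ^ 3 * τ ^ 5 ≤ ((q * (1 + ‖s‖)) ^ a * ‖normalizedL χ s‖) ^ 4 := by
  obtain ⟨C, hC, H⟩ := exists_norm_normalizedL_le ha ha1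
  refine ⟨1 / (18 * C) ^ 4, by positivity, fun q _ χ s τ hs hs3 hτ hτ1 hτs ↦ ?_⟩
  set Y := (q * (1 + ‖s‖)) ^ a with hY
  have hx : 0 < s.re - 1 := by linarith
  have h₀ : ‖normalizedL (1 : DirichletCharacter ℂ q) s.re‖ ≤ C * Y := by
    refine (H q 1 s.re (by rw [ofReal_re]; linarith)).trans ?_
    rw [hY]
    gcongr
    exact norm_le_norm_of_abs_re_le (by simp) (by simp)
  have h₂ : ‖normalizedL (χ ^ 2) (s + I * s.im)‖ ≤ C * (2 * Y) := by
    refine (H q (χ ^ 2) _ (by simp; linarith)).trans ?_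
    gcongr
    refine rpow_le_two_mul_rpow (by positivity) ?_ ha.le ha1
    rw [mul_left_comm]
    gcongr
    have : ‖I * s.im‖ ≤ ‖s‖ := by simpa using abs_im_le_norm s
    linarith [norm_add_le s (I * s.im)]
  calc 1 / (18 * C) ^ 4 * (s.re - 1) ^ 3 * τ ^ 5
      ≤ 1 / (18 * C) ^ 4 * (s.re - 1) ^ 3 * τ ^ 5 * ((6 / (s.re - 1) * (C * Y)) ^ 3 *
          (3 / τ * ‖normalizedL χ s‖) ^ 4 * (3 / τ * (C * (2 * Y)))) := by
        refine le_mul_of_one_le_right (by positivity) ?_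
        refine (one_le_mul_norm_normalizedL_pow χ hs hs3 hτ hτ1 hτs).trans ?_
        gcongr
    _ = (Y * ‖normalizedL χ s‖) ^ 4 := by
        field_simp
        ring

end Growth

section LowerBound

lemma one_le_mul_one_add_norm (q : ℕ) [NeZero q] (s : ℂ) : 1 ≤ (q : ℝ) * (1 + ‖s‖) :=
  one_le_mul_of_one_le_of_one_le (mod_cast NeZero.one_le) (by linarith [norm_nonneg s])

lemma exists_mul_rpow_le_norm_normalizedL_one {ε : ℝ} (hε : 0 < ε) :
    ∃ c > 0, ∀ (q : ℕ) [NeZero q] (χ : DirichletCharacter ℂ q), χ ^ 2 = 1 →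
      c * q ^ (-ε) ≤ ‖normalizedL χ 1‖ := by
  obtain ⟨c, hc, H⟩ := exists_mul_rpow_le_norm_entireL_one hε
  refine ⟨c / 4, by positivity, fun q _ χ h ↦ ?_⟩
  have hpos : 0 < ‖polarFactor χ 1 + 2‖ :=
    norm_pos_iff.mpr (polarFactor_add_two_ne_zero χ (by simp))
  have hle : ‖polarFactor χ 1 + 2‖ ≤ 4 := by
    have := norm_polarFactor_le χ 1
    rw [norm_one] at this
    refine (norm_add_le _ _).trans ?_
    rw [norm_ofNat]
    linarith
  rw [normalizedL, norm_div, le_div_iff₀ hpos]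
  calc c / 4 * (q : ℝ) ^ (-ε) * ‖polarFactor χ 1 + 2‖ ≤ c / 4 * (q : ℝ) ^ (-ε) * 4 := by gcongr
    _ = c * (q : ℝ) ^ (-ε) := by ring
    _ ≤ ‖entireL χ 1‖ := H q χ h

variable {a : ℝ} (ha : 0 < a) (ha1 : a ≤ 1)
include ha ha1

lemma exists_div_le_norm_normalizedL_near_one :
    ∃ K > 0, K ≤ 1 ∧ ∃ c > 0, ∀ (q : ℕ) [NeZero q] (χ : DirichletCharacter ℂ q) (s : ℂ),
      1 ≤ s.re → χ ^ 2 = 1 → ‖s - 1‖ ≤ K / ((q * (1 + ‖s‖)) ^ a) ^ 2 →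
      c / (q * (1 + ‖s‖)) ^ a ≤ ‖normalizedL χ s‖ := by
  obtain ⟨C, hC, hlip⟩ := exists_norm_normalizedL_sub_le ha ha1
  obtain ⟨c, hc, hone⟩ := exists_mul_rpow_le_norm_normalizedL_one ha
  refine ⟨min 1 (c / (2 * C)), by positivity, min_le_left _ _, c / 2, by positivity,
    fun q _ χ s hs hχ hs1 ↦ ?_⟩
  have hX := one_le_mul_one_add_norm q s
  have hq0 : (0 : ℝ) < q := mod_cast NeZero.pos q
  have hqX : (q : ℝ) ≤ q * (1 + ‖s‖) :=
    le_mul_of_one_le_right hq0.le (by linarith [norm_nonneg s])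
  have hY1 : 1 ≤ ((q : ℝ) * (1 + ‖s‖)) ^ a := Real.one_le_rpow hX ha.le
  have h2Y : ((q : ℝ) * (1 + ‖(1 : ℂ)‖)) ^ a ≤ (q * (1 + ‖s‖)) ^ a := by
    gcongr
    rw [norm_one]
    exact hs.trans (re_le_norm s)
  have hYq : ((q : ℝ) * (1 + ‖s‖)) ^ (-a) ≤ q ^ (-a) :=
    Real.rpow_le_rpow_of_nonpos hq0 hqX (by linarith)
  rw [Real.rpow_neg (by positivity)] at hYq
  set Y := ((q : ℝ) * (1 + ‖s‖)) ^ a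
  have hle : ‖s - 1‖ ≤ 1 :=
    hs1.trans (div_le_one_of_le₀ ((min_le_left _ _).trans (one_le_pow₀ hY1)) (by positivity))
  have hdiff : ‖normalizedL χ s - normalizedL χ 1‖ ≤ c / 2 / Y :=
    calc ‖normalizedL χ s - normalizedL χ 1‖
        ≤ C * (q * (1 + ‖(1 : ℂ)‖)) ^ a * ‖s - 1‖ := hlip q χ 1 s (by simp) hs hle
      _ ≤ C * Y * (c / (2 * C) / Y ^ 2) := by
          gcongr
          exact hs1.trans (by gcongr; exact min_le_right _ _)
      _ = c / 2 / Y := by field_simp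
  have hsiegel : c / Y ≤ ‖normalizedL χ 1‖ :=
    (mul_le_mul_of_nonneg_left hYq hc.le).trans (hone q χ hχ)
  have := norm_sub_norm_le (normalizedL χ 1) (normalizedL χ s)
  rw [norm_sub_rev] at this
  linarith [show c / 2 / Y = c / Y - c / 2 / Y by ring]

lemma exists_mul_le_norm_normalizedL_add {K C : ℝ} (hK : 0 < K) (hK1 : K ≤ 1) (hC : 0 < C) :
    ∃ κ > 0, κ ≤ 1 ∧ ∀ (q : ℕ) [NeZero q] (χ : DirichletCharacter ℂ q) (s : ℂ) (η : ℝ),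
      1 < s.re → s.re ≤ 2 → (χ ^ 2 = 1 → K / ((q * (1 + ‖s‖)) ^ a) ^ 2 ≤ ‖s - 1‖) →
      η = κ / ((q * (1 + ‖s‖)) ^ a) ^ 18 →
      2 * C * (q * (1 + ‖s‖)) ^ a * η ≤ ‖normalizedL χ (s + η)‖ := by
  obtain ⟨c, hc, h341⟩ := exists_mul_pow_le_mul_norm_normalizedL_pow ha ha1
  set κ := min 1 (c * K ^ 5 / (256 * C ^ 4))
  have hκ : 0 < κ := by positivity
  refine ⟨κ, hκ, min_le_left _ _, fun q _ χ s η hs hs2 hχs hη ↦ ?_⟩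
  set Y := ((q : ℝ) * (1 + ‖s‖)) ^ a
  have hY1 : 1 ≤ Y := Real.one_le_rpow (one_le_mul_one_add_norm q s) ha.le
  have hη0 : 0 < η := by rw [hη]; positivity
  have hη1 : η ≤ 1 :=
    hη ▸ div_le_one_of_le₀ ((min_le_left _ _).trans (one_le_pow₀ hY1)) (by positivity)
  have hre : (s + η).re = s.re + η := by simp
  have hY' : ((q : ℝ) * (1 + ‖s + η‖)) ^ a ≤ 2 * Y := by
    refine rpow_le_two_mul_rpow (by positivity) ?_ ha.le ha1
    rw [mul_left_comm]
    gcongr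
    have := norm_add_le s (η : ℂ)
    rw [norm_real, Real.norm_of_nonneg hη0.le] at this
    linarith [norm_nonneg s]
  have hpow : (4 * C * Y ^ 2 * η) ^ 4 ≤ (2 * Y * ‖normalizedL χ (s + η)‖) ^ 4 :=
    calc (4 * C * Y ^ 2 * η) ^ 4 = 256 * C ^ 4 * κ / Y ^ 10 * η ^ 3 := by
          rw [hη]
          field_simp
          ring
      _ ≤ 256 * C ^ 4 * (c * K ^ 5 / (256 * C ^ 4)) / Y ^ 10 * η ^ 3 := by
          gcongr
          exact min_le_right _ _
      _ = c * η ^ 3 * (K / Y ^ 2) ^ 5 := by field_simp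
      _ ≤ c * ((s + η).re - 1) ^ 3 * (K / Y ^ 2) ^ 5 := by
          gcongr
          linarith
      _ ≤ ((q * (1 + ‖s + η‖)) ^ a * ‖normalizedL χ (s + η)‖) ^ 4 := by
          refine h341 q χ (s + η) _ (by linarith) (by linarith) (by positivity)
            (div_le_one_of_le₀ (hK1.trans (one_le_pow₀ hY1)) (by positivity))
            fun h ↦ (hχs h).trans (norm_le_norm_of_abs_re_le ?_ (by simp))
          rw [sub_re, sub_re, hre, one_re]
          exact abs_le_abs (by linarith) (by linarith)
      _ ≤ (2 * Y * ‖normalizedL χ (s + η)‖) ^ 4 := by gcongr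
  have := le_of_pow_le_pow_left₀ four_ne_zero (by positivity) hpow
  nlinarith

lemma exists_div_pow_le_norm_normalizedL_away_from_one {K : ℝ} (hK : 0 < K) (hK1 : K ≤ 1) :
    ∃ c > 0, ∀ (q : ℕ) [NeZero q] (χ : DirichletCharacter ℂ q) (s : ℂ),
      1 < s.re → s.re ≤ 2 → (χ ^ 2 = 1 → K / ((q * (1 + ‖s‖)) ^ a) ^ 2 ≤ ‖s - 1‖) →
      c / ((q * (1 + ‖s‖)) ^ a) ^ 17 ≤ ‖normalizedL χ s‖ := by
  obtain ⟨C, hC, hlip⟩ := exists_norm_normalizedL_sub_le ha ha1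
  obtain ⟨κ, hκ, hκ1, hshift⟩ :=
    exists_mul_le_norm_normalizedL_add ha ha1 hK hK1 (by linarith : 0 < C)
  refine ⟨C * κ, by positivity, fun q _ χ s hs hs2 hχs ↦ ?_⟩
  have hY1 := Real.one_le_rpow (one_le_mul_one_add_norm q s) ha.le
  have hshift := hshift q χ s _ hs hs2 hχs rfl
  set Y := ((q : ℝ) * (1 + ‖s‖)) ^ a
  set η := κ / Y ^ 18 with hη
  have hη0 : 0 < η := by positivity
  have hη1 : η ≤ 1 := div_le_one_of_le₀ (hκ1.trans (one_le_pow₀ hY1)) (by positivity)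
  have hdist : ‖s + η - s‖ = η := by simp [abs_of_pos hη0]
  have hdiff := hlip q χ s (s + η) hs.le (by simp; linarith) (by linarith)
  rw [hdist] at hdiff
  calc C * κ / Y ^ 17 = C * Y * η := by
        rw [hη]
        field_simp
    _ ≤ ‖normalizedL χ s‖ := by
        linarith [norm_sub_norm_le (normalizedL χ (s + η)) (normalizedL χ s)]

end LowerBound

lemma exists_mul_rpow_le_norm_normalizedL {ε : ℝ} (hε : 0 < ε) :
    ∃ c > 0, ∀ (q : ℕ) [NeZero q] (χ : DirichletCharacter ℂ q) (s : ℂ),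
      1 < s.re → s.re ≤ 2 → c * (q * (1 + ‖s‖)) ^ (-ε) ≤ ‖normalizedL χ s‖ := by
  set a := min (ε / 17) 1
  have ha : 0 < a := by positivity
  have ha1 : a ≤ 1 := min_le_right _ _
  obtain ⟨K, hK, hK1, c₁, hc₁, hnear⟩ := exists_div_le_norm_normalizedL_near_one ha ha1
  obtain ⟨c₂, hc₂, haway⟩ := exists_div_pow_le_norm_normalizedL_away_from_one ha ha1 hK hK1
  refine ⟨min c₁ c₂, by positivity, fun q _ χ s hs hs2 ↦ ?_⟩
  have hX := one_le_mul_one_add_norm q s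
  have hY1 : 1 ≤ ((q : ℝ) * (1 + ‖s‖)) ^ a := Real.one_le_rpow hX ha.le
  have hε_le : min c₁ c₂ * (q * (1 + ‖s‖)) ^ (-ε) ≤
      min c₁ c₂ / ((q * (1 + ‖s‖)) ^ a) ^ 17 := by
    rw [← Real.rpow_mul_natCast (by positivity), div_eq_mul_inv, ← Real.rpow_neg (by positivity)]
    gcongr
    push_cast
    linarith [min_le_left (ε / 17) 1]
  refine hε_le.trans ?_
  by_cases h : χ ^ 2 = 1 ∧ ‖s - 1‖ ≤ K / ((q * (1 + ‖s‖)) ^ a) ^ 2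
  · refine le_trans ?_ (hnear q χ s hs.le h.1 h.2)
    gcongr
    · exact min_le_left _ _
    · exact le_self_pow₀ hY1 (by norm_num)
  · refine le_trans ?_ (haway q χ s hs hs2 fun hχ ↦ (not_le.mp fun hle ↦ h ⟨hχ, hle⟩).le)
    gcongr
    exact min_le_right _ _

section LogDerivBound

lemma norm_iteratedDeriv_logDeriv_le {f : ℂ → ℂ} {s : ℂ} {ρ M : ℝ} (k : ℕ) (hρ : 0 < ρ)
    (hM0 : 0 < M) (hf : AnalyticOnNhd ℂ f (Metric.closedBall s ρ))
    (hM : ∀ u ∈ Metric.closedBall s ρ, ‖deriv f u‖ ≤ M) (hMs : 2 * M * ρ ≤ ‖f s‖) :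
    ‖iteratedDeriv k (logDeriv f) s‖ ≤ k.factorial / ρ ^ (k + 1) := by
  have hlow {u : ℂ} (hu : u ∈ Metric.closedBall s ρ) : M * ρ ≤ ‖f u‖ := by
    have hdiff : ‖f u - f s‖ ≤ M * ‖u - s‖ :=
      (convex_closedBall s ρ).norm_image_sub_le_of_norm_deriv_le
        (fun v hv ↦ (hf v hv).differentiableAt) hM (Metric.mem_closedBall_self hρ.le) hu
    have hle : M * ‖u - s‖ ≤ M * ρ := by
      gcongr
      exact mem_closedBall_iff_norm.mp hu
    have := norm_sub_norm_le (f s) (f u)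
    rw [norm_sub_rev] at this
    linarith
  have hne {u : ℂ} (hu : u ∈ Metric.closedBall s ρ) : f u ≠ 0 :=
    norm_pos_iff.mp ((by positivity : 0 < M * ρ).trans_le (hlow hu))
  have hbound {u : ℂ} (hu : u ∈ Metric.closedBall s ρ) : ‖logDeriv f u‖ ≤ 1 / ρ :=
    calc ‖logDeriv f u‖ = ‖deriv f u‖ / ‖f u‖ := by rw [logDeriv_apply, norm_div]
      _ ≤ M / (M * ρ) := by
          gcongr
          · exact hM u hu
          · exact hlow hu
      _ = 1 / ρ := by field_simp
  have hdiff : DiffContOnCl ℂ (logDeriv f) (Metric.ball s ρ) := by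
    refine DifferentiableOn.diffContOnCl fun u hu ↦ ?_
    rw [closure_ball s hρ.ne'] at hu
    exact ((hf u hu).deriv.div (hf u hu) (hne hu)).differentiableAt.differentiableWithinAt
  refine (norm_iteratedDeriv_le_of_forall_mem_sphere_norm_le k hρ hdiff
    fun u hu ↦ hbound (Metric.sphere_subset_closedBall hu)).trans_eq ?_
  field_simp
  ring

lemma exists_norm_deriv_normalizedL_le_of_mem_closedBall {a : ℝ} (ha : 0 < a) (ha1 : a ≤ 1) :
    ∃ C > 0, ∀ (q : ℕ) [NeZero q] (χ : DirichletCharacter ℂ q) (s : ℂ), 1 < s.re →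
      ∀ u ∈ Metric.closedBall s (a / 4),
        1 - a / 4 ≤ u.re ∧ ‖deriv (normalizedL χ) u‖ ≤ C * (q * (1 + ‖s‖)) ^ a := by
  obtain ⟨C, hC, hderiv⟩ := exists_norm_deriv_normalizedL_le ha ha1
  refine ⟨C * 2, by positivity, fun q _ χ s hs u hu ↦ ?_⟩
  have hus := mem_closedBall_iff_norm.mp hu
  have hre := abs_le.mp ((abs_re_le_norm (u - s)).trans hus)
  rw [sub_re] at hre
  refine ⟨by linarith, (hderiv q χ u (by linarith)).trans ?_⟩
  rw [mul_assoc]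
  gcongr
  refine rpow_le_two_mul_rpow (by positivity) ?_ ha.le ha1
  rw [mul_left_comm]
  gcongr
  linarith [norm_le_norm_add_norm_sub' u s, norm_nonneg s]

lemma exists_norm_iteratedDeriv_logDeriv_normalizedL_le (k : ℕ) {ε : ℝ} (hε : 0 < ε) :
    ∃ C > 0, ∀ (q : ℕ) [NeZero q] (χ : DirichletCharacter ℂ q) (s : ℂ), 1 < s.re → s.re ≤ 2 →
      ‖iteratedDeriv k (logDeriv (normalizedL χ)) s‖ ≤ C * (q * (1 + ‖s‖)) ^ ε := by
  set a := min (ε / (2 * (k + 1))) 1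
  have ha : 0 < a := by positivity
  have ha1 : a ≤ 1 := min_le_right _ _
  have haε : a * (2 * (k + 1) : ℕ) ≤ ε := by
    push_cast
    exact (le_div_iff₀ (by positivity)).mp (min_le_left _ _)
  obtain ⟨C, hC, hball⟩ := exists_norm_deriv_normalizedL_le_of_mem_closedBall ha ha1
  obtain ⟨c, hc, hlow⟩ := exists_mul_rpow_le_norm_normalizedL ha
  set κ := min (c / (2 * C)) (a / 4)
  have hκ : 0 < κ := by positivity
  refine ⟨k.factorial / κ ^ (k + 1), by positivity, fun q _ χ s hs hs2 ↦ ?_⟩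
  have hX := one_le_mul_one_add_norm q s
  have hlow := hlow q χ s hs hs2
  rw [Real.rpow_neg (by positivity)] at hlow
  have hYε : (((q : ℝ) * (1 + ‖s‖)) ^ a) ^ (2 * (k + 1)) ≤ (q * (1 + ‖s‖)) ^ ε := by
    rw [← Real.rpow_mul_natCast (by positivity)]
    gcongr
  have hY1 := Real.one_le_rpow hX ha.le
  set Y := ((q : ℝ) * (1 + ‖s‖)) ^ a
  have hρ : κ / Y ^ 2 ≤ a / 4 :=
    (div_le_self hκ.le (one_le_pow₀ hY1)).trans (min_le_right _ _)
  have hball := fun u hu ↦ hball q χ s hs u (Metric.closedBall_subset_closedBall hρ hu)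
  calc ‖iteratedDeriv k (logDeriv (normalizedL χ)) s‖
      ≤ k.factorial / (κ / Y ^ 2) ^ (k + 1) := by
        refine norm_iteratedDeriv_logDeriv_le k (by positivity) (by positivity : 0 < C * Y)
          (fun u hu ↦ analyticAt_normalizedL χ (by linarith [(hball u hu).1]))
          (fun u hu ↦ (hball u hu).2) (le_trans ?_ hlow)
        calc 2 * (C * Y) * (κ / Y ^ 2) ≤ 2 * (C * Y) * (c / (2 * C) / Y ^ 2) := by
              gcongr
              exact min_le_left _ _
          _ = c * Y⁻¹ := by field_simp
    _ = k.factorial / κ ^ (k + 1) * Y ^ (2 * (k + 1)) := by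
        rw [div_pow, ← pow_mul]
        field_simp
    _ ≤ k.factorial / κ ^ (k + 1) * (q * (1 + ‖s‖)) ^ ε := by gcongr

end LogDerivBound

section Discrepancy

variable {q : ℕ} [NeZero q] (χ : DirichletCharacter ℂ q) {s : ℂ}

lemma ne_one_of_one_lt_re (hs : 1 < s.re) : s ≠ 1 := by
  rintro rfl
  simp at hs

lemma normalizedL_ne_zero (hs : 1 < s.re) : normalizedL χ s ≠ 0 :=
  div_ne_zero (entireL_ne_zero_of_one_le_re hs.le) (polarFactor_add_two_ne_zero χ (by linarith))

lemma analyticAt_logDeriv_normalizedL (hs : 1 < s.re) :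
    AnalyticAt ℂ (logDeriv (normalizedL χ)) s :=
  have h := analyticAt_normalizedL χ (by linarith : 0 < s.re)
  h.deriv.div h (normalizedL_ne_zero χ hs)

open Classical in
lemma logDeriv_LFunction_eq (hs : 1 < s.re) :
    logDeriv (LFunction χ) s =
      logDeriv (normalizedL χ) s - if χ = 1 then 1 / (s - 1) - 1 / (s + 1) else 0 := by
  have hs1 := ne_one_of_one_lt_re hs
  have hev : normalizedL χ =ᶠ[𝓝 s]
      fun z ↦ polarFactor χ z / (polarFactor χ z + 2) * LFunction χ z := by
    filter_upwards [isOpen_ne.mem_nhds hs1] with z hz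
    rw [normalizedL, entireL_eq_polarFactor_mul χ hz]
    ring
  have hL0 : LFunction χ s ≠ 0 := LFunction_ne_zero_of_one_le_re χ (.inr hs1) hs.le
  have hp2 : polarFactor χ s + 2 ≠ 0 := polarFactor_add_two_ne_zero χ (by linarith)
  have hp : polarFactor χ s ≠ 0 := by
    by_cases h : χ = 1 <;> simp [polarFactor, h, sub_ne_zero.mpr hs1]
  have hdp := differentiable_polarFactor χ s
  have hdp2 : DifferentiableAt ℂ (fun z ↦ polarFactor χ z + 2) s := hdp.add_const 2
  rw [(logDeriv_congr_nhds hev).eq_of_nhds,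
    logDeriv_mul (f := fun z ↦ polarFactor χ z / (polarFactor χ z + 2)) s (div_ne_zero hp hp2) hL0
      (hdp.div hdp2 hp2) (differentiableAt_LFunction χ s (.inl hs1)),
    logDeriv_div s hp hp2 hdp hdp2]
  have hadd : s - 1 + 2 = s + 1 := by ring
  by_cases h : χ = 1
  · subst h
    have hpol : polarFactor (1 : DirichletCharacter ℂ q) = fun z ↦ z - 1 := by
      ext
      simp [polarFactor]
    simp only [logDeriv_apply, hpol, hadd, if_true, deriv_add_const, deriv_sub_const, deriv_id'']
    ring
  · have hpol : polarFactor χ = fun _ ↦ 1 := by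
      ext
      simp [polarFactor, h]
    simp [logDeriv_apply, hpol, h]

/-- The deviation `[n ≡ a mod q] Λ(n) - 1 / φ(q)` of the von Mangoldt function on a residue
class from its expected mean value. -/
noncomputable def discrepancy (a : ZMod q) (n : ℕ) : ℝ := residueClass a n - (q.totient : ℝ)⁻¹

/-- `-1 - 1 / (s + 1) - H(s)`, where `H = regularPart 1` is the regular part of the Riemann zeta
function: the part of the Dirichlet series of `discrepancy a`, multiplied by `φ(q)`, that does not
come from the functions `normalizedL χ`. -/
noncomputable def discrepancyCorrection (s : ℂ) : ℂ :=
  -1 - 1 / (s + 1) - regularPart (1 : DirichletCharacter ℂ 1) s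

lemma LSeries_one_eq_add_regularPart (hs : 1 < s.re) :
    LSeries 1 s = s / (s - 1) + regularPart (1 : DirichletCharacter ℂ 1) s := by
  simpa [modOne_eq_one] using LSeries_eq_add_regularPart (1 : DirichletCharacter ℂ 1) hs

omit [NeZero q] in
lemma coe_discrepancy (a : ZMod q) :
    (fun n ↦ (discrepancy a n : ℂ)) =
      (fun n ↦ (residueClass a n : ℂ)) - (q.totient : ℂ)⁻¹ • (1 : ℕ → ℂ) := by
  ext n
  simp [discrepancy]

omit [NeZero q] in
lemma LSeriesSummable_residueClass (a : ZMod q) (hs : 1 < s.re) :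
    LSeriesSummable (fun n ↦ (residueClass a n : ℂ)) s :=
  LSeriesSummable_of_abscissaOfAbsConv_lt_re <|
    (ArithmeticFunction.vonMangoldt.abscissaOfAbsConv_residueClass_le_one a).trans_lt <|
      mod_cast hs

omit [NeZero q] in
lemma LSeriesSummable_discrepancy (a : ZMod q) (hs : 1 < s.re) :
    LSeriesSummable (fun n ↦ (discrepancy a n : ℂ)) s := by
  rw [coe_discrepancy]
  exact (LSeriesSummable_residueClass a hs).sub ((LSeriesSummable_one_iff.mpr hs).smul _)

omit [NeZero q] in
lemma abscissaOfAbsConv_discrepancy_le_one (a : ZMod q) :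
    LSeries.abscissaOfAbsConv (fun n ↦ (discrepancy a n : ℂ)) ≤ 1 :=
  LSeries.abscissaOfAbsConv_le_of_forall_lt_LSeriesSummable' fun y hy ↦
    LSeriesSummable_discrepancy a (by simpa using (mod_cast hy : (1 : ℝ) < y))

lemma LSeries_discrepancy_eq {a : ZMod q} (ha : IsUnit a) (hs : 1 < s.re) :
    LSeries (fun n ↦ (discrepancy a n : ℂ)) s = (q.totient : ℂ)⁻¹ *
      (∑ χ : DirichletCharacter ℂ q, -χ a⁻¹ * logDeriv (normalizedL χ) s +
        discrepancyCorrection s) := by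
  classical
  have hterm (χ : DirichletCharacter ℂ q) : χ a⁻¹ * (deriv (LFunction χ) s / LFunction χ s) =
      χ a⁻¹ * logDeriv (normalizedL χ) s - if χ = 1 then 1 / (s - 1) - 1 / (s + 1) else 0 := by
    rw [← logDeriv_apply, logDeriv_LFunction_eq χ hs, mul_sub]
    split_ifs with h
    · obtain ⟨u, rfl⟩ := ha
      rw [h, ZMod.inv_coe_unit, MulChar.one_apply_coe, one_mul, one_mul]
    · rw [mul_zero]
  have hs1 : s - 1 ≠ 0 := sub_ne_zero.mpr (ne_one_of_one_lt_re hs)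
  rw [coe_discrepancy, LSeries_sub (LSeriesSummable_residueClass a hs)
      ((LSeriesSummable_one_iff.mpr hs).smul _), LSeries_smul, LSeries_one_eq_add_regularPart hs,
    ArithmeticFunction.vonMangoldt.LSeries_residueClass_eq ha hs, discrepancyCorrection]
  simp only [hterm, neg_mul, sum_sub_distrib, sum_neg_distrib, sum_ite_eq', mem_univ, if_true]
  rw [show s / (s - 1) = 1 + 1 / (s - 1) by field_simp; ring]
  ring

lemma one_le_norm_add_one (hs : 0 ≤ s.re) : 1 ≤ ‖s + 1‖ := by
  have h := re_le_norm (s + 1)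
  rw [add_re, one_re] at h
  linarith

lemma differentiableAt_discrepancyCorrection (hs : 0 < s.re) :
    DifferentiableAt ℂ discrepancyCorrection s := by
  have h1 : s + 1 ≠ 0 := norm_pos_iff.mp (one_pos.trans_le (one_le_norm_add_one hs.le))
  have hdiv : DifferentiableAt ℂ (fun z : ℂ ↦ 1 / (z + 1)) s := by fun_prop (disch := exact h1)
  exact ((differentiableAt_const _).sub hdiv).sub (differentiableAt_regularPart _ hs)

lemma exists_norm_iteratedDeriv_discrepancyCorrection_le (k : ℕ) :
    ∃ C > 0, ∀ s : ℂ, 1 < s.re →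
      ‖iteratedDeriv k discrepancyCorrection s‖ ≤ C * (1 + ‖s‖) := by
  obtain ⟨C, hC, hgrowth⟩ := exists_norm_regularPart_le one_pos le_rfl
  refine ⟨k.factorial * (2 + 2 * C) / (1 / 2) ^ k, by positivity, fun s hs ↦ ?_⟩
  have hball {u : ℂ} (hu : u ∈ Metric.closedBall s (1 / 2)) : 1 / 2 ≤ u.re ∧ ‖u‖ ≤ ‖s‖ + 1 / 2 := by
    rw [mem_closedBall_iff_norm] at hu
    have hre := abs_le.mp ((abs_re_le_norm (u - s)).trans hu)
    rw [sub_re] at hre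
    exact ⟨by linarith, by linarith [norm_le_norm_add_norm_sub' u s]⟩
  have hbound {u : ℂ} (hu : u ∈ Metric.closedBall s (1 / 2)) :
      ‖discrepancyCorrection u‖ ≤ (2 + 2 * C) * (1 + ‖s‖) := by
    obtain ⟨hre, hnorm⟩ := hball hu
    have hdiv : ‖1 / (u + 1)‖ ≤ 1 := by
      rw [norm_div, norm_one]
      exact div_le_one_of_le₀ (one_le_norm_add_one (by linarith)) (norm_nonneg _)
    have hreg : ‖regularPart (1 : DirichletCharacter ℂ 1) u‖ ≤ C * (1 + ‖u‖) := by
      simpa using hgrowth 1 1 u (by linarith)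
    calc ‖discrepancyCorrection u‖ ≤ 1 + 1 + C * (1 + ‖u‖) :=
          norm_sub_le_of_le (norm_sub_le_of_le (by simp) hdiv) hreg
      _ ≤ 1 + 1 + C * (1 + (‖s‖ + 1 / 2)) := by gcongr
      _ ≤ (2 + 2 * C) * (1 + ‖s‖) := by nlinarith [norm_nonneg s]
  have hdiff : DiffContOnCl ℂ discrepancyCorrection (Metric.ball s (1 / 2)) := by
    refine DifferentiableOn.diffContOnCl fun u hu ↦ ?_
    rw [closure_ball s (by norm_num)] at hu
    exact (differentiableAt_discrepancyCorrection
      (by linarith [(hball hu).1])).differentiableWithinAt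
  refine (norm_iteratedDeriv_le_of_forall_mem_sphere_norm_le k (by norm_num) hdiff
    fun u hu ↦ hbound (Metric.sphere_subset_closedBall hu)).trans_eq ?_
  ring

lemma iteratedDeriv_LSeries_discrepancy_eq {a : ZMod q} (ha : IsUnit a) (hs : 1 < s.re) (k : ℕ) :
    iteratedDeriv k (LSeries fun n ↦ (discrepancy a n : ℂ)) s = (q.totient : ℂ)⁻¹ *
      (∑ χ : DirichletCharacter ℂ q, -χ a⁻¹ * iteratedDeriv k (logDeriv (normalizedL χ)) s +
        iteratedDeriv k discrepancyCorrection s) := by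
  have hopen : IsOpen {z : ℂ | 1 < z.re} := isOpen_lt continuous_const continuous_re
  have hcorr : ContDiffAt ℂ k discrepancyCorrection s :=
    (DifferentiableOn.analyticAt (fun z (hz : 1 < z.re) ↦ (differentiableAt_discrepancyCorrection
      (by linarith)).differentiableWithinAt) (hopen.mem_nhds hs)).contDiffAt
  have hterm (χ : DirichletCharacter ℂ q) :
      ContDiffAt ℂ k (fun z ↦ -χ a⁻¹ * logDeriv (normalizedL χ) z) s :=
    contDiffAt_const.mul (analyticAt_logDeriv_normalizedL χ hs).contDiffAt
  have hev : (LSeries fun n ↦ (discrepancy a n : ℂ)) =ᶠ[𝓝 s] fun z ↦ (q.totient : ℂ)⁻¹ *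
      (∑ χ : DirichletCharacter ℂ q, -χ a⁻¹ * logDeriv (normalizedL χ) z +
        discrepancyCorrection z) := by
    filter_upwards [hopen.mem_nhds hs] with z hz using LSeries_discrepancy_eq ha hz
  rw [hev.iteratedDeriv_eq, iteratedDeriv_const_mul_field,
    iteratedDeriv_fun_add (.sum fun χ _ ↦ hterm χ) hcorr,
    iteratedDeriv_fun_sum fun χ _ ↦ hterm χ]
  simp only [iteratedDeriv_const_mul_field]

lemma exists_norm_iteratedDeriv_LSeries_discrepancy_le {θ : ℝ} (hθ : 0 < θ) (hθ1 : θ ≤ 1)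
    (k : ℕ) :
    ∃ C > 0, ∀ (q : ℕ) [NeZero q] (a : ZMod q) (s : ℂ), IsUnit a → 1 < s.re → s.re ≤ 2 →
      ‖iteratedDeriv k (LSeries fun n ↦ (discrepancy a n : ℂ)) s‖ ≤ C * q ^ θ * (1 + ‖s‖) := by
  obtain ⟨C, hC, hlog⟩ := exists_norm_iteratedDeriv_logDeriv_normalizedL_le k hθ
  obtain ⟨C', hC', hcorr⟩ := exists_norm_iteratedDeriv_discrepancyCorrection_le k
  refine ⟨C + C', by positivity, fun q _ a s ha hs hs2 ↦ ?_⟩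
  have hφ : (1 : ℝ) ≤ q.totient := mod_cast Nat.totient_pos.mpr (NeZero.pos q)
  have hq : (1 : ℝ) ≤ q := mod_cast NeZero.pos q
  have hqθ : 1 ≤ (q : ℝ) ^ θ := Real.one_le_rpow hq hθ.le
  have hs0 : 1 ≤ 1 + ‖s‖ := le_add_of_nonneg_right (norm_nonneg s)
  set W := (q : ℝ) ^ θ * (1 + ‖s‖)
  have hpow : ((q : ℝ) * (1 + ‖s‖)) ^ θ ≤ W := by
    rw [Real.mul_rpow (by positivity) (by positivity)]
    exact mul_le_mul_of_nonneg_left (Real.rpow_le_self_of_one_le hs0 hθ1) (by positivity)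
  have hterm (χ : DirichletCharacter ℂ q) :
      ‖-χ a⁻¹ * iteratedDeriv k (logDeriv (normalizedL χ)) s‖ ≤ C * W := by
    rw [norm_mul, norm_neg]
    refine (mul_le_of_le_one_left (norm_nonneg _) (χ.norm_le_one _)).trans ?_
    exact (hlog q χ s hs hs2).trans (by gcongr)
  have hcorr' : ‖iteratedDeriv k discrepancyCorrection s‖ ≤ q.totient * (C' * W) :=
    calc ‖iteratedDeriv k discrepancyCorrection s‖ ≤ C' * (1 + ‖s‖) := hcorr s hs
      _ ≤ C' * W := by
          gcongr
          exact le_mul_of_one_le_left (by positivity) hqθ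
      _ ≤ q.totient * (C' * W) := le_mul_of_one_le_left (by positivity) hφ
  have hsum := norm_add_le_of_le (norm_sum_le_of_le univ fun χ _ ↦ hterm χ) hcorr'
  rw [sum_const, card_univ, ← Nat.card_eq_fintype_card,
    DirichletCharacter.card_eq_totient_of_hasEnoughRootsOfUnity ℂ q, nsmul_eq_mul] at hsum
  rw [iteratedDeriv_LSeries_discrepancy_eq ha hs, norm_mul, norm_inv, Complex.norm_natCast,
    inv_mul_le_iff₀ (by positivity)]
  exact hsum.trans_eq (by ring)

end Discrepancy

section Perron

/-- The weight `max (1 - t) 0 ^ 2` of the Riesz means of order two. -/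
noncomputable def rieszWeight (t : ℝ) : ℂ := (max (1 - t) 0 ^ 2 : ℝ)

lemma continuous_rieszWeight : Continuous rieszWeight := by
  unfold rieszWeight
  fun_prop

lemma rieszWeight_of_le {t : ℝ} (ht : t ≤ 1) : rieszWeight t = (1 - t) ^ 2 := by
  simp [rieszWeight, max_eq_left (sub_nonneg.mpr ht)]

lemma rieszWeight_of_ge {t : ℝ} (ht : 1 ≤ t) : rieszWeight t = 0 := by
  simp [rieszWeight, max_eq_right (sub_nonpos.mpr ht)]

variable {s : ℂ}

lemma add_natCast_ne_zero (hs : 0 < s.re) (n : ℕ) : s + n ≠ 0 := by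
  have hre : 0 < (s + n).re := by
    rw [add_re, natCast_re]
    positivity
  exact fun h ↦ hre.ne' (by rw [h, zero_re])

lemma mul_add_one_mul_add_two_ne_zero (hs : 0 < s.re) : s * (s + 1) * (s + 2) ≠ 0 := by
  simpa using mul_ne_zero (mul_ne_zero (add_natCast_ne_zero hs 0) (add_natCast_ne_zero hs 1))
    (add_natCast_ne_zero hs 2)

lemma hasMellin_congr_Ioi {f g : ℝ → ℂ} {m : ℂ} (hf : HasMellin f s m)
    (hfg : Set.EqOn f g (Set.Ioi 0)) : HasMellin g s m := by
  have hsmul : Set.EqOn (fun t : ℝ ↦ (t : ℂ) ^ (s - 1) • f t) (fun t ↦ (t : ℂ) ^ (s - 1) • g t)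
      (Set.Ioi 0) := fun t ht ↦ congrArg _ (hfg ht)
  exact ⟨hf.1.congr_fun hsmul measurableSet_Ioi,
    (setIntegral_congr_fun measurableSet_Ioi hsmul).symm.trans hf.2⟩

lemma hasMellin_rieszWeight (hs : 0 < s.re) :
    HasMellin rieszWeight s (2 / (s * (s + 1) * (s + 2))) := by
  have h0 := hasMellin_one_Ioc hs
  have h1 := hasMellin_cpow_Ioc 1 (s := s) (by simp; linarith)
  have h2 := hasMellin_cpow_Ioc 2 (s := s) (by simp; linarith)
  have h1' := hasMellin_const_smul h1.1 (2 : ℂ)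
  have hsub := hasMellin_sub h0.1 h1'.1
  have hadd := hasMellin_add hsub.1 h2.1
  rw [hsub.2, h1'.2, h0.2, h1.2, h2.2] at hadd
  have hval : 1 / s - (2 : ℂ) • (1 / (s + 1)) + 1 / (s + 2) = 2 / (s * (s + 1) * (s + 2)) := by
    have hne := mul_add_one_mul_add_two_ne_zero hs
    simp only [mul_ne_zero_iff] at hne
    obtain ⟨⟨hs0, hs1⟩, hs2⟩ := hne
    rw [smul_eq_mul]
    field_simp
    ring
  rw [← hval]
  refine hasMellin_congr_Ioi hadd fun t ht ↦ ?_
  rcases le_or_gt t 1 with ht1 | ht1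
  · have hmem : t ∈ Set.Ioc 0 1 := ⟨ht, ht1⟩
    simp only [Set.indicator_of_mem hmem, cpow_one, cpow_ofNat, rieszWeight_of_le ht1, smul_eq_mul]
    ring
  · have hmem : t ∉ Set.Ioc 0 1 := fun h ↦ ht1.not_ge h.2
    simp [Set.indicator_of_notMem hmem, rieszWeight_of_ge ht1.le]

lemma norm_mellin_rieszWeight_mul_le (hs : 1 ≤ s.re) :
    ‖mellin rieszWeight s‖ * (1 + ‖s‖) ≤ 4 * (1 + s.im ^ 2)⁻¹ := by
  have hadd (n : ℕ) : ‖s‖ ≤ ‖s + n‖ := by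
    have := n.cast_nonneg (α := ℝ)
    refine norm_le_norm_of_abs_re_le (abs_le_abs ?_ ?_) (by simp) <;>
      · rw [add_re, natCast_re]
        linarith
  have h1 : 1 ≤ ‖s‖ := hs.trans (re_le_norm s)
  have hsq : 1 + s.im ^ 2 ≤ ‖s‖ ^ 2 := by
    rw [Complex.sq_norm, normSq_apply]
    nlinarith
  rw [(hasMellin_rieszWeight (by linarith)).2, norm_div, norm_mul, norm_mul, norm_ofNat]
  calc 2 / (‖s‖ * ‖s + 1‖ * ‖s + 2‖) * (1 + ‖s‖) ≤ 2 / (‖s‖ * ‖s‖ * ‖s‖) * (‖s‖ + ‖s‖) := by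
        gcongr
        · exact mod_cast hadd 1
        · exact mod_cast hadd 2
    _ = 4 * (‖s‖ ^ 2)⁻¹ := by
        field_simp
        norm_num
    _ ≤ 4 * (1 + s.im ^ 2)⁻¹ := by gcongr

lemma norm_mellin_rieszWeight_le (hs : 1 ≤ s.re) :
    ‖mellin rieszWeight s‖ ≤ 4 * (1 + s.im ^ 2)⁻¹ :=
  (le_mul_of_one_le_right (norm_nonneg _) (le_add_of_nonneg_right (norm_nonneg s))).trans
    (norm_mellin_rieszWeight_mul_le hs)

variable {σ : ℝ}

lemma continuous_mellin_rieszWeight (hσ : 0 < σ) :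
    Continuous fun t : ℝ ↦ mellin rieszWeight (σ + t * I) := by
  have hre (t : ℝ) : 0 < (σ + t * I : ℂ).re := by simpa using hσ
  simp only [(hasMellin_rieszWeight (hre _)).2]
  exact Continuous.div₀ continuous_const (by fun_prop)
    fun t ↦ mul_add_one_mul_add_two_ne_zero (hre t)

lemma norm_mellin_rieszWeight_vertical_le (hσ : 1 ≤ σ) (t : ℝ) :
    ‖mellin rieszWeight (σ + t * I)‖ ≤ 4 * (1 + t ^ 2)⁻¹ := by
  simpa using norm_mellin_rieszWeight_le (s := σ + t * I) (by simpa using hσ)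

lemma verticalIntegrable_mellin_rieszWeight (hσ : 1 ≤ σ) :
    VerticalIntegrable (mellin rieszWeight) σ :=
  (integrable_inv_one_add_sq.const_mul 4).mono'
    (continuous_mellin_rieszWeight (by linarith)).aestronglyMeasurable
    (.of_forall (norm_mellin_rieszWeight_vertical_le hσ))

/-- The contribution of the `n`-th term of the Dirichlet series of `α` to the integrand, on the
line `Re s = σ`, of Perron's formula for the Riesz mean of `α` at `x`. -/
noncomputable def perronIntegrand (α : ℕ → ℂ) (σ x : ℝ) (n : ℕ) (t : ℝ) : ℂ :=
  x ^ (σ + t * I) * LSeries.term α (σ + t * I) n * mellin rieszWeight (σ + t * I)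

variable {α : ℕ → ℂ} {x : ℝ}

lemma norm_ofReal_cpow_vertical (hx : 0 < x) (σ t : ℝ) : ‖(x : ℂ) ^ (σ + t * I)‖ = x ^ σ := by
  simp [norm_cpow_eq_rpow_re_of_pos hx]

lemma norm_perronIntegrand_le (hσ : 1 ≤ σ) (hx : 0 < x) (n : ℕ) (t : ℝ) :
    ‖perronIntegrand α σ x n t‖ ≤ x ^ σ * ‖LSeries.term α σ n‖ * (4 * (1 + t ^ 2)⁻¹) := by
  have hterm : ‖LSeries.term α (σ + t * I) n‖ = ‖LSeries.term α σ n‖ := by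
    simp [LSeries.norm_term_eq]
  rw [perronIntegrand, norm_mul, norm_mul, norm_ofReal_cpow_vertical hx, hterm]
  gcongr
  exact norm_mellin_rieszWeight_vertical_le hσ t

lemma continuous_perronIntegrand (hσ : 0 < σ) (hx : 0 < x) (n : ℕ) :
    Continuous (perronIntegrand α σ x n) := by
  have hcpow {b : ℂ} (hb : b ≠ 0) : Continuous fun t : ℝ ↦ b ^ (σ + t * I) :=
    Continuous.const_cpow (by fun_prop) (.inl hb)
  refine ((hcpow (ofReal_ne_zero.mpr hx.ne')).mul ?_).mul (continuous_mellin_rieszWeight hσ)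
  rcases eq_or_ne n 0 with rfl | hn
  · simpa only [LSeries.term_zero] using continuous_const
  · simp only [LSeries.term_of_ne_zero hn]
    exact continuous_const.div₀ (hcpow (Nat.cast_ne_zero.mpr hn))
      fun t ↦ cpow_ne_zero_iff.mpr (.inl (Nat.cast_ne_zero.mpr hn))

lemma integrable_perronIntegrand (hσ : 1 ≤ σ) (hx : 0 < x) (n : ℕ) :
    Integrable (perronIntegrand α σ x n) :=
  ((integrable_inv_one_add_sq.const_mul 4).const_mul _).mono'
    (continuous_perronIntegrand (by linarith) hx n).aestronglyMeasurable
    (.of_forall (norm_perronIntegrand_le hσ hx n))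

lemma integral_perronIntegrand (hσ : 1 ≤ σ) (hx : 0 < x) {n : ℕ} (hn : n ≠ 0) :
    ∫ t, perronIntegrand α σ x n t = 2 * Real.pi * (α n * rieszWeight (n / x)) := by
  have hnx : 0 < n / x := by positivity
  have hinv := mellinInv_mellin_eq σ rieszWeight hnx
    (hasMellin_rieszWeight (by simpa using by linarith)).1
    (verticalIntegrable_mellin_rieszWeight hσ) continuous_rieszWeight.continuousAt
  have hterm (t : ℝ) : perronIntegrand α σ x n t =
      α n * (((n / x : ℝ) : ℂ) ^ (-(σ + t * I : ℂ)) • mellin rieszWeight (σ + t * I)) := by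
    have hmul : (n : ℂ) ^ (σ + t * I : ℂ) =
        ((n / x : ℝ) : ℂ) ^ (σ + t * I : ℂ) * (x : ℂ) ^ (σ + t * I : ℂ) := by
      rw [← mul_cpow_ofReal_nonneg hnx.le hx.le, ← ofReal_mul, div_mul_cancel₀ _ hx.ne',
        ofReal_natCast]
    have hnx0 : ((n / x : ℝ) : ℂ) ^ (σ + t * I : ℂ) ≠ 0 :=
      cpow_ne_zero_iff.mpr (.inl (ofReal_ne_zero.mpr hnx.ne'))
    have hx0 : (x : ℂ) ^ (σ + t * I : ℂ) ≠ 0 :=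
      cpow_ne_zero_iff.mpr (.inl (ofReal_ne_zero.mpr hx.ne'))
    rw [perronIntegrand, LSeries.term_of_ne_zero hn, cpow_neg, hmul, smul_eq_mul]
    field_simp
  rw [← hinv, mellinInv, real_smul, mul_left_comm, ← mul_assoc (2 * (Real.pi : ℂ))]
  simp only [hterm, integral_const_mul]
  push_cast
  rw [mul_one_div_cancel (mul_ne_zero two_ne_zero (ofReal_ne_zero.mpr Real.pi_ne_zero)), one_mul]

lemma integral_perron_eq (hσ : 1 ≤ σ) (hx : 0 < x) (hα : LSeriesSummable α σ) :
    ∫ t : ℝ, (x : ℂ) ^ (σ + t * I) * LSeries α (σ + t * I) * mellin rieszWeight (σ + t * I) =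
      2 * Real.pi * ∑ n ∈ Icc 1 ⌊x⌋₊, α n * rieszWeight (n / x) := by
  have hint (n : ℕ) : Integrable (perronIntegrand α σ x n) := integrable_perronIntegrand hσ hx n
  have hsum : Summable fun n ↦ ∫ t, ‖perronIntegrand α σ x n t‖ := by
    refine .of_nonneg_of_le (fun n ↦ integral_nonneg fun t ↦ norm_nonneg _)
      (fun n ↦ integral_mono (hint n).norm ((integrable_inv_one_add_sq.const_mul 4).const_mul _)
        (norm_perronIntegrand_le hσ hx n)) ?_
    simp only [integral_const_mul]
    exact (hα.norm.mul_left _).mul_right _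
  have hzero : ∀ n ∉ Icc 1 ⌊x⌋₊, ∫ t, perronIntegrand α σ x n t = 0 := by
    intro n hn
    rcases eq_or_ne n 0 with rfl | hn0
    · simp [perronIntegrand]
    · have hxn : x ≤ n := by
        by_contra! h
        exact hn (mem_Icc.mpr ⟨Nat.one_le_iff_ne_zero.mpr hn0, Nat.le_floor h.le⟩)
      rw [integral_perronIntegrand hσ hx hn0, rieszWeight_of_ge ((one_le_div hx).mpr hxn)]
      simp
  have hkey := (hasSum_integral_of_summable_integral_norm hint hsum).unique
    (hasSum_sum_of_ne_finset_zero hzero)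
  simp only [perronIntegrand, tsum_mul_right, tsum_mul_left] at hkey
  simp only [LSeries, hkey, mul_sum]
  exact sum_congr rfl fun n hn ↦
    integral_perronIntegrand hσ hx (Nat.one_le_iff_ne_zero.mp (mem_Icc.mp hn).1)

lemma norm_sum_mul_rieszWeight_le {M : ℝ} (hσ : 1 ≤ σ) (hx : 0 < x) (hα : LSeriesSummable α σ)
    (hM : ∀ t : ℝ, ‖LSeries α (σ + t * I)‖ ≤ M * (1 + ‖(σ + t * I : ℂ)‖)) :
    ‖∑ n ∈ Icc 1 ⌊x⌋₊, α n * rieszWeight (n / x)‖ ≤ 2 * M * x ^ σ := by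
  have hM0 : 0 ≤ M := nonneg_of_mul_nonneg_left ((norm_nonneg _).trans (hM 0)) (by positivity)
  have hbound (t : ℝ) :
      ‖(x : ℂ) ^ (σ + t * I) * LSeries α (σ + t * I) * mellin rieszWeight (σ + t * I)‖ ≤
        x ^ σ * M * (4 * (1 + t ^ 2)⁻¹) := by
    have hmellin := norm_mellin_rieszWeight_mul_le (s := σ + t * I) (by simpa using hσ)
    rw [show (σ + t * I : ℂ).im = t by simp] at hmellin
    rw [norm_mul, norm_mul, norm_ofReal_cpow_vertical hx]
    calc x ^ σ * ‖LSeries α (σ + t * I)‖ * ‖mellin rieszWeight (σ + t * I)‖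
        ≤ x ^ σ * (M * (1 + ‖(σ + t * I : ℂ)‖)) * ‖mellin rieszWeight (σ + t * I)‖ := by
          gcongr
          exact hM t
      _ = x ^ σ * M * (‖mellin rieszWeight (σ + t * I)‖ * (1 + ‖(σ + t * I : ℂ)‖)) := by ring
      _ ≤ x ^ σ * M * (4 * (1 + t ^ 2)⁻¹) := by gcongr
  have hint := norm_integral_le_of_norm_le
    ((integrable_inv_one_add_sq.const_mul 4).const_mul (x ^ σ * M)) (.of_forall hbound)
  rw [integral_perron_eq hσ hx hα, integral_const_mul, integral_const_mul,
    integral_univ_inv_one_add_sq, norm_mul, norm_mul, norm_ofNat, norm_real,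
    Real.norm_of_nonneg Real.pi_pos.le] at hint
  refine le_of_mul_le_mul_left (hint.trans_eq ?_) Real.two_pi_pos
  ring

end Perron

section RieszSum

variable {β γ : ℕ → ℝ} {x h E : ℝ}

/-- The Riesz sum `∑_{n ≤ x} β(n) (x - n)^j`; for `j = 0` it is the summatory function of `β`. -/
noncomputable def rieszSum (β : ℕ → ℝ) (j : ℕ) (x : ℝ) : ℝ := ∑ n ∈ Icc 1 ⌊x⌋₊, β n * (x - n) ^ j

lemma rieszSum_sub (β γ : ℕ → ℝ) (j : ℕ) (x : ℝ) :
    rieszSum (β - γ) j x = rieszSum β j x - rieszSum γ j x := by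
  simp only [rieszSum, Pi.sub_apply, sub_mul, sum_sub_distrib]

lemma rieszSum_of_lt_one (β : ℕ → ℝ) (j : ℕ) (hx : x < 1) : rieszSum β j x = 0 := by
  simp [rieszSum, Nat.floor_eq_zero.mpr hx]

lemma rieszSum_zero_natCast (β : ℕ → ℝ) (m : ℕ) : rieszSum β 0 m = ∑ n ∈ Icc 1 m, β n := by
  simp [rieszSum]

/-- The truncated power `max (x - n) 0 ^ j`, with the value `0` rather than `1` where `n > x` and
`j = 0`. -/
noncomputable def truncPow (j : ℕ) (x n : ℝ) : ℝ := if n ≤ x then (x - n) ^ j else 0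

lemma truncPow_of_le {n : ℝ} (j : ℕ) (hn : n ≤ x) : truncPow j x n = (x - n) ^ j := if_pos hn

lemma truncPow_of_lt {n : ℝ} (j : ℕ) (hn : x < n) : truncPow j x n = 0 := if_neg hn.not_ge

lemma truncPow_nonneg (j : ℕ) (x n : ℝ) : 0 ≤ truncPow j x n := by
  unfold truncPow
  split_ifs with hn
  · exact pow_nonneg (sub_nonneg.mpr hn) j
  · exact le_rfl

lemma monotone_truncPow (j : ℕ) (n : ℝ) : Monotone fun x ↦ truncPow j x n := by
  intro x y hxy
  rcases le_or_gt n x with hn | hn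
  · have := sub_nonneg.mpr hn
    simp only [truncPow_of_le j hn, truncPow_of_le j (hn.trans hxy)]
    gcongr
  · exact (truncPow_of_lt j hn).trans_le (truncPow_nonneg j y n)

lemma mul_pow_le_pow_add_sub_pow {t : ℝ} (ht : 0 ≤ t) (hh : 0 ≤ h) (j : ℕ) :
    (j + 1) * h * t ^ j ≤ (t + h) ^ (j + 1) - t ^ (j + 1) := by
  induction j with
  | zero => simp
  | succ j ih =>
    have hstep := mul_le_mul_of_nonneg_left ih (add_nonneg ht hh)
    have hsq : 0 ≤ (j + 1) * h ^ 2 * t ^ j := by positivity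
    push_cast
    linear_combination hstep + hsq

lemma pow_add_sub_pow_le_mul_pow {t : ℝ} (ht : 0 ≤ t) (hh : 0 ≤ h) (j : ℕ) :
    (t + h) ^ (j + 1) - t ^ (j + 1) ≤ (j + 1) * h * (t + h) ^ j := by
  have hmax : max |t + h| |t| = t + h := by
    rw [abs_of_nonneg ht, abs_of_nonneg (add_nonneg ht hh), max_eq_left (by linarith)]
  have hbound := (le_abs_self _).trans (abs_pow_sub_pow_le (t + h) t (j + 1))
  rw [hmax, add_sub_cancel_left, abs_of_nonneg hh] at hbound
  refine hbound.trans_eq ?_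
  push_cast
  ring

lemma mul_truncPow_le_sub (j : ℕ) (hh : 0 ≤ h) (x n : ℝ) :
    (j + 1) * h * truncPow j x n ≤ truncPow (j + 1) (x + h) n - truncPow (j + 1) x n := by
  rcases le_or_gt n x with hn | hn
  · rw [truncPow_of_le _ hn, truncPow_of_le _ hn, truncPow_of_le _ (by linarith : n ≤ x + h),
      add_sub_right_comm]
    exact mul_pow_le_pow_add_sub_pow (sub_nonneg.mpr hn) hh j
  · rw [truncPow_of_lt _ hn, truncPow_of_lt _ hn, mul_zero, sub_zero]
    exact truncPow_nonneg _ _ _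

lemma truncPow_sub_le_mul (j : ℕ) (hh : 0 ≤ h) (x n : ℝ) :
    truncPow (j + 1) (x + h) n - truncPow (j + 1) x n ≤ (j + 1) * h * truncPow j (x + h) n := by
  rcases le_or_gt n x with hn | hn
  · rw [truncPow_of_le _ hn, truncPow_of_le _ (by linarith : n ≤ x + h),
      truncPow_of_le _ (by linarith : n ≤ x + h), add_sub_right_comm]
    exact pow_add_sub_pow_le_mul_pow (sub_nonneg.mpr hn) hh j
  rw [truncPow_of_lt _ hn, sub_zero]
  rcases le_or_gt n (x + h) with hn' | hn'
  · rw [truncPow_of_le _ hn', truncPow_of_le _ hn', pow_succ']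
    have hle : x + h - n ≤ (j + 1) * h := by nlinarith [(Nat.cast_nonneg j : (0 : ℝ) ≤ j)]
    exact mul_le_mul_of_nonneg_right hle (pow_nonneg (sub_nonneg.mpr hn') j)
  · rw [truncPow_of_lt _ hn', truncPow_of_lt _ hn', mul_zero]

lemma rieszSum_eq_sum_truncPow {M : ℕ} (β : ℕ → ℝ) (j : ℕ) (hM : ⌊x⌋₊ ≤ M) :
    rieszSum β j x = ∑ n ∈ Icc 1 M, β n * truncPow j x n := by
  have hle {n : ℕ} (hn : 1 ≤ n) : n ≤ ⌊x⌋₊ ↔ (n : ℝ) ≤ x := Nat.le_floor_iff' (by lia)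
  rw [rieszSum, ← sum_subset (Icc_subset_Icc_right hM)]
  · refine sum_congr rfl fun n hn ↦ ?_
    obtain ⟨hn1, hnx⟩ := mem_Icc.mp hn
    rw [truncPow_of_le j ((hle hn1).mp hnx)]
  · intro n hn hnx
    have hn1 := (mem_Icc.mp hn).1
    rw [truncPow_of_lt j (by simpa [hn1, hle hn1] using hnx), mul_zero]

lemma monotone_rieszSum (hβ : 0 ≤ β) (j : ℕ) : Monotone (rieszSum β j) := by
  intro x y hxy
  rw [rieszSum_eq_sum_truncPow β j (Nat.floor_mono hxy), rieszSum_eq_sum_truncPow β j le_rfl]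
  exact sum_le_sum fun n _ ↦ mul_le_mul_of_nonneg_left (monotone_truncPow j n hxy) (hβ n)

lemma mul_rieszSum_le_sub (hβ : 0 ≤ β) (j : ℕ) (hh : 0 ≤ h) (x : ℝ) :
    (j + 1) * h * rieszSum β j x ≤ rieszSum β (j + 1) (x + h) - rieszSum β (j + 1) x := by
  have hM : ⌊x⌋₊ ≤ ⌊x + h⌋₊ := Nat.floor_mono (by linarith)
  rw [rieszSum_eq_sum_truncPow β j hM, rieszSum_eq_sum_truncPow β (j + 1) hM,
    rieszSum_eq_sum_truncPow β (j + 1) le_rfl, mul_sum, ← sum_sub_distrib]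
  refine sum_le_sum fun n _ ↦ ?_
  rw [← mul_sub, mul_left_comm]
  exact mul_le_mul_of_nonneg_left (mul_truncPow_le_sub j hh x n) (hβ n)

lemma rieszSum_sub_le_mul (hβ : 0 ≤ β) (j : ℕ) (hh : 0 ≤ h) (x : ℝ) :
    rieszSum β (j + 1) (x + h) - rieszSum β (j + 1) x ≤ (j + 1) * h * rieszSum β j (x + h) := by
  have hM : ⌊x⌋₊ ≤ ⌊x + h⌋₊ := Nat.floor_mono (by linarith)
  rw [rieszSum_eq_sum_truncPow β (j + 1) hM, rieszSum_eq_sum_truncPow β j le_rfl,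
    rieszSum_eq_sum_truncPow β (j + 1) le_rfl, mul_sum, ← sum_sub_distrib]
  refine sum_le_sum fun n _ ↦ ?_
  rw [← mul_sub, mul_left_comm]
  exact mul_le_mul_of_nonneg_left (truncPow_sub_le_mul j hh x n) (hβ n)

lemma abs_rieszSum_sub_le (hβ : 0 ≤ β) (hγ : 0 ≤ γ) (j : ℕ) (hh : 0 < h) {D : ℝ}
    (hE : ∀ y ≤ x + h, |rieszSum β (j + 1) y - rieszSum γ (j + 1) y| ≤ E)
    (hD : rieszSum γ j (x + h) - rieszSum γ j (x - h) ≤ D) :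
    |rieszSum β j x - rieszSum γ j x| ≤ 2 * E / h + D := by
  have hE0 : 0 ≤ E := (abs_nonneg _).trans (hE x (by linarith))
  have hplus := abs_le.mp (hE (x + h) le_rfl)
  have hmid := abs_le.mp (hE x (by linarith))
  have hminus := abs_le.mp (hE (x - h) (by linarith))
  have hmono1 := monotone_rieszSum hγ j (by linarith : x ≤ x + h)
  have hmono2 := monotone_rieszSum hγ j (by linarith : x - h ≤ x)
  have hβ1 := mul_rieszSum_le_sub hβ j hh.le x
  have hγ1 := rieszSum_sub_le_mul hγ j hh.le x
  have hβ2 := rieszSum_sub_le_mul hβ j hh.le (x - h)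
  have hγ2 := mul_rieszSum_le_sub hγ j hh.le (x - h)
  rw [sub_add_cancel] at hβ2 hγ2
  have hJ : 0 < (j + 1) * h := by positivity
  have hEh : 2 * E ≤ (j + 1) * h * (2 * E / h) := by
    rw [mul_assoc, mul_div_cancel₀ _ hh.ne']
    nlinarith [mul_nonneg (Nat.cast_nonneg j : (0 : ℝ) ≤ j) hE0]
  have hupper : rieszSum β j x ≤ rieszSum γ j (x + h) + 2 * E / h := by
    refine le_of_mul_le_mul_left ?_ hJ
    linarith
  have hlower : rieszSum γ j (x - h) ≤ rieszSum β j x + 2 * E / h := by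
    refine le_of_mul_le_mul_left ?_ hJ
    linarith
  rw [abs_le]
  constructor <;> linarith

lemma rieszSum_zero_sub_le {g y z : ℝ} (hg : ∀ n : ℕ, (n : ℝ) ≤ z → γ n ≤ g) (hg0 : 0 ≤ g)
    (hyz : y ≤ z) (hz : 0 ≤ z) : rieszSum γ 0 z - rieszSum γ 0 y ≤ g * (z - y + 1) := by
  have hfloor : ⌊y⌋₊ ≤ ⌊z⌋₊ := Nat.floor_mono hyz
  have hz' : (⌊z⌋₊ : ℝ) ≤ z := Nat.floor_le hz
  have hy' : y < ⌊y⌋₊ + 1 := Nat.lt_floor_add_one y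
  have hsplit : rieszSum γ 0 z - rieszSum γ 0 y = ∑ n ∈ Ioc ⌊y⌋₊ ⌊z⌋₊, γ n := by
    simp only [rieszSum, pow_zero, mul_one]
    rw [sub_eq_iff_eq_add', ← zero_add 1, Icc_add_one_left_eq_Ioc, Icc_add_one_left_eq_Ioc]
    exact (sum_Ioc_consecutive γ (Nat.zero_le _) hfloor).symm
  calc rieszSum γ 0 z - rieszSum γ 0 y ≤ ∑ _n ∈ Ioc ⌊y⌋₊ ⌊z⌋₊, g := by
        rw [hsplit]
        refine sum_le_sum fun n hn ↦ hg n ?_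
        exact (Nat.cast_le.mpr (mem_Ioc.mp hn).2).trans hz'
    _ = g * (⌊z⌋₊ - ⌊y⌋₊) := by
        rw [sum_const, Nat.card_Ioc, nsmul_eq_mul, Nat.cast_sub hfloor, mul_comm]
    _ ≤ g * (z - y + 1) := by
        gcongr
        linarith

lemma abs_rieszSum_one_sub_le (hβ : 0 ≤ β) (hγ : 0 ≤ γ) (hh : 0 < h) {g Y : ℝ}
    (hg : ∀ n : ℕ, (n : ℝ) ≤ Y → γ n ≤ g) (hg0 : 0 ≤ g) (hY : 1 ≤ Y) (hx : x + h ≤ Y)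
    (hE : ∀ y ≤ Y, |rieszSum β 2 y - rieszSum γ 2 y| ≤ E) :
    |rieszSum β 1 x - rieszSum γ 1 x| ≤ 2 * E / h + 4 * h * g * Y := by
  have hzero : rieszSum γ 0 (x + h) ≤ g * (2 * Y) :=
    calc rieszSum γ 0 (x + h) ≤ rieszSum γ 0 Y - rieszSum γ 0 0 := by
          rw [rieszSum_of_lt_one γ 0 one_pos, sub_zero]
          exact monotone_rieszSum hγ 0 hx
      _ ≤ g * (Y - 0 + 1) := rieszSum_zero_sub_le hg hg0 (by linarith) (by linarith)
      _ ≤ g * (2 * Y) := by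
          gcongr
          linarith
  have hdiff := rieszSum_sub_le_mul hγ 0 (h := 2 * h) (by linarith) (x - h)
  rw [show x - h + 2 * h = x + h by ring] at hdiff
  refine abs_rieszSum_sub_le hβ hγ 1 hh (fun y hy ↦ hE y (hy.trans hx)) (hdiff.trans ?_)
  calc ((0 : ℕ) + 1) * (2 * h) * rieszSum γ 0 (x + h)
      ≤ ((0 : ℕ) + 1) * (2 * h) * (g * (2 * Y)) := by gcongr
    _ = 4 * h * g * Y := by
        push_cast
        ring

lemma abs_rieszSum_zero_sub_le (hβ : 0 ≤ β) (hγ : 0 ≤ γ) (hh : 0 < h) {g : ℝ}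
    (hg : ∀ n : ℕ, (n : ℝ) ≤ x + h → γ n ≤ g) (hg0 : 0 ≤ g) (hx : 0 ≤ x + h)
    (hE : ∀ y ≤ x + h, |rieszSum β 1 y - rieszSum γ 1 y| ≤ E) :
    |rieszSum β 0 x - rieszSum γ 0 x| ≤ 2 * E / h + g * (2 * h + 1) := by
  refine abs_rieszSum_sub_le hβ hγ 0 hh hE ?_
  refine (rieszSum_zero_sub_le hg hg0 (by linarith) hx).trans_eq ?_
  ring

end RieszSum

section SmoothedDiscrepancy

lemma iterate_logMul_apply (f : ℕ → ℂ) (k n : ℕ) :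
    (LSeries.logMul^[k] f) n = (Real.log n : ℂ) ^ k * f n := by
  induction k with
  | zero => simp
  | succ k ih =>
    rw [Function.iterate_succ_apply', LSeries.logMul, ih, natCast_log, pow_succ', mul_assoc]

lemma ofReal_rieszSum_two {x : ℝ} (hx : 0 < x) (β : ℕ → ℝ) :
    (rieszSum β 2 x : ℂ) = x ^ 2 * ∑ n ∈ Icc 1 ⌊x⌋₊, β n * rieszWeight (n / x) := by
  have hx' : (x : ℂ) ≠ 0 := ofReal_ne_zero.mpr hx.ne'
  rw [rieszSum, ofReal_sum, mul_sum]
  refine sum_congr rfl fun n hn ↦ ?_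
  have hnx : (n : ℝ) ≤ x := (Nat.le_floor_iff hx.le).mp (mem_Icc.mp hn).2
  rw [rieszWeight_of_le (div_le_one_of_le₀ hnx hx.le)]
  push_cast
  field_simp

lemma one_le_log {x : ℝ} (hx : 3 ≤ x) : 1 ≤ Real.log x := by
  rw [Real.le_log_iff_exp_le (by linarith)]
  linarith [Real.exp_one_lt_d9]

lemma rpow_one_add_one_div_log_le {Y : ℝ} (hY : 1 < Y) : Y ^ (1 + 1 / Real.log Y) ≤ 3 * Y := by
  have hY0 : 0 < Y := by linarith
  rw [Real.rpow_add hY0, Real.rpow_one, Real.rpow_def_of_pos hY0,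
    mul_one_div_cancel (Real.log_pos hY).ne']
  nlinarith [Real.exp_one_lt_d9]

lemma exists_abs_rieszSum_two_discrepancy_le {θ : ℝ} (hθ : 0 < θ) (hθ1 : θ ≤ 1) (k : ℕ) :
    ∃ C > 0, ∀ (q : ℕ) [NeZero q] (a : ZMod q) (x Y : ℝ), IsUnit a → 3 ≤ Y → x ≤ Y →
      |rieszSum (fun n ↦ discrepancy a n * Real.log n ^ k) 2 x| ≤ C * q ^ θ * Y ^ 3 := by
  obtain ⟨C, hC, hderiv⟩ := exists_norm_iteratedDeriv_LSeries_discrepancy_le hθ hθ1 k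
  refine ⟨6 * C, by positivity, fun q _ a x Y ha hY hxY ↦ ?_⟩
  have hlog := one_le_log hY
  rcases le_or_gt x 0 with hx | hx
  · rw [rieszSum_of_lt_one _ 2 (by linarith), abs_zero]
    positivity
  set σ := 1 + 1 / Real.log Y
  have hσ1 : 1 < σ := lt_add_of_pos_right 1 (by positivity)
  have hσ2 : σ ≤ 2 := by linarith [div_le_one_of_le₀ hlog (by linarith)]
  set f : ℕ → ℂ := fun n ↦ (discrepancy a n : ℂ)
  have habs {s : ℂ} (hs : 1 < s.re) : LSeries.abscissaOfAbsConv f < s.re :=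
    (abscissaOfAbsConv_discrepancy_le_one a).trans_lt (mod_cast hs)
  have hsum : LSeriesSummable (LSeries.logMul^[k] f) σ := by
    refine LSeriesSummable_of_abscissaOfAbsConv_lt_re ?_
    rw [LSeries.absicssaOfAbsConv_logPowMul]
    exact habs (by simpa using hσ1)
  have hline (t : ℝ) : ‖LSeries (LSeries.logMul^[k] f) (σ + t * I)‖ ≤
      C * q ^ θ * (1 + ‖(σ + t * I : ℂ)‖) := by
    have hre : 1 < (σ + t * I : ℂ).re := by simpa using hσ1
    have hbound := hderiv q a (σ + t * I) ha hre (by simpa using hσ2)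
    rwa [LSeries_iteratedDeriv k (habs hre), norm_mul, norm_pow, norm_neg, norm_one, one_pow,
      one_mul] at hbound
  have hperron := norm_sum_mul_rieszWeight_le hσ1.le hx hsum hline
  have hcoeff (n : ℕ) :
      ((discrepancy a n * Real.log n ^ k : ℝ) : ℂ) = (LSeries.logMul^[k] f) n := by
    rw [iterate_logMul_apply, ofReal_mul, ofReal_pow, mul_comm]
  rw [← Real.norm_eq_abs, ← norm_real, ofReal_rieszSum_two hx, norm_mul, norm_pow, norm_real,
    Real.norm_of_nonneg hx.le]
  simp only [hcoeff]
  calc x ^ 2 * ‖∑ n ∈ Icc 1 ⌊x⌋₊, (LSeries.logMul^[k] f) n * rieszWeight (n / x)‖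
      ≤ Y ^ 2 * (2 * (C * q ^ θ) * Y ^ σ) := by
        gcongr
        exact hperron.trans (by gcongr)
    _ ≤ Y ^ 2 * (2 * (C * q ^ θ) * (3 * Y)) := by
        gcongr
        exact rpow_one_add_one_div_log_le (by linarith)
    _ = 6 * C * q ^ θ * Y ^ 3 := by ring

end SmoothedDiscrepancy

section Unsmoothing

lemma log_pow_le_factorial_mul (m : ℕ) {x : ℝ} (hx : 1 ≤ x) : Real.log x ^ m ≤ m.factorial * x := by
  have hpow := Real.pow_div_factorial_le_exp (Real.log x) (Real.log_nonneg hx) m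
  rwa [Real.exp_log (by linarith), div_le_iff₀' (by positivity)] at hpow

variable {q : ℕ}

lemma rieszSum_discrepancy_mul_log_pow (a : ZMod q) (k j : ℕ) (x : ℝ) :
    rieszSum (fun n ↦ discrepancy a n * Real.log n ^ k) j x =
      rieszSum (fun n ↦ residueClass a n * Real.log n ^ k) j x -
        rieszSum (fun n ↦ (q.totient : ℝ)⁻¹ * Real.log n ^ k) j x := by
  rw [← rieszSum_sub]
  congr 1
  ext n
  simp only [discrepancy, Pi.sub_apply, sub_mul]

lemma residueClass_mul_log_pow_nonneg (a : ZMod q) (k : ℕ) :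
    0 ≤ fun n : ℕ ↦ residueClass a n * Real.log n ^ k := fun n ↦
  mul_nonneg (ArithmeticFunction.vonMangoldt.residueClass_nonneg a n)
    (pow_nonneg (Real.log_natCast_nonneg n) k)

lemma inv_totient_mul_log_pow_nonneg (q k : ℕ) :
    0 ≤ fun n : ℕ ↦ (q.totient : ℝ)⁻¹ * Real.log n ^ k := fun n ↦
  mul_nonneg (by positivity) (pow_nonneg (Real.log_natCast_nonneg n) k)

lemma inv_totient_mul_log_pow_le (q k : ℕ) {N : ℝ} (hN : 3 ≤ N) {n : ℕ} (hn : n ≤ 3 * N) :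
    (q.totient : ℝ)⁻¹ * Real.log n ^ k ≤ (2 * Real.log N) ^ k := by
  have hlog0 := Real.log_natCast_nonneg n
  have hlog : Real.log n ≤ 2 * Real.log N := by
    rcases n.eq_zero_or_pos with rfl | hn0
    · simpa using Real.log_nonneg (by linarith : 1 ≤ N)
    calc Real.log n ≤ Real.log (N ^ 2) := Real.log_le_log (mod_cast hn0) (by nlinarith)
      _ = 2 * Real.log N := by
          rw [Real.log_pow]
          norm_num
  calc (q.totient : ℝ)⁻¹ * Real.log n ^ k ≤ Real.log n ^ k :=
        mul_le_of_le_one_left (pow_nonneg hlog0 k) (Nat.cast_inv_le_one _)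
    _ ≤ (2 * Real.log N) ^ k := by gcongr

lemma exists_abs_rieszSum_one_discrepancy_le {θ : ℝ} (hθ : 0 < θ) (hθ1 : θ ≤ 1) (m : ℕ) :
    ∃ C > 0, ∀ (N q : ℕ) [NeZero q] (a : ZMod q) (x : ℝ),
      3 ≤ N → (q : ℝ) ^ θ ≤ Real.log N → IsUnit a → x ≤ 2 * N →
        |rieszSum (fun n ↦ discrepancy a n * Real.log n ^ (4 * m + 1)) 1 x| ≤
          C * N ^ 2 * Real.log N ^ (2 * m + 1) := by
  obtain ⟨C, hC, hsmooth⟩ := exists_abs_rieszSum_two_discrepancy_le hθ hθ1 (4 * m + 1)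
  refine ⟨54 * C + 12 * 2 ^ (4 * m + 1), by positivity, fun N q _ a x hN hq ha hx ↦ ?_⟩
  have hN3 : (3 : ℝ) ≤ N := mod_cast hN
  have hr := one_le_log hN3
  set r := Real.log N
  set h := N / r ^ (2 * m) with h_def
  have hhN : h ≤ N := div_le_self (by positivity) (one_le_pow₀ hr)
  have hE : ∀ y ≤ 3 * (N : ℝ),
      |rieszSum (fun n ↦ residueClass a n * Real.log n ^ (4 * m + 1)) 2 y -
        rieszSum (fun n ↦ (q.totient : ℝ)⁻¹ * Real.log n ^ (4 * m + 1)) 2 y| ≤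
          C * r * (3 * N) ^ 3 := by
    intro y hy
    rw [← rieszSum_discrepancy_mul_log_pow]
    exact (hsmooth q a y (3 * N) ha (by linarith) hy).trans (by gcongr)
  have hunsmooth := abs_rieszSum_one_sub_le (x := x) (h := h)
    (residueClass_mul_log_pow_nonneg a _) (inv_totient_mul_log_pow_nonneg q _) (by positivity)
    (fun n hn ↦ inv_totient_mul_log_pow_le q _ hN3 hn) (by positivity) (by linarith)
    (by linarith) hE
  rw [rieszSum_discrepancy_mul_log_pow]
  refine hunsmooth.trans_eq ?_
  rw [h_def, mul_pow 2 r]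
  field_simp
  ring

lemma exists_abs_sum_discrepancy_mul_log_pow_le {θ : ℝ} (hθ : 0 < θ) (hθ1 : θ ≤ 1) (m : ℕ) :
    ∃ C > 0, ∀ (N q : ℕ) [NeZero q] (a : ZMod q) (i : ℕ),
      3 ≤ N → (q : ℝ) ^ θ ≤ Real.log N → IsUnit a → i ≤ N →
        |∑ n ∈ Icc 1 i, discrepancy a n * Real.log n ^ (4 * m + 1)| ≤
          C * N * Real.log N ^ (3 * m + 1) := by
  obtain ⟨C, hC, hone⟩ := exists_abs_rieszSum_one_discrepancy_le hθ hθ1 m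
  refine ⟨2 * C + 2 ^ (4 * m + 1) * (2 + m.factorial), by positivity,
    fun N q _ a i hN hq ha hi ↦ ?_⟩
  have hN3 : (3 : ℝ) ≤ N := mod_cast hN
  have hiN : (i : ℝ) ≤ N := mod_cast hi
  have hr := one_le_log hN3
  have hfact := log_pow_le_factorial_mul m (by linarith : (1 : ℝ) ≤ N)
  set r := Real.log N
  set h := N / r ^ m with h_def
  have hhN : h ≤ N := div_le_self (by positivity) (one_le_pow₀ hr)
  have hh1 : 1 ≤ m.factorial * h := by rwa [h_def, ← mul_div_assoc, one_le_div (by positivity)]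
  have hE : ∀ y ≤ i + h,
      |rieszSum (fun n ↦ residueClass a n * Real.log n ^ (4 * m + 1)) 1 y -
        rieszSum (fun n ↦ (q.totient : ℝ)⁻¹ * Real.log n ^ (4 * m + 1)) 1 y| ≤
          C * N ^ 2 * r ^ (2 * m + 1) := by
    intro y hy
    rw [← rieszSum_discrepancy_mul_log_pow]
    exact hone N q a y hN hq ha (by linarith)
  have hunsmooth := abs_rieszSum_zero_sub_le (x := i) (h := h)
    (residueClass_mul_log_pow_nonneg a _) (inv_totient_mul_log_pow_nonneg q _) (by positivity)
    (fun n hn ↦ inv_totient_mul_log_pow_le q _ hN3 (by linarith)) (by positivity)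
    (by positivity) hE
  rw [← rieszSum_zero_natCast, rieszSum_discrepancy_mul_log_pow]
  calc _ ≤ 2 * (C * N ^ 2 * r ^ (2 * m + 1)) / h + (2 * r) ^ (4 * m + 1) * (2 * h + 1) := hunsmooth
    _ ≤ 2 * (C * N ^ 2 * r ^ (2 * m + 1)) / h +
          (2 * r) ^ (4 * m + 1) * (2 * h + m.factorial * h) := by gcongr
    _ = (2 * C + 2 ^ (4 * m + 1) * (2 + m.factorial)) * N * r ^ (3 * m + 1) := by
        rw [h_def, mul_pow 2 r]
        field_simp
        ring

end Unsmoothing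

section PartialSummation

lemma abs_sum_Ico_mul_le_of_antitoneOn {f g : ℕ → ℝ} {D : ℝ} {m n : ℕ}
    (hf : AntitoneOn f (Set.Ici m)) (hf0 : ∀ i ≥ m, 0 ≤ f i)
    (hD : ∀ i ≤ n, |∑ j ∈ range i, g j| ≤ D) : |∑ i ∈ Ico m n, f i * g i| ≤ 2 * D * f m := by
  have hD0 : 0 ≤ D := (abs_nonneg _).trans (hD 0 (Nat.zero_le n))
  rcases le_or_gt n m with hnm | hmn
  · rw [Ico_eq_empty_of_le hnm, sum_empty, abs_zero]
    exact mul_nonneg (by positivity) (hf0 m le_rfl)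
  have hmul {i : ℕ} (hi : i ≤ n) {w : ℝ} (hw : 0 ≤ w) : |w * ∑ j ∈ range i, g j| ≤ w * D := by
    rw [abs_mul, abs_of_nonneg hw]
    exact mul_le_mul_of_nonneg_left (hD i hi) hw
  have hsum : |∑ i ∈ Ico m (n - 1), (f (i + 1) - f i) * ∑ j ∈ range (i + 1), g j| ≤
      (f m - f (n - 1)) * D := by
    calc _ ≤ ∑ i ∈ Ico m (n - 1), (f i - f (i + 1)) * D := by
          refine (abs_sum_le_sum_abs _ _).trans (sum_le_sum fun i hi ↦ ?_)
          obtain ⟨hmi, hin⟩ := mem_Ico.mp hi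
          rw [← neg_sub (f i), neg_mul, abs_neg]
          exact hmul (by lia) (sub_nonneg.mpr (hf hmi (Nat.le_succ_of_le hmi) (Nat.le_succ i)))
      _ = (f m - f (n - 1)) * D := by
          rw [← sum_mul, ← neg_sub (f (n - 1)), ← sum_Ico_sub f (by lia), ← sum_neg_distrib]
          simp only [neg_sub]
  have hparts := sum_Ico_by_parts f g hmn
  simp only [smul_eq_mul] at hparts
  rw [hparts]
  have htop := hmul le_rfl (hf0 (n - 1) (by lia))
  have hbot := hmul hmn.le (hf0 m le_rfl)
  rw [abs_le] at htop hbot hsum ⊢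
  constructor <;> linarith

end PartialSummation

section PrimeCounting

variable {q : ℕ} {N : ℕ}

lemma exists_abs_sum_Ico_discrepancy_div_log_le {θ : ℝ} (hθ : 0 < θ) (hθ1 : θ ≤ 1) (m : ℕ) :
    ∃ C > 0, ∀ (N q : ℕ) [NeZero q] (a : ZMod q),
      3 ≤ N → (q : ℝ) ^ θ ≤ Real.log N → IsUnit a →
        |∑ n ∈ Ico (N.sqrt + 1) (N + 1), discrepancy a n / Real.log n| ≤
          C * (N / Real.log N ^ (m + 1)) := by
  obtain ⟨C, hC, hsum⟩ := exists_abs_sum_discrepancy_mul_log_pow_le hθ hθ1 m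
  refine ⟨2 * C * 2 ^ (4 * m + 2), by positivity, fun N q _ a hN hq ha ↦ ?_⟩
  have hr := one_le_log (mod_cast hN : (3 : ℝ) ≤ N)
  have hsqrt : 1 ≤ N.sqrt := Nat.le_sqrt.mpr (by lia)
  have hlog {n : ℕ} (hn : N.sqrt + 1 ≤ n) : 0 < Real.log n :=
    Real.log_pos (mod_cast (by lia : 1 < n))
  have hhalf : Real.log N / 2 ≤ Real.log (N.sqrt + 1 : ℕ) := by
    rw [← Real.log_sqrt (by positivity)]
    exact Real.log_le_log (by positivity) (mod_cast Real.real_sqrt_le_nat_sqrt_succ)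
  have hanti : AntitoneOn (fun n : ℕ ↦ (Real.log n ^ (4 * m + 2))⁻¹) (Set.Ici (N.sqrt + 1)) := by
    intro i hi j _ hij
    have := hlog hi
    have : (0 : ℝ) < i := mod_cast (Nat.succ_pos _).trans_le hi
    dsimp only
    gcongr
  have hpartial (i : ℕ) (hi : i ≤ N + 1) :
      |∑ n ∈ range i, discrepancy a n * Real.log n ^ (4 * m + 1)| ≤
        C * N * Real.log N ^ (3 * m + 1) := by
    rcases i with _ | i
    · rw [sum_range_zero, abs_zero]
      positivity
    · rw [range_eq_Ico, sum_eq_sum_Ico_succ_bot i.succ_pos, Nat.cast_zero, Real.log_zero,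
        zero_pow (Nat.succ_ne_zero _), mul_zero, zero_add, zero_add, Nat.succ_eq_add_one,
        Ico_add_one_right_eq_Icc]
      exact hsum N q a i hN hq ha (by lia)
  calc |∑ n ∈ Ico (N.sqrt + 1) (N + 1), discrepancy a n / Real.log n|
      = |∑ n ∈ Ico (N.sqrt + 1) (N + 1),
          (Real.log n ^ (4 * m + 2))⁻¹ * (discrepancy a n * Real.log n ^ (4 * m + 1))| := by
        congr 1
        refine sum_congr rfl fun n hn ↦ ?_
        have := (hlog (mem_Ico.mp hn).1).ne'
        field_simp
        ring
    _ ≤ 2 * (C * N * Real.log N ^ (3 * m + 1)) * (Real.log (N.sqrt + 1 : ℕ) ^ (4 * m + 2))⁻¹ :=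
        abs_sum_Ico_mul_le_of_antitoneOn hanti
          (fun n hn ↦ inv_nonneg.mpr (pow_nonneg (hlog hn).le _)) hpartial
    _ ≤ 2 * (C * N * Real.log N ^ (3 * m + 1)) * ((Real.log N / 2) ^ (4 * m + 2))⁻¹ := by gcongr
    _ = 2 * C * 2 ^ (4 * m + 2) * (N / Real.log N ^ (m + 1)) := by
        rw [div_pow]
        field_simp
        ring

lemma residueClass_div_log_le (a : ZMod q) {n : ℕ} (hn : 2 ≤ n) :
    residueClass a n / Real.log n ≤ 2 * vonMangoldt n := by
  have hlog2 : Real.log 2 ≤ Real.log n := Real.log_le_log two_pos (mod_cast hn)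
  have hlog : 1 / 2 < Real.log n := by linarith [Real.log_two_gt_d9]
  have hΛ : 0 ≤ vonMangoldt n := ArithmeticFunction.vonMangoldt_nonneg
  rw [div_le_iff₀ (by linarith)]
  nlinarith [ArithmeticFunction.vonMangoldt.residueClass_le a n]

lemma abs_discrepancy_div_log_le (a : ZMod q) {n : ℕ} (hn : 2 ≤ n) :
    |discrepancy a n / Real.log n| ≤ 2 := by
  have hlog2 : Real.log 2 ≤ Real.log n := Real.log_le_log two_pos (mod_cast hn)
  have hlog : 1 / 2 < Real.log n := by linarith [Real.log_two_gt_d9]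
  have hΛ := (ArithmeticFunction.vonMangoldt.residueClass_le a n).trans
    ArithmeticFunction.vonMangoldt_le_log
  have hΛ0 := ArithmeticFunction.vonMangoldt.residueClass_nonneg a n
  have hφ : (q.totient : ℝ)⁻¹ ≤ 1 := Nat.cast_inv_le_one _
  have hφ0 : 0 ≤ (q.totient : ℝ)⁻¹ := by positivity
  rw [abs_div, abs_of_pos (by linarith : 0 < Real.log n), div_le_iff₀ (by linarith), discrepancy,
    abs_le]
  constructor <;> linarith

lemma abs_sum_Ico_two_sqrt_discrepancy_div_log_le (a : ZMod q) (N : ℕ) :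
    |∑ n ∈ Ico 2 (N.sqrt + 1), discrepancy a n / Real.log n| ≤ 2 * √N := by
  calc |∑ n ∈ Ico 2 (N.sqrt + 1), discrepancy a n / Real.log n|
      ≤ ∑ _n ∈ Ico 2 (N.sqrt + 1), (2 : ℝ) :=
        (abs_sum_le_sum_abs _ _).trans <|
          sum_le_sum fun n hn ↦ abs_discrepancy_div_log_le a (mem_Ico.mp hn).1
    _ = 2 * (N.sqrt - 1 : ℕ) := by
        rw [sum_const, Nat.card_Ico, nsmul_eq_mul, mul_comm]
        rfl
    _ ≤ 2 * √N := by
        gcongr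
        exact (mod_cast Nat.sub_le _ _ : ((N.sqrt - 1 : ℕ) : ℝ) ≤ N.sqrt).trans
          Real.nat_sqrt_le_real_sqrt

lemma abs_sum_one_div_log_sub_integral_le (hN : 2 ≤ N) :
    |∑ n ∈ Ico 2 (N + 1), 1 / Real.log n - ∫ t in (2 : ℝ)..N, 1 / Real.log t| ≤ 2 := by
  have hanti : AntitoneOn (fun t : ℝ ↦ 1 / Real.log t) (Set.Icc ((2 : ℕ) : ℝ) N) := by
    intro x hx y _ hxy
    have hx2 : (2 : ℝ) ≤ x := mod_cast hx.1
    exact one_div_le_one_div_of_le (Real.log_pos (by linarith))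
      (Real.log_le_log (by linarith) hxy)
  have hlower := hanti.integral_le_sum_Ico hN
  have hupper := hanti.sum_le_integral_Ico hN
  have htop := sum_Ico_succ_top hN fun n : ℕ ↦ 1 / Real.log n
  have hbot := sum_eq_sum_Ico_succ_bot (by lia : 2 < N + 1) fun n : ℕ ↦ 1 / Real.log n
  rw [← sum_Ico_add' (fun n : ℕ ↦ 1 / Real.log n)] at hbot
  have hlog2 : 1 / Real.log 2 ≤ 2 := by
    have := Real.log_two_gt_d9
    rw [div_le_iff₀ (by linarith)]
    linarith
  have hlogN : 0 ≤ 1 / Real.log N := one_div_nonneg.mpr (Real.log_natCast_nonneg N)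
  simp only [Nat.cast_ofNat] at hlower hupper hbot
  rw [abs_le]
  constructor <;> linarith

lemma sum_filter_prime_residueClass_div_log (N q l : ℕ) :
    ∑ n ∈ Ico 2 (N + 1) with n.Prime, residueClass (l : ZMod q) n / Real.log n =
      primesPiMod N q l := by
  have hterm {n : ℕ} (hn : n.Prime) :
      residueClass (l : ZMod q) n / Real.log n = if n % q = l % q then 1 else 0 := by
    have hlog : Real.log n ≠ 0 := (Real.log_pos (mod_cast hn.one_lt)).ne'
    simp only [residueClass, Set.indicator_apply, Set.mem_ofPred_eq, ZMod.natCast_eq_natCast_iff']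
    split_ifs
    · rw [ArithmeticFunction.vonMangoldt_apply_prime hn, div_self hlog]
    · exact zero_div _
  have hfilter : {n ∈ Ico 2 (N + 1) | n.Prime ∧ n % q = l % q} =
      {n ∈ range (N + 1) | n.Prime ∧ n % q = l % q} := by
    ext n
    simp only [mem_filter, mem_Ico, mem_range]
    exact ⟨fun h ↦ ⟨h.1.2, h.2⟩, fun h ↦ ⟨⟨h.2.1.two_le, h.1⟩, h.2⟩⟩
  rw [sum_congr rfl fun n hn ↦ hterm (mem_filter.mp hn).2, sum_boole, filter_filter, hfilter,
    primesPiMod]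

lemma abs_sum_residueClass_div_log_sub_primesPiMod_le (hN : 1 ≤ N) (q l : ℕ) :
    |∑ n ∈ Ico 2 (N + 1), residueClass (l : ZMod q) n / Real.log n - primesPiMod N q l| ≤
      4 * √N * Real.log N := by
  have hΛ (n : ℕ) : 0 ≤ vonMangoldt n := ArithmeticFunction.vonMangoldt_nonneg
  rw [← sum_filter_prime_residueClass_div_log,
    ← sum_filter_add_sum_filter_not (Ico 2 (N + 1)) Nat.Prime, add_sub_cancel_left,
    abs_of_nonneg (sum_nonneg fun n _ ↦ div_nonneg
      (ArithmeticFunction.vonMangoldt.residueClass_nonneg _ n) (Real.log_natCast_nonneg n))]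
  calc ∑ n ∈ Ico 2 (N + 1) with ¬ n.Prime, residueClass (l : ZMod q) n / Real.log n
      ≤ ∑ n ∈ Ico 2 (N + 1) with ¬ n.Prime, 2 * vonMangoldt n :=
        sum_le_sum fun n hn ↦ residueClass_div_log_le _ (mem_Ico.mp (mem_filter.mp hn).1).1
    _ ≤ ∑ n ∈ Ioc 0 ⌊(N : ℝ)⌋₊ with ¬ n.Prime, 2 * vonMangoldt n := by
        refine sum_le_sum_of_subset_of_nonneg (filter_subset_filter _ fun n hn ↦ ?_)
          fun n _ _ ↦ mul_nonneg zero_le_two (hΛ n)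
        rw [Nat.floor_natCast, mem_Ioc]
        have := mem_Ico.mp hn
        lia
    _ = 2 * (Chebyshev.psi N - Chebyshev.theta N) := by
        rw [Chebyshev.psi_sub_theta_eq_sum_not_prime, mul_sum]
    _ ≤ 2 * (2 * √N * Real.log N) := by
        gcongr
        exact Chebyshev.psi_sub_theta_le (mod_cast hN)
    _ = 4 * √N * Real.log N := by ring

lemma abs_primesPiMod_sub_integral_le (hN : 3 ≤ N) (q l : ℕ) :
    |primesPiMod N q l - 1 / (q.totient : ℝ) * ∫ t in (2 : ℝ)..N, 1 / Real.log t| ≤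
      |∑ n ∈ Ico (N.sqrt + 1) (N + 1), discrepancy (l : ZMod q) n / Real.log n| +
        8 * (√N * Real.log N) := by
  have hr := one_le_log (mod_cast hN : (3 : ℝ) ≤ N)
  have hsqrt : 1 ≤ √(N : ℝ) := Real.one_le_sqrt.mpr (mod_cast (by lia : 1 ≤ N))
  have hφ : (q.totient : ℝ)⁻¹ ≤ 1 := Nat.cast_inv_le_one _
  have hsmall := abs_sum_Ico_two_sqrt_discrepancy_div_log_le (l : ZMod q) N
  have hprimes := abs_sum_residueClass_div_log_sub_primesPiMod_le (by lia : 1 ≤ N) q l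
  have hsplit := sum_Ico_consecutive (fun n ↦ discrepancy (l : ZMod q) n / Real.log n)
    (Nat.add_le_add_right (Nat.le_sqrt.mpr (by lia)) 1 : 2 ≤ N.sqrt + 1)
    (Nat.add_le_add_right N.sqrt_le_self 1)
  have hdiscrepancy : ∑ n ∈ Ico 2 (N + 1), discrepancy (l : ZMod q) n / Real.log n =
      ∑ n ∈ Ico 2 (N + 1), residueClass (l : ZMod q) n / Real.log n -
        (q.totient : ℝ)⁻¹ * ∑ n ∈ Ico 2 (N + 1), 1 / Real.log n := by
    rw [mul_sum, ← sum_sub_distrib]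
    exact sum_congr rfl fun n _ ↦ by rw [discrepancy, sub_div, mul_one_div]
  have hintegral : |(q.totient : ℝ)⁻¹ * (∑ n ∈ Ico 2 (N + 1), 1 / Real.log n -
      ∫ t in (2 : ℝ)..N, 1 / Real.log t)| ≤ 2 := by
    rw [abs_mul, abs_of_nonneg (by positivity)]
    exact (mul_le_of_le_one_left (abs_nonneg _) hφ).trans
      (abs_sum_one_div_log_sub_integral_le (by lia))
  calc |primesPiMod N q l - 1 / (q.totient : ℝ) * ∫ t in (2 : ℝ)..N, 1 / Real.log t|
      = |∑ n ∈ Ico (N.sqrt + 1) (N + 1), discrepancy (l : ZMod q) n / Real.log n +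
          ∑ n ∈ Ico 2 (N.sqrt + 1), discrepancy (l : ZMod q) n / Real.log n +
          (q.totient : ℝ)⁻¹ * (∑ n ∈ Ico 2 (N + 1), 1 / Real.log n -
            ∫ t in (2 : ℝ)..N, 1 / Real.log t) -
          (∑ n ∈ Ico 2 (N + 1), residueClass (l : ZMod q) n / Real.log n -
            primesPiMod N q l)| := by
        congr 1
        linear_combination -hdiscrepancy - hsplit
    _ ≤ _ := (abs_sub _ _).trans <|
        add_le_add ((abs_add_le _ _).trans (add_le_add (abs_add_le _ _) hintegral))
          hprimes
    _ ≤ _ := by nlinarith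

lemma sqrt_mul_log_le (m : ℕ) (hN : 3 ≤ N) :
    √N * Real.log N ≤ 2 ^ (m + 2) * (m + 2).factorial * (N / Real.log N ^ (m + 1)) := by
  have hr := one_le_log (mod_cast hN : (3 : ℝ) ≤ N)
  have hsqrt : 1 ≤ √(N : ℝ) := Real.one_le_sqrt.mpr (mod_cast (by lia : 1 ≤ N))
  have hpow : Real.log N ^ (m + 2) ≤ 2 ^ (m + 2) * ((m + 2).factorial * √N) := by
    calc Real.log N ^ (m + 2) = 2 ^ (m + 2) * Real.log √N ^ (m + 2) := by
          rw [Real.log_sqrt (by positivity), ← mul_pow]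
          ring
      _ ≤ _ := by
          gcongr
          exact log_pow_le_factorial_mul _ hsqrt
  rw [← mul_div_assoc, le_div_iff₀ (by positivity)]
  calc √N * Real.log N * Real.log N ^ (m + 1) = √N * Real.log N ^ (m + 2) := by ring
    _ ≤ √N * (2 ^ (m + 2) * ((m + 2).factorial * √N)) := by gcongr
    _ = 2 ^ (m + 2) * (m + 2).factorial * (√N * √N) := by ring
    _ = 2 ^ (m + 2) * (m + 2).factorial * N := by rw [Real.mul_self_sqrt (by positivity)]

theorem exists_abs_primesPiMod_sub_integral_le {θ : ℝ} (hθ : 0 < θ) (hθ1 : θ ≤ 1) (m : ℕ) :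
    ∃ C > 0, ∀ N q l : ℕ, 3 ≤ N → 0 < q → (q : ℝ) ^ θ ≤ Real.log N → Nat.gcd q l = 1 →
      |primesPiMod N q l - 1 / (q.totient : ℝ) * ∫ t in (2 : ℝ)..N, 1 / Real.log t| ≤
        C * (N / Real.log N ^ (m + 1)) := by
  obtain ⟨C, hC, hlarge⟩ := exists_abs_sum_Ico_discrepancy_div_log_le hθ hθ1 m
  refine ⟨C + 8 * (2 ^ (m + 2) * (m + 2).factorial), by positivity, fun N q l hN hq hqN hql ↦ ?_⟩
  have : NeZero q := ⟨hq.ne'⟩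
  have hunit : IsUnit (l : ZMod q) := (ZMod.isUnit_iff_coprime l q).mpr (Nat.Coprime.symm hql)
  linarith [abs_primesPiMod_sub_integral_le hN q l, hlarge N q l hN hqN hunit,
    sqrt_mul_log_le m hN]

end PrimeCounting

end SiegelWalfisz

theorem page_theorem_general (c : ℝ) :
    ∃ A > 0, ∀ N q l : ℕ, 3 ≤ N → 0 < q → (q : ℝ) ≤ Real.log N ^ c → Nat.gcd q l = 1 →
      |(primesPiMod N q l : ℝ) -
          (1 / (Nat.totient q : ℝ)) * ∫ t in (2 : ℝ)..(N : ℝ), 1 / Real.log t| ≤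
        A * N * Real.log N ^ (-c) / (Nat.totient q * Real.log N) := by
  have hc : 1 ≤ max c 1 := le_max_right c 1
  have hc0 : 0 < max c 1 := by positivity
  obtain ⟨A, hA, hbound⟩ :=
    SiegelWalfisz.exists_abs_primesPiMod_sub_integral_le (inv_pos.mpr hc0)
      (inv_le_one_of_one_le₀ hc) ⌈max c 1 + c⌉₊
  refine ⟨A, hA, fun N q l hN hq hqN hql ↦ ?_⟩
  have hr := SiegelWalfisz.one_le_log (mod_cast hN : (3 : ℝ) ≤ N)
  have hr0 : 0 < Real.log N := by positivity
  have hqmax : (q : ℝ) ≤ Real.log N ^ max c 1 :=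
    hqN.trans (Real.rpow_le_rpow_of_exponent_le hr (le_max_left c 1))
  have : (0 : ℝ) < q.totient := mod_cast Nat.totient_pos.mpr hq
  have hφq : (q.totient : ℝ) ≤ q := mod_cast Nat.totient_le q
  have hsaving : (q.totient : ℝ) * Real.log N ^ c ≤ Real.log N ^ ⌈max c 1 + c⌉₊ := by
    calc (q.totient : ℝ) * Real.log N ^ c ≤ Real.log N ^ max c 1 * Real.log N ^ c := by
          gcongr
          exact hφq.trans hqmax
      _ = Real.log N ^ (max c 1 + c) := (Real.rpow_add hr0 _ _).symm
      _ ≤ _ := by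
          rw [← Real.rpow_natCast]
          exact Real.rpow_le_rpow_of_exponent_le hr (Nat.le_ceil _)
  calc |(primesPiMod N q l : ℝ) -
          (1 / (Nat.totient q : ℝ)) * ∫ t in (2 : ℝ)..(N : ℝ), 1 / Real.log t|
      ≤ A * (N / Real.log N ^ (⌈max c 1 + c⌉₊ + 1)) :=
        hbound N q l hN hq ((Real.rpow_inv_le_iff_of_pos q.cast_nonneg hr0.le hc0).mpr hqmax) hql
    _ ≤ A * (N / (q.totient * Real.log N ^ c * Real.log N)) := by
        rw [pow_succ]
        gcongr
    _ = A * N * Real.log N ^ (-c) / (q.totient * Real.log N) := by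
        rw [Real.rpow_neg hr0.le]
        field_simp

/-- (Page's theorem.) For every `ε₀` with `0 < ε₀ < 1` and every real `c ≥ 2` there is a
constant `A > 0` such that for every integer `N ≥ 3`, writing `r = ln N`, there is a
positive integer `q₀` with `q₀ ≥ r^(2−ε₀)` such that for all `q, l` with `0 < q < r^c`,
`0 < l < q`, `gcd(q, l) = 1` and `q₀ ∤ q` one has
`|π(N; q, l) − (1/φ(q)) ∫₂^N dt/ln t| ≤ A·N·r^(−c)/(φ(q)·r)`. -/
theorem page_theorem :
    ∀ ε₀ : ℝ, 0 < ε₀ → ε₀ < 1 → ∀ c : ℝ, 2 ≤ c →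
      ∃ A : ℝ, 0 < A ∧ ∀ N : ℕ, 3 ≤ N →
        ∃ q₀ : ℕ, 0 < q₀ ∧ Real.log N ^ ((2 : ℝ) - ε₀) ≤ (q₀ : ℝ) ∧
          ∀ q l : ℕ, 0 < q → (q : ℝ) < Real.log N ^ c → 0 < l → l < q →
            Nat.gcd q l = 1 → ¬ q₀ ∣ q →
            |(primesPiMod N q l : ℝ) -
                (1 / (Nat.totient q : ℝ)) * ∫ t in (2 : ℝ)..(N : ℝ), 1 / Real.log t| ≤
              A * N * Real.log N ^ (-c) / (Nat.totient q * Real.log N) := by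
  intro ε₀ _ _ c _
  obtain ⟨A, hA, hbound⟩ := page_theorem_general c
  refine ⟨A, hA, fun N hN ↦ ⟨⌈Real.log N ^ ((2 : ℝ) - ε₀)⌉₊ + 1, Nat.succ_pos _, ?_,
    fun q l hq hqN _ _ hql _ ↦ hbound N q l hN hq hqN.le hql⟩⟩
  exact (Nat.le_ceil _).trans (mod_cast Nat.le_succ _)
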